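/- arXiv:1707.01458 — 2 statements merged into one kernel-verified Lean document; each statement's English description precedes it below -/
import Mathlib

section
/- Assume the curve setup with counterclockwise orientation and let a well-* distributed mesh with parameters κ ≥ 2 and M > 0 be given; define the N×N matrix A_N by A_N(i,j) = ((l(s̃_i^N) − l(s_j^N))·n(s̃_i^N))/‖l(s̃_i^N) − l(s_j^N)‖² when l(s̃_i^N) ≠ l(s_j^N), and A_N(i,j) = −(1/2)·l''(s̃_i^N)·n(s̃_i^N) when l(s̃_i^N) = l(s_j^N). Then: (i) there exist δ > 0 and integers N*, k* ≥ 1 such that for all N ≥ N*, all k ≥ k* and all z ∈ ℝ^N, ‖((L/N)·A_N − π·I)^k z‖_{ℓ²} ≤ (2π − δ)^k·‖z‖_{ℓ²}; and (ii) there exist C > 0 and N₀ such that for every N ≥ N₀ and every v ∈ ℝ^N there is a unique z ∈ ℝ^N with (L/N)·A_N z + π·z = v, and this solution satisfies ‖z‖_{ℓ²} ≤ C·‖v‖_{ℓ²}. -/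
open Real MeasureTheory

/-- Dot product of two points of the plane `ℝ² ≃ ℂ`. -/
noncomputable def dotR (z w : ℂ) : ℝ := z.re * w.re + z.im * w.im

/-- The unit normal vector `n(s) = (l₂'(s), -l₁'(s))` of a curve `l`. -/
noncomputable def normalv (l : ℝ → ℂ) (s : ℝ) : ℂ := -Complex.I * deriv l s

open Classical in
/-- The discretized double layer matrix, with the continuous extension
`-(1/2)·l''·n` of the kernel on the diagonal. -/
noncomputable def AmatE (l : ℝ → ℂ) {N : ℕ} (a b : Fin N → ℝ) : Matrix (Fin N) (Fin N) ℝ :=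
  Matrix.of fun i j =>
    if l (a i) = l (b j) then -(1/2) * dotR (deriv (deriv l) (a i)) (normalv l (a i))
    else dotR (l (a i) - l (b j)) (normalv l (a i)) / ‖l (a i) - l (b j)‖ ^ 2

/-- The normalized `ℓ²` norm of a vector. -/
noncomputable def l2norm {N : ℕ} (z : Fin N → ℝ) : ℝ := Real.sqrt ((N : ℝ)⁻¹ * ∑ i, z i ^ 2)

/-! Up to a vanishing error in operator norm, `(L / N) A_N` is the restriction to step functions of
the integral operator `K f s = ∫ Im (l' s / (l s - l t)) f t dt` on `L²`, the transpose of the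
double layer operator `D f s = ∫ Im (l' t / (l t - l s)) f t dt`. Gelfand's formula and the bounded
inverse of `K + π` carry over to such approximations, so everything reduces to showing that every
point of the spectrum of `K` other than `π` has modulus less than `π`; as `K` is compact, this
concerns eigenfunctions only.

An eigenfunction `f` with eigenvalue `z ≠ π` has mean zero, so `f = g'` with `g` periodic, and
integrating `K f = z f` gives `D g = -z g + const`. The transform
`T g s = ∫ (g t - g s) / (l t - l s) l' t dt` satisfies `T² = -2πi T` by Cauchy's theorem; its real
part is the single layer operator `S` (applied to `g'`) and its imaginary part is `D - π`, so that
`S² = D² - π²` and `S D = -D S`. The logarithmic energy `E g k = ∫ (S g) k'` is symmetric, whence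
`E (S g) (conj (S g)) = (π² - |z|²) E g (conj g)`. Both energies are nonnegative, and vanish only at
constants, because `-log` of the squared chord is, up to terms that do not contribute, a power
series with positive coefficients in a positive definite kernel. Hence `|z| ≥ π` forces `S g`, and
then `g`, to be constant, so that `f = 0`. -/

namespace FluidCharge

open Filter Set
open scoped ContDiff Topology ComplexConjugate

/-! ### Spectral estimates for approximate restrictions of an operator -/

section Iterate

variable {V : Type*} {M : V → V} {φ : V → ℝ} {B : ℝ}

theorem iterate_le_pow_mul (hB : 0 ≤ B) (hM : ∀ v, φ (M v) ≤ B * φ v) (k : ℕ) (v : V) :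
    φ (M^[k] v) ≤ B ^ k * φ v := by
  induction k with
  | zero => simp
  | succ k ih =>
    rw [Function.iterate_succ_apply', pow_succ', mul_assoc]
    exact (hM _).trans (mul_le_mul_of_nonneg_left ih hB)

theorem iterate_le_pow_mul_of_iterate_le {ρ : ℝ} {m : ℕ} (hB : 0 ≤ B) (hρ : 0 < ρ) (hm : 1 ≤ m)
    (hφ : ∀ v, 0 ≤ φ v) (hM : ∀ v, φ (M v) ≤ B * φ v) (hMm : ∀ v, φ (M^[m] v) ≤ ρ ^ m * φ v)
    (k : ℕ) (v : V) :
    φ (M^[k] v) ≤ (∑ r ∈ Finset.range m, (B / ρ) ^ r) * ρ ^ k * φ v := by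
  have hr : k % m ∈ Finset.range m := Finset.mem_range.2 (Nat.mod_lt _ hm)
  have hk : ρ ^ k = ρ ^ (k % m) * (ρ ^ m) ^ (k / m) := by
    rw [← pow_mul, ← pow_add, Nat.mod_add_div]
  calc φ (M^[k] v) = φ (M^[k % m] ((M^[m])^[k / m] v)) := by
        rw [← Function.iterate_mul, ← Function.iterate_add_apply, Nat.mod_add_div]
    _ ≤ B ^ (k % m) * ((ρ ^ m) ^ (k / m) * φ v) :=
        (iterate_le_pow_mul hB hM _ _).trans <| mul_le_mul_of_nonneg_left
          (iterate_le_pow_mul (by positivity) hMm _ _) (by positivity)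
    _ = (B / ρ) ^ (k % m) * ρ ^ k * φ v := by rw [hk, div_pow]; field_simp
    _ ≤ (∑ r ∈ Finset.range m, (B / ρ) ^ r) * ρ ^ k * φ v := by
        gcongr
        · exact hφ v
        · exact Finset.single_le_sum (f := fun r => (B / ρ) ^ r) (fun _ _ => by positivity) hr

end Iterate

section Spectral

variable {F : Type*} [NormedAddCommGroup F] [NormedSpace ℂ F]

theorem exists_norm_pow_lt_pow {A : Type*} [NormedRing A] [NormedAlgebra ℂ A] [CompleteSpace A]
    {a : A} {R : ℝ} (hR : 0 < R) (ha : ∀ μ ∈ spectrum ℂ a, ‖μ‖ < R) :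
    ∃ ρ ∈ Set.Ioo 0 R, ∃ m : ℕ, 1 ≤ m ∧ ‖a ^ m‖ < ρ ^ m := by
  have hrad : spectralRadius ℂ a < ENNReal.ofReal R := by
    rcases subsingleton_or_nontrivial A with hA | hA
    · simpa using hR
    · exact spectrum.spectralRadius_lt_of_forall_lt a fun μ hμ => by
        simpa [← NNReal.coe_lt_coe, Real.coe_toNNReal R hR.le] using ha μ hμ
  obtain ⟨r, hr, hrR⟩ := ENNReal.lt_iff_exists_nnreal_btwn.1 hrad
  have hrR' : (r : ℝ) < R := by
    rw [← ENNReal.ofReal_coe_nnreal] at hrR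
    exact (ENNReal.ofReal_lt_ofReal_iff hR).1 hrR
  obtain ⟨m, hm, hm1⟩ :=
    (((spectrum.pow_norm_pow_one_div_tendsto_nhds_spectralRadius a).eventually_lt_const hr).and
      (eventually_ge_atTop 1)).exists
  rw [← ENNReal.ofReal_coe_nnreal, ENNReal.ofReal_lt_ofReal_iff_of_nonneg (by positivity)] at hm
  refine ⟨r, ⟨(by positivity : (0 : ℝ) ≤ _).trans_lt hm, hrR'⟩, m, hm1, ?_⟩
  have hpow := pow_lt_pow_left₀ hm (by positivity) (Nat.one_le_iff_ne_zero.1 hm1)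
  rwa [one_div, Real.rpow_inv_natCast_pow (norm_nonneg _) (Nat.one_le_iff_ne_zero.1 hm1)] at hpow

variable {V : Type*} {T : F →L[ℂ] F} {M : V → V} {E : V → F} {ε : ℝ}

theorem norm_apply_le_of_norm_sub_le (hM : ∀ v, ‖E (M v) - T (E v)‖ ≤ ε * ‖E v‖) (v : V) :
    ‖E (M v)‖ ≤ (‖T‖ + ε) * ‖E v‖ := by
  calc ‖E (M v)‖ ≤ ‖T (E v)‖ + ‖E (M v) - T (E v)‖ := norm_le_insert' _ _
    _ ≤ ‖T‖ * ‖E v‖ + ε * ‖E v‖ := add_le_add (T.le_opNorm _) (hM v)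
    _ = (‖T‖ + ε) * ‖E v‖ := by ring

theorem norm_iterate_sub_pow_apply_le (hε : 0 ≤ ε) (hε1 : ε ≤ 1)
    (hM : ∀ v, ‖E (M v) - T (E v)‖ ≤ ε * ‖E v‖) (k : ℕ) (v : V) :
    ‖E (M^[k] v) - (T ^ k) (E v)‖ ≤ k * (‖T‖ + 1) ^ k * ε * ‖E v‖ := by
  have hstep : ∀ w, ‖E (M w)‖ ≤ (‖T‖ + 1) * ‖E w‖ := fun w =>
    (norm_apply_le_of_norm_sub_le hM w).trans (by gcongr)
  induction k with
  | zero => simp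
  | succ k ih =>
    set w := M^[k] v
    have hw : ‖E w‖ ≤ (‖T‖ + 1) ^ k * ‖E v‖ :=
      iterate_le_pow_mul (φ := (‖E ·‖)) (by positivity) hstep k v
    rw [Function.iterate_succ_apply', pow_succ' T]
    calc ‖E (M w) - T ((T ^ k) (E v))‖
        = ‖(E (M w) - T (E w)) + T (E w - (T ^ k) (E v))‖ := by rw [map_sub]; abel_nf
      _ ≤ ε * ((‖T‖ + 1) ^ k * ‖E v‖) + ‖T‖ * (k * (‖T‖ + 1) ^ k * ε * ‖E v‖) :=
          (norm_add_le _ _).trans <| add_le_add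
            ((hM w).trans (by gcongr)) ((T.le_opNorm _).trans (by gcongr))
      _ ≤ (‖T‖ + 1) * (ε * ((‖T‖ + 1) ^ k * ‖E v‖) + k * (‖T‖ + 1) ^ k * ε * ‖E v‖) := by
          have : 0 ≤ ‖T‖ * (ε * ((‖T‖ + 1) ^ k * ‖E v‖)) + k * (‖T‖ + 1) ^ k * ε * ‖E v‖ := by
            positivity
          linarith
      _ = (k + 1 : ℕ) * (‖T‖ + 1) ^ (k + 1) * ε * ‖E v‖ := by push_cast; ring

-- The bound `‖T ^ m‖ < ρ ^ m` concerns a fixed power, so it survives a small perturbation.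
theorem exists_norm_iterate_le_pow [CompleteSpace F] {R : ℝ} (hR : 0 < R)
    (hT : ∀ μ ∈ spectrum ℂ T, ‖μ‖ < R) :
    ∃ σ < R, ∃ ε > 0, ∃ k₀ : ℕ, ∀ (V : Type*) (M : V → V) (E : V → F),
      (∀ v, ‖E (M v) - T (E v)‖ ≤ ε * ‖E v‖) →
      ∀ k ≥ k₀, ∀ v, ‖E (M^[k] v)‖ ≤ σ ^ k * ‖E v‖ := by
  obtain ⟨ρ, ⟨hρ, hρR⟩, m, hm, hTm⟩ := exists_norm_pow_lt_pow hR hT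
  obtain ⟨σ, hρσ, hσR⟩ := exists_between hρR
  obtain ⟨k₀, hk₀⟩ := eventually_atTop.1 <|
    (tendsto_pow_atTop_atTop_of_one_lt ((one_lt_div hρ).2 hρσ)).eventually_ge_atTop
      (∑ r ∈ Finset.range m, ((‖T‖ + 1) / ρ) ^ r)
  have hD : (0 : ℝ) < m * (‖T‖ + 1) ^ m := by
    have : (0 : ℝ) < m := by exact_mod_cast hm
    positivity
  refine ⟨σ, hσR, min 1 ((ρ ^ m - ‖T ^ m‖) / (m * (‖T‖ + 1) ^ m)),
    lt_min one_pos (div_pos (sub_pos.2 hTm) hD), k₀, fun V M E hM k hk v => ?_⟩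
  set ε := min 1 ((ρ ^ m - ‖T ^ m‖) / (m * (‖T‖ + 1) ^ m))
  have hε : 0 ≤ ε := (lt_min one_pos (div_pos (sub_pos.2 hTm) hD)).le
  have hstep : ∀ w, ‖E (M w)‖ ≤ (‖T‖ + 1) * ‖E w‖ := fun w =>
    (norm_apply_le_of_norm_sub_le hM w).trans (by gcongr; exact min_le_left _ _)
  have hmstep : ∀ w, ‖E (M^[m] w)‖ ≤ ρ ^ m * ‖E w‖ := fun w => by
    have hεm : m * (‖T‖ + 1) ^ m * ε ≤ ρ ^ m - ‖T ^ m‖ := by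
      rw [mul_comm, ← le_div_iff₀ hD]; exact min_le_right _ _
    calc ‖E (M^[m] w)‖ ≤ ‖(T ^ m) (E w)‖ + ‖E (M^[m] w) - (T ^ m) (E w)‖ := norm_le_insert' _ _
      _ ≤ ‖T ^ m‖ * ‖E w‖ + m * (‖T‖ + 1) ^ m * ε * ‖E w‖ := add_le_add
          ((T ^ m).le_opNorm _) (norm_iterate_sub_pow_apply_le hε (min_le_left _ _) hM m w)
      _ ≤ ‖T ^ m‖ * ‖E w‖ + (ρ ^ m - ‖T ^ m‖) * ‖E w‖ := by gcongr
      _ = ρ ^ m * ‖E w‖ := by ring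
  refine (iterate_le_pow_mul_of_iterate_le (φ := (‖E ·‖)) (by positivity) hρ hm
    (fun _ => norm_nonneg _) hstep hmstep k v).trans ?_
  gcongr
  rw [← le_div_iff₀ (by positivity), ← div_pow]
  exact hk₀ k hk

theorem exists_mul_norm_le_norm_sub_smul [CompleteSpace F] {T : F →L[ℂ] F} {μ : ℂ}
    (hμ : μ ∉ spectrum ℂ T) : ∃ c > 0, ∀ f, c * ‖f‖ ≤ ‖T f - μ • f‖ := by
  obtain ⟨S, hS⟩ := spectrum.notMem_iff.1 hμ
  refine ⟨(‖(↑S⁻¹ : F →L[ℂ] F)‖ + 1)⁻¹, by positivity, fun f => ?_⟩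
  have hSf : (↑S⁻¹ : F →L[ℂ] F) (μ • f - T f) = f := by
    have := DFunLike.congr_fun S.inv_mul f
    rwa [hS] at this
  rw [inv_mul_le_iff₀ (by positivity), norm_sub_rev]
  calc ‖f‖ = ‖(↑S⁻¹ : F →L[ℂ] F) (μ • f - T f)‖ := by rw [hSf]
    _ ≤ ‖(↑S⁻¹ : F →L[ℂ] F)‖ * ‖μ • f - T f‖ := ContinuousLinearMap.le_opNorm _ _
    _ ≤ (‖(↑S⁻¹ : F →L[ℂ] F)‖ + 1) * ‖μ • f - T f‖ := by gcongr; linarith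

end Spectral

/-! ### Integral operators with continuous kernel -/

section CompactOperator

variable {𝕜 H G X : Type*} [RCLike 𝕜] [NormedAddCommGroup H] [NormedSpace 𝕜 H]
  [NormedAddCommGroup G] [NormedSpace 𝕜 G] [TopologicalSpace X] [CompactSpace X]

/-- The operator `f ↦ (x ↦ φ x f)` into continuous functions attached to a continuous family `φ`
of operators; integral operators are of this kind, `φ x` being integration against `k(x, ·)`. -/
noncomputable def evalFamily (φ : C(X, H →L[𝕜] G)) : H →L[𝕜] BoundedContinuousFunction X G :=
  LinearMap.mkContinuous
    { toFun := fun f => BoundedContinuousFunction.mkOfCompact ⟨fun x => φ x f, by fun_prop⟩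
      map_add' := fun f g => by ext x; simp
      map_smul' := fun c f => by ext x; simp }
    ‖φ‖ fun f => (BoundedContinuousFunction.norm_le (by positivity)).2 fun x =>
      (φ x).le_of_opNorm_le (φ.norm_coe_le_norm x) f

@[simp]
theorem evalFamily_apply (φ : C(X, H →L[𝕜] G)) (f : H) (x : X) : evalFamily φ f x = φ x f := rfl

theorem isCompactOperator_evalFamily [ProperSpace G] (φ : C(X, H →L[𝕜] G)) :
    IsCompactOperator (evalFamily φ) := by
  refine (isCompactOperator_iff_isCompact_closure_image_closedBall
    (evalFamily φ : H →ₗ[𝕜] BoundedContinuousFunction X G) one_pos).2 <|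
    BoundedContinuousFunction.arzela_ascoli (Metric.closedBall 0 ‖φ‖)
      (isCompact_closedBall _ _) _ ?_ fun x₀ => ?_
  · rintro _ x ⟨f, hf, rfl⟩
    rw [mem_closedBall_zero_iff] at hf ⊢
    simpa using (φ x).le_of_opNorm_le_of_le (φ.norm_coe_le_norm x) hf
  · refine Metric.equicontinuousAt_of_continuity_modulus (fun x => ‖φ x - φ x₀‖) ?_ _ ?_
    · simpa using ((φ.continuous.sub (continuous_const (y := φ x₀))).norm.tendsto x₀)
    · refine Eventually.of_forall fun x => ?_
      rintro ⟨_, f, hf, rfl⟩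
      rw [mem_closedBall_zero_iff] at hf
      rw [dist_comm, dist_eq_norm]
      simpa using (φ x - φ x₀).le_of_opNorm_le_of_le le_rfl hf

end CompactOperator

section KernelOperator

variable {X : Type*} [TopologicalSpace X] [CompactSpace X] [MeasurableSpace X] [BorelSpace X]
  (μ : Measure X) [IsFiniteMeasure μ]

/-- The functionals `f ↦ ∫ k(x, y) f(y) dy` on `L²`, as a continuous family in `x`. -/
noncomputable def kernelFamily (k : C(X × X, ℂ)) : C(X, Lp ℂ 2 μ →L[ℂ] ℂ) :=
  ⟨fun x => innerSL ℂ (ContinuousMap.toLp 2 μ ℂ (star (k.curry x))), by fun_prop⟩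

/-- The integral operator on `L²` with kernel `k`. -/
noncomputable def kernelOp (k : C(X × X, ℂ)) : Lp ℂ 2 μ →L[ℂ] Lp ℂ 2 μ :=
  BoundedContinuousFunction.toLp 2 μ ℂ ∘L evalFamily (kernelFamily μ k)

theorem isCompactOperator_kernelOp (k : C(X × X, ℂ)) : IsCompactOperator (kernelOp μ k) :=
  (isCompactOperator_evalFamily (kernelFamily μ k)).clm_comp (BoundedContinuousFunction.toLp 2 μ ℂ)

variable {μ}

theorem kernelFamily_apply (k : C(X × X, ℂ)) (x : X) (f : Lp ℂ 2 μ) :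
    kernelFamily μ k x f = ∫ y, k (x, y) * f y ∂μ := by
  change inner ℂ (ContinuousMap.toLp 2 μ ℂ (star (k.curry x))) f = _
  rw [L2.inner_def]
  refine integral_congr_ae ?_
  filter_upwards [ContinuousMap.coeFn_toLp (𝕜 := ℂ) (p := 2) μ (star (k.curry x))] with y hy
  rw [hy, RCLike.inner_apply]
  simp [mul_comm]

theorem kernelOp_coeFn (k : C(X × X, ℂ)) (f : Lp ℂ 2 μ) :
    kernelOp μ k f =ᵐ[μ] fun x => ∫ y, k (x, y) * f y ∂μ := by
  filter_upwards [BoundedContinuousFunction.coeFn_toLp (𝕜 := ℂ) (p := 2) μ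
    (evalFamily (kernelFamily μ k) f)] with x hx
  rw [← kernelFamily_apply]
  exact hx

theorem exists_eigenfunction_of_mem_spectrum_kernelOp {k : C(X × X, ℂ)} {z : ℂ} (hz : z ≠ 0)
    (hk : z ∈ spectrum ℂ (kernelOp μ k)) :
    ∃ g : C(X, ℂ), g ≠ 0 ∧ ∀ x, ∫ y, k (x, y) * g y ∂μ = z * g x := by
  obtain ⟨f, hf, hf0⟩ := (((isCompactOperator_kernelOp μ k).hasEigenvalue_iff_mem_spectrum
    hz).2 hk).exists_hasEigenvector
  have hfz : kernelOp μ k f = z • f := Module.End.mem_eigenspace_iff.1 hf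
  set g := z⁻¹ • evalFamily (kernelFamily μ k) f
  have hgf : BoundedContinuousFunction.toLp 2 μ ℂ g = f := by
    rw [map_smul, ← ContinuousLinearMap.comp_apply]
    exact (inv_smul_eq_iff₀ hz).2 hfz
  refine ⟨g.toContinuousMap, fun hg => hf0 ?_, fun x => ?_⟩
  · have hg0 : g = 0 := by ext x; exact DFunLike.congr_fun hg x
    rw [← hgf, hg0, map_zero]
  · calc ∫ y, k (x, y) * g y ∂μ = ∫ y, k (x, y) * f y ∂μ := by
          refine integral_congr_ae ?_
          filter_upwards [hgf ▸ BoundedContinuousFunction.coeFn_toLp (𝕜 := ℂ) (p := 2) μ g]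
            with y hy
          rw [hy]
      _ = kernelFamily μ k x f := (kernelFamily_apply k x f).symm
      _ = z * g x := by simp [g, hz]

end KernelOperator

/-! ### Step functions on a partition into cells of equal measure -/

section StepFunction

variable {X ι : Type*} [MeasurableSpace X] [MeasurableSpace ι] [DiscreteMeasurableSpace ι]
  {μ : Measure X} [IsFiniteMeasure μ] {c : X → ι} {w : ℝ}

theorem memLp_comp_cell [Finite ι] (hc : Measurable c) (z : ι → ℝ) (p : ENNReal) :
    MemLp (fun x => (z (c x) : ℂ)) p μ := by
  obtain ⟨C, hC⟩ := Finite.exists_le fun i => |z i|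
  exact .of_bound ((measurable_of_finite fun i => (z i : ℂ)).comp hc).aestronglyMeasurable C
    (.of_forall fun x => by simpa using hC (c x))

variable [Fintype ι]

theorem integral_comp_cell {G : Type*} [NormedAddCommGroup G] [NormedSpace ℝ G] [CompleteSpace G]
    (hc : Measurable c) (hw : ∀ i, μ.real (c ⁻¹' {i}) = w) (g : ι → G) :
    ∫ x, g (c x) ∂μ = w • ∑ i, g i := by
  rw [← integral_map hc.aemeasurable StronglyMeasurable.of_discrete.aestronglyMeasurable,
    integral_fintype .of_finite, Finset.smul_sum]
  simp only [map_measureReal_apply hc (measurableSet_singleton _), hw]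

variable (μ) in
/-- The step function in `L²` with value `z i` on the cell `c ⁻¹' {i}`. -/
noncomputable def stepLp (hc : Measurable c) (z : ι → ℝ) : Lp ℂ 2 μ := (memLp_comp_cell hc z 2).toLp

theorem stepLp_coeFn (hc : Measurable c) (z : ι → ℝ) :
    stepLp μ hc z =ᵐ[μ] fun x => (z (c x) : ℂ) :=
  MemLp.coeFn_toLp _

theorem stepLp_sub (hc : Measurable c) (z z' : ι → ℝ) :
    stepLp μ hc (z - z') = stepLp μ hc z - stepLp μ hc z' := by
  rw [stepLp, stepLp, stepLp, ← MemLp.toLp_sub]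
  congr 1
  ext x
  simp

theorem stepLp_smul (hc : Measurable c) (r : ℝ) (z : ι → ℝ) :
    stepLp μ hc (r • z) = (r : ℂ) • stepLp μ hc z := by
  rw [stepLp, stepLp, ← MemLp.toLp_const_smul]
  congr 1
  ext x
  simp

theorem norm_stepLp_sq (hc : Measurable c) (hw : ∀ i, μ.real (c ⁻¹' {i}) = w) (z : ι → ℝ) :
    ‖stepLp μ hc z‖ ^ 2 = w * ∑ i, z i ^ 2 := by
  have hinner : inner ℂ (stepLp μ hc z) (stepLp μ hc z) = ∫ x, ((z (c x) ^ 2 : ℝ) : ℂ) ∂μ := by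
    rw [L2.inner_def]
    refine integral_congr_ae ?_
    filter_upwards [stepLp_coeFn hc z] with x hx
    rw [hx, RCLike.inner_apply, Complex.conj_ofReal]
    push_cast
    ring
  rw [integral_comp_cell hc hw fun i => ((z i ^ 2 : ℝ) : ℂ), inner_self_eq_norm_sq_to_K,
    Complex.real_smul] at hinner
  refine Complex.ofReal_injective ?_
  push_cast at hinner ⊢
  exact hinner

theorem integral_abs_comp_cell_le (hc : Measurable c) (hw : ∀ i, μ.real (c ⁻¹' {i}) = w)
    (z : ι → ℝ) : ∫ x, |z (c x)| ∂μ ≤ √(μ.real univ) * ‖stepLp μ hc z‖ := by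
  have huniv : μ.real univ = w * Fintype.card ι := by
    simpa using integral_comp_cell hc hw fun _ => (1 : ℝ)
  refine le_of_sq_le_sq ?_ (by positivity)
  rw [integral_comp_cell hc hw fun i => |z i|, mul_pow, Real.sq_sqrt measureReal_nonneg,
    norm_stepLp_sq hc hw, huniv, smul_eq_mul]
  have := sq_sum_le_card_mul_sum_sq (s := Finset.univ) (f := fun i => |z i|)
  simp only [sq_abs, Finset.card_univ] at this
  calc (w * ∑ i, |z i|) ^ 2 = w ^ 2 * (∑ i, |z i|) ^ 2 := mul_pow _ _ _
    _ ≤ w ^ 2 * (Fintype.card ι * ∑ i, z i ^ 2) := by gcongr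
    _ = w * Fintype.card ι * (w * ∑ i, z i ^ 2) := by ring

theorem integral_cell_mul_eq_mulVec (hc : Measurable c) (hw : ∀ i, μ.real (c ⁻¹' {i}) = w)
    (A : Matrix ι ι ℝ) (z : ι → ℝ) (i : ι) :
    ∫ y, (A i (c y) : ℂ) * z (c y) ∂μ = ((w • A).mulVec z i : ℝ) := by
  rw [integral_comp_cell hc hw fun j => (A i j : ℂ) * z j, Matrix.smul_mulVec]
  simp [Matrix.mulVec, dotProduct]

variable [TopologicalSpace X] [CompactSpace X] [BorelSpace X] {k : C(X × X, ℂ)}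
  {A : Matrix ι ι ℝ} {η : ℝ}

theorem norm_integral_cell_sub_kernel_le (hc : Measurable c)
    (hw : ∀ i, μ.real (c ⁻¹' {i}) = w) (hη : 0 ≤ η)
    (hA : ∀ x y, ‖(A (c x) (c y) : ℂ) - k (x, y)‖ ≤ η) (z : ι → ℝ) (x : X) :
    ‖(∫ y, (A (c x) (c y) : ℂ) * z (c y) ∂μ) - ∫ y, k (x, y) * z (c y) ∂μ‖
      ≤ η * (√(μ.real univ) * ‖stepLp μ hc z‖) := by
  have hz : Integrable (fun y => (z (c y) : ℂ)) μ := (memLp_comp_cell hc z 1).integrable le_rfl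
  have hAint : Integrable (fun y => (A (c x) (c y) : ℂ) * z (c y)) μ := by
    simpa using (memLp_comp_cell hc (fun i => A (c x) i * z i) 1).integrable le_rfl
  have hkint : Integrable (fun y => k (x, y) * z (c y)) μ :=
    hz.bdd_mul (by fun_prop : Continuous fun y => k (x, y)).aestronglyMeasurable
      (.of_forall fun y => k.norm_coe_le_norm (x, y))
  rw [← integral_sub hAint hkint]
  calc ‖∫ y, (A (c x) (c y) * z (c y) - k (x, y) * z (c y)) ∂μ‖ ≤ ∫ y, η * |z (c y)| ∂μ := by
        refine norm_integral_le_of_norm_le (by simpa using hz.norm.const_mul η)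
          (.of_forall fun y => ?_)
        rw [← sub_mul, norm_mul, Complex.norm_real, Real.norm_eq_abs]
        exact mul_le_mul_of_nonneg_right (hA x y) (abs_nonneg _)
    _ ≤ η * (√(μ.real univ) * ‖stepLp μ hc z‖) := by
        rw [integral_const_mul]
        exact mul_le_mul_of_nonneg_left (integral_abs_comp_cell_le hc hw z) hη

theorem norm_stepLp_mulVec_sub_kernelOp_le (hc : Measurable c)
    (hw : ∀ i, μ.real (c ⁻¹' {i}) = w) (hη : 0 ≤ η)
    (hA : ∀ x y, ‖(A (c x) (c y) : ℂ) - k (x, y)‖ ≤ η) (z : ι → ℝ) :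
    ‖stepLp μ hc ((w • A).mulVec z) - kernelOp μ k (stepLp μ hc z)‖
      ≤ η * μ.real univ * ‖stepLp μ hc z‖ := by
  have hbound : ∀ᵐ x ∂μ, ‖(stepLp μ hc ((w • A).mulVec z) - kernelOp μ k (stepLp μ hc z)) x‖
      ≤ η * (√(μ.real univ) * ‖stepLp μ hc z‖) := by
    filter_upwards [Lp.coeFn_sub (stepLp μ hc ((w • A).mulVec z)) (kernelOp μ k (stepLp μ hc z)),
      stepLp_coeFn hc ((w • A).mulVec z), kernelOp_coeFn k (stepLp μ hc z)] with x hsub hE hK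
    have hker : ∫ y, k (x, y) * stepLp μ hc z y ∂μ = ∫ y, k (x, y) * z (c y) ∂μ :=
      integral_congr_ae <| (stepLp_coeFn hc z).mono fun y hy => by simp only [hy]
    rw [hsub, Pi.sub_apply, hE, hK, hker, ← integral_cell_mul_eq_mulVec hc hw]
    exact norm_integral_cell_sub_kernel_le hc hw hη hA z x
  calc ‖stepLp μ hc ((w • A).mulVec z) - kernelOp μ k (stepLp μ hc z)‖
      ≤ √(μ.real univ) * (η * (√(μ.real univ) * ‖stepLp μ hc z‖)) := by
        simpa [Real.sqrt_eq_rpow, measureReal_def, measureUnivNNReal,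
          ENNReal.coe_toNNReal_eq_toReal] using Lp.norm_le_of_ae_bound (by positivity) hbound
    _ = η * (√(μ.real univ) * √(μ.real univ)) * ‖stepLp μ hc z‖ := by ring
    _ = η * μ.real univ * ‖stepLp μ hc z‖ := by rw [Real.mul_self_sqrt measureReal_nonneg]

end StepFunction

/-! ### Periodic kernels on the circle -/

section Circle

variable {L : ℝ} {E : Type*} [TopologicalSpace E] {F : ℝ → ℝ → E}

theorem exists_continuousMap_addCircle_prod (hF : Continuous (Function.uncurry F))
    (hF₁ : ∀ s t, F (s + L) t = F s t) (hF₂ : ∀ s t, F s (t + L) = F s t) :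
    ∃ k : C(AddCircle L × AddCircle L, E), ∀ s t : ℝ, k (s, t) = F s t := by
  have hmk : IsOpenQuotientMap ((↑) : ℝ → AddCircle L) := QuotientAddGroup.isOpenQuotientMap_mk
  have hper : Function.Periodic (fun s => (show Function.Periodic (F s) L from hF₂ s).lift) L :=
    fun s => funext fun x => QuotientAddGroup.induction_on x (hF₁ s)
  exact ⟨⟨fun p => hper.lift p.1 p.2, ((hmk.prodMap hmk).continuous_comp_iff).1 hF⟩,
    fun _ _ => rfl⟩

theorem dist_addCircle_coe_le (s t : ℝ) : dist (s : AddCircle L) t ≤ |s - t| := by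
  rw [dist_eq_norm, ← AddCircle.coe_sub]
  exact QuotientAddGroup.norm_mk_le_norm

variable [hL : Fact (0 < L)] {N : ℕ}

/-- The index `i` of the cell `(i L / N, (i + 1) L / N]` containing a point of the circle. -/
noncomputable def cell (L : ℝ) [Fact (0 < L)] (N : ℕ) [NeZero N] (x : AddCircle L) : Fin N :=
  ⟨⌈N * (AddCircle.equivIoc L 0 x : ℝ) / L⌉₊ - 1, by
    have hL : 0 < L := Fact.out
    have hle : ⌈N * (AddCircle.equivIoc L 0 x : ℝ) / L⌉₊ ≤ N := Nat.ceil_le.2 <| by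
      rw [div_le_iff₀ hL]
      exact mul_le_mul_of_nonneg_left
        ((AddCircle.equivIoc L 0 x).2.2.trans_eq (zero_add L)) N.cast_nonneg
    have := NeZero.pos N
    omega⟩

variable [NeZero N]

theorem cell_coe_eq_iff {t : ℝ} (ht : t ∈ Ioc 0 L) (i : Fin N) :
    cell L N t = i ↔ t ∈ Ioc (i * L / N) ((i + 1) * L / N) := by
  have hN : (0 : ℝ) < N := Nat.cast_pos.2 (NeZero.pos N)
  have hceil : 0 < ⌈N * t / L⌉₊ := Nat.ceil_pos.2 (div_pos (mul_pos hN ht.1) hL.out)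
  have hcell : (cell L N t : ℕ) = ⌈N * t / L⌉₊ - 1 := by
    simp only [cell]
    rw [AddCircle.equivIoc_coe_of_mem (by simpa using ht)]
  rw [Fin.ext_iff, hcell, show ⌈N * t / L⌉₊ - 1 = (i : ℕ) ↔ ⌈N * t / L⌉₊ = i + 1 by omega,
    Nat.ceil_eq_iff (by omega), Nat.add_sub_cancel, mem_Ioc, lt_div_iff₀ hL.out,
    div_le_iff₀ hL.out, div_lt_iff₀ hN, le_div_iff₀ hN, mul_comm t]
  push_cast
  rfl

theorem measurable_cell : Measurable (cell L N) := by
  have hIoc : Measurable fun x : AddCircle L => (AddCircle.equivIoc L 0 x : ℝ) :=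
    measurable_subtype_coe.comp (AddCircle.measurableEquivIoc L 0).measurable
  refine measurable_to_countable' fun i => ?_
  have hpre : cell L N ⁻¹' {i} = (fun x : AddCircle L => (AddCircle.equivIoc L 0 x : ℝ)) ⁻¹'
      Ioc (i * L / N) ((i + 1) * L / N) := by
    ext x
    rw [mem_preimage, mem_singleton_iff, mem_preimage,
      ← cell_coe_eq_iff (by simpa using (AddCircle.equivIoc L 0 x).2), AddCircle.coe_equivIoc]
  exact hpre ▸ hIoc measurableSet_Ioc

theorem volume_real_cell_preimage (i : Fin N) :
    (volume : Measure (AddCircle L)).real (cell L N ⁻¹' {i}) = L / N := by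
  have hN : (0 : ℝ) < N := Nat.cast_pos.2 (NeZero.pos N)
  have hi : (i : ℝ) + 1 ≤ N := by exact_mod_cast i.2
  have hpre : (↑) ⁻¹' (cell L N ⁻¹' {i}) ∩ Ioc 0 (0 + L) = Ioc (i * L / N) ((i + 1) * L / N) := by
    ext t
    rw [zero_add]
    refine ⟨fun ⟨h, ht⟩ => (cell_coe_eq_iff ht i).1 h, fun h => ?_⟩
    have ht : t ∈ Ioc 0 L := by
      refine ⟨lt_of_le_of_lt (by have := hL.out; positivity) h.1, h.2.trans ?_⟩
      rw [div_le_iff₀ hN, mul_comm L]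
      exact mul_le_mul_of_nonneg_right hi hL.out.le
    exact ⟨(cell_coe_eq_iff ht i).2 h, ht⟩
  have hlen : (i + 1) * L / N - i * L / N = L / N := by ring
  rw [measureReal_def, AddCircle.add_projection_respects_measure L 0
    (measurable_cell (measurableSet_singleton i)), hpre, Real.volume_Ioc, hlen,
    ENNReal.toReal_ofReal (div_pos hL.out hN).le]

theorem dist_cell_le (x : AddCircle L) :
    dist ((cell L N x * L / N : ℝ) : AddCircle L) x ≤ L / N := by
  obtain ⟨h₁, h₂⟩ := (cell_coe_eq_iff (by simpa using (AddCircle.equivIoc L 0 x).2) _).1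
    (congrArg (cell L N) (AddCircle.coe_equivIoc (p := L) (a := 0) (y := x)))
  nth_rw 2 [← AddCircle.coe_equivIoc (p := L) (a := 0) (y := x)]
  refine (dist_addCircle_coe_le _ _).trans ?_
  rw [abs_sub_comm, abs_of_nonneg (sub_nonneg.2 h₁.le)]
  linarith [show ((cell L N x : ℕ) + 1 : ℝ) * L / N = (cell L N x : ℕ) * L / N + L / N by ring]

end Circle

section Discretization

variable {L : ℝ} [Fact (0 < L)] {F : ℝ → ℝ → ℝ} {k : C(AddCircle L × AddCircle L, ℂ)}

/-- The meshes `a N` of `N` points become asymptotically equidistributed: `a N i - i L / N` tends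
to `0` uniformly in `i`. -/
def IsAsymptoticallyUniform (L : ℝ) (a : (N : ℕ) → Fin N → ℝ) : Prop :=
  ∀ ε > 0, ∀ᶠ N in atTop, ∀ i : Fin N, |a N i - i * L / N| ≤ ε

theorem IsAsymptoticallyUniform.eventually_dist_cell_le {a : (N : ℕ) → Fin N → ℝ}
    (ha : IsAsymptoticallyUniform L a) {ε : ℝ} (hε : 0 < ε) :
    ∀ᶠ N in atTop, ∀ [NeZero N] (x : AddCircle L),
      dist (a N (cell L N x) : AddCircle L) x ≤ ε := by
  filter_upwards [ha (ε / 2) (half_pos hε),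
    (tendsto_const_div_atTop_nhds_zero_nat L).eventually_le_const (half_pos hε)] with N hN hLN _ x
  calc dist (a N (cell L N x) : AddCircle L) x
      ≤ dist (a N (cell L N x) : AddCircle L) ((cell L N x * L / N : ℝ) : AddCircle L)
          + dist ((cell L N x * L / N : ℝ) : AddCircle L) x := dist_triangle _ _ _
    _ ≤ ε / 2 + ε / 2 := add_le_add ((dist_addCircle_coe_le _ _).trans (hN _))
        ((dist_cell_le x).trans hLN)
    _ = ε := add_halves ε

theorem eventually_norm_stepLp_mulVec_sub_kernelOp_le (hk : ∀ s t : ℝ, k (s, t) = F s t)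
    {a b : (N : ℕ) → Fin N → ℝ} (ha : IsAsymptoticallyUniform L a)
    (hb : IsAsymptoticallyUniform L b) {ε : ℝ} (hε : 0 < ε) :
    ∀ᶠ N in atTop, ∀ [NeZero N] (z : Fin N → ℝ),
      ‖stepLp volume (measurable_cell (L := L))
          (((L / N) • Matrix.of fun i j => F (a N i) (b N j)).mulVec z)
        - kernelOp volume k (stepLp volume measurable_cell z)‖
      ≤ ε * ‖stepLp volume (measurable_cell (L := L)) z‖ := by
  have hL : 0 < L := Fact.out
  obtain ⟨δ, hδ, hkδ⟩ := Metric.uniformContinuous_iff.1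
    (CompactSpace.uniformContinuous_of_continuous k.continuous) (ε / L) (by positivity)
  filter_upwards [ha.eventually_dist_cell_le (half_pos hδ),
    hb.eventually_dist_cell_le (half_pos hδ)] with N haN hbN _ z
  have hA : ∀ x y : AddCircle L,
      ‖(F (a N (cell L N x)) (b N (cell L N y)) : ℂ) - k (x, y)‖ ≤ ε / L := fun x y => by
    rw [← hk, ← dist_eq_norm]
    refine (hkδ ?_).le
    rw [Prod.dist_eq]
    exact max_lt ((haN x).trans_lt (half_lt_self hδ)) ((hbN y).trans_lt (half_lt_self hδ))
  have hLvol : (volume : Measure (AddCircle L)).real univ = L := by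
    rw [measureReal_def, AddCircle.measure_univ, ENNReal.toReal_ofReal hL.le]
  have hbound := norm_stepLp_mulVec_sub_kernelOp_le
    (A := Matrix.of fun i j => F (a N i) (b N j)) (c := cell L N) measurable_cell
    volume_real_cell_preimage (by positivity) hA z
  rwa [hLvol, div_mul_cancel₀ _ hL.ne'] at hbound

theorem norm_stepLp_cell {N : ℕ} [NeZero N] (z : Fin N → ℝ) :
    ‖stepLp volume (measurable_cell (L := L)) z‖ = √L * l2norm z := by
  have hL : 0 < L := Fact.out
  rw [← Real.sqrt_sq (norm_nonneg _), norm_stepLp_sq measurable_cell volume_real_cell_preimage,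
    l2norm, ← Real.sqrt_mul hL.le, ← mul_assoc, div_eq_mul_inv]

end Discretization

section Nystrom

variable {L : ℝ} [Fact (0 < L)] {F : ℝ → ℝ → ℝ} {k : C(AddCircle L × AddCircle L, ℂ)}
  (hk : ∀ s t : ℝ, k (s, t) = F s t) {a b : (N : ℕ) → Fin N → ℝ}
  (ha : IsAsymptoticallyUniform L a) (hb : IsAsymptoticallyUniform L b)

include hk ha hb

theorem eventually_norm_stepLp_sub_smul_one_mulVec_sub_le (c : ℝ) {ε : ℝ} (hε : 0 < ε) :
    ∀ᶠ N in atTop, ∀ [NeZero N] (z : Fin N → ℝ),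
      ‖stepLp volume (measurable_cell (L := L))
          (((L / N) • Matrix.of (fun i j => F (a N i) (b N j)) - c • 1).mulVec z)
        - (kernelOp volume k (stepLp volume measurable_cell z)
            - (c : ℂ) • stepLp volume measurable_cell z)‖
      ≤ ε * ‖stepLp volume (measurable_cell (L := L)) z‖ := by
  filter_upwards [eventually_norm_stepLp_mulVec_sub_kernelOp_le hk ha hb hε] with N hN _ z
  rw [Matrix.sub_mulVec, Matrix.smul_mulVec (c : ℝ) 1, Matrix.one_mulVec, stepLp_sub, stepLp_smul,
    sub_sub_sub_cancel_right]
  exact hN z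

theorem exists_l2norm_pow_mulVec_le {c R : ℝ} (hR : 0 < R)
    (hspec : ∀ z ∈ spectrum ℂ (kernelOp volume k), ‖z - c‖ < R) :
    ∃ σ < R, ∃ m₀ : ℕ, ∀ᶠ N in atTop, ∀ m ≥ m₀, ∀ z : Fin N → ℝ,
      l2norm ((((L / N) • Matrix.of (fun i j => F (a N i) (b N j)) - c • 1) ^ m).mulVec z)
        ≤ σ ^ m * l2norm z := by
  have hL : 0 < L := Fact.out
  obtain ⟨σ, hσ, ε, hε, m₀, hm₀⟩ := exists_norm_iterate_le_pow hR
    (T := kernelOp volume k - algebraMap ℂ _ (c : ℂ)) fun z hz => by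
      rw [← spectrum.sub_singleton_eq, sub_singleton] at hz
      obtain ⟨w, hw, rfl⟩ := hz
      exact hspec w hw
  refine ⟨σ, hσ, m₀, ?_⟩
  filter_upwards [eventually_norm_stepLp_sub_smul_one_mulVec_sub_le hk ha hb c hε,
    eventually_ne_atTop 0] with N hN hN₀ m hm z
  have : NeZero N := ⟨hN₀⟩
  have hbound := hm₀ _ _ _ hN m hm z
  rw [norm_stepLp_cell, norm_stepLp_cell, mul_left_comm] at hbound
  rw [← Matrix.toLin'_apply, Matrix.toLin'_pow, Module.End.pow_apply]
  exact le_of_mul_le_mul_left hbound (Real.sqrt_pos.2 hL)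

theorem exists_mul_l2norm_le_l2norm_mulVec {c : ℝ}
    (hspec : (c : ℂ) ∉ spectrum ℂ (kernelOp volume k)) :
    ∃ η > 0, ∀ᶠ N in atTop, ∀ z : Fin N → ℝ,
      η * l2norm z
        ≤ l2norm (((L / N) • Matrix.of (fun i j => F (a N i) (b N j)) - c • 1).mulVec z) := by
  have hL : 0 < L := Fact.out
  obtain ⟨η, hη, hlow⟩ := exists_mul_norm_le_norm_sub_smul hspec
  refine ⟨η / 2, half_pos hη, ?_⟩
  filter_upwards [eventually_norm_stepLp_sub_smul_one_mulVec_sub_le hk ha hb c (half_pos hη),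
    eventually_ne_atTop 0] with N hN hN₀ z
  have : NeZero N := ⟨hN₀⟩
  have hclose := (norm_sub_rev _ _).trans_le (hN z)
  have hz := hlow (stepLp volume measurable_cell z)
  have htri := norm_le_insert' (kernelOp volume k (stepLp volume measurable_cell z)
    - (c : ℂ) • stepLp volume measurable_cell z) (stepLp volume (measurable_cell (L := L))
      (((L / N) • Matrix.of (fun i j => F (a N i) (b N j)) - c • 1).mulVec z))
  rw [norm_stepLp_cell] at hz hclose htri
  refine le_of_mul_le_mul_left ?_ (Real.sqrt_pos.2 hL)
  linarith

end Nystrom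

theorem l2norm_eq_zero {N : ℕ} {z : Fin N → ℝ} : l2norm z = 0 ↔ z = 0 := by
  rcases N.eq_zero_or_pos with rfl | hN
  · simp [l2norm, Subsingleton.elim z 0]
  · rw [l2norm, Real.sqrt_eq_zero (by positivity), mul_eq_zero_iff_left (by positivity),
      Finset.sum_eq_zero_iff_of_nonneg fun i _ => sq_nonneg (z i)]
    simp [funext_iff]

theorem existsUnique_mulVec_eq {N : ℕ} {B : Matrix (Fin N) (Fin N) ℝ} {η : ℝ} (hη : 0 < η)
    (hB : ∀ z, η * l2norm z ≤ l2norm (B.mulVec z)) (v : Fin N → ℝ) : ∃! z, B.mulVec z = v := by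
  have hinj : Function.Injective B.mulVec :=
    (injective_iff_map_eq_zero B.mulVecLin).2 fun z hz => l2norm_eq_zero.1 <|
      le_antisymm (nonpos_of_mul_nonpos_right ((hB z).trans_eq (l2norm_eq_zero.2 hz)) hη)
        (Real.sqrt_nonneg _)
  exact (Function.bijective_iff_existsUnique _).1 ⟨hinj,
    Matrix.mulVec_surjective_iff_isUnit.2 (Matrix.mulVec_injective_iff_isUnit.1 hinj)⟩ v

theorem isAsymptoticallyUniform_of_abs_sub_le {L M : ℝ} {κ : ℕ} (hκ : κ ≠ 0)
    {a : (N : ℕ) → Fin N → ℝ}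
    (ha : ∀ᶠ N in atTop, ∀ i : Fin N, |a N i - i * L / N| ≤ M / (N : ℝ) ^ κ) :
    IsAsymptoticallyUniform L a := fun ε hε => by
  have hlim : Tendsto (fun N : ℕ => M / (N : ℝ) ^ κ) atTop (𝓝 0) :=
    tendsto_const_nhds.div_atTop ((tendsto_pow_atTop hκ).comp tendsto_natCast_atTop_atTop)
  filter_upwards [ha, hlim.eventually_le_const hε] with N hN hNε i
  exact (hN i).trans hNε

/-! ### Smooth dependence on parameters -/

section Parameters

theorem contDiff_fderiv_left {E G : Type*} [NormedAddCommGroup E] [NormedSpace ℝ E]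
    [NormedAddCommGroup G] [NormedSpace ℝ G] {F : E → ℝ → G} {m n : WithTop ℕ∞}
    (hF : ContDiff ℝ n (Function.uncurry F)) (hmn : m + 1 ≤ n) :
    ContDiff ℝ m (Function.uncurry fun x t => fderiv ℝ (fun y => F y t) x) :=
  ContDiff.fderiv (f := fun (p : E × ℝ) y => F y p.2)
    (hF.comp (by fun_prop : ContDiff ℝ n fun q : (E × ℝ) × E => (q.2, q.1.2))) contDiff_fst hmn

universe u

variable {E G : Type u} {𝕜 : Type*} [NormedAddCommGroup E] [NormedSpace ℝ E] [ProperSpace E]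
  [NormedAddCommGroup G] [NormedSpace ℝ G] [NormedField 𝕜] [NormedSpace 𝕜 G] [SMulCommClass ℝ 𝕜 G]

theorem hasFDerivAt_intervalIntegral_smul {F : E → ℝ → G} {w : ℝ → 𝕜}
    (hF : ContDiff ℝ 1 (Function.uncurry F)) (hw : Continuous w) (a b : ℝ) (x : E) :
    HasFDerivAt (fun x => ∫ t in a..b, w t • F x t)
      (∫ t in a..b, w t • fderiv ℝ (fun y => F y t) x) x := by
  have hF₀ : Continuous fun p : E × ℝ => F p.1 p.2 := hF.continuous
  have hF₁ : Continuous fun p : E × ℝ => fderiv ℝ (fun y => F y p.2) p.1 :=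
    (contDiff_fderiv_left (m := 0) hF (by norm_num)).continuous
  obtain ⟨C, hC⟩ := ((isCompact_closedBall x 1).prod
    (isCompact_uIcc (a := a) (b := b))).exists_bound_of_continuousOn
      (f := fun p => w p.2 • fderiv ℝ (fun y => F y p.2) p.1) (by fun_prop)
  refine intervalIntegral.hasFDerivAt_integral_of_dominated_of_fderiv_le (bound := fun _ => C)
    (Metric.closedBall_mem_nhds x one_pos) (.of_forall fun y => ?_) ?_ ?_
    (.of_forall fun t ht y hy => hC (y, t) ⟨hy, uIoc_subset_uIcc ht⟩) intervalIntegrable_const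
    (.of_forall fun t _ y _ => HasFDerivAt.const_smul ?_ (w t))
  · exact Continuous.aestronglyMeasurable (by fun_prop)
  · exact Continuous.intervalIntegrable (by fun_prop) _ _
  · exact (hw.smul
      (hF₁.comp (by fun_prop : Continuous fun t : ℝ => (x, t)))).aestronglyMeasurable
  · exact ((hF.comp (by fun_prop : ContDiff ℝ 1 fun y : E => (y, t))).differentiable one_ne_zero
      y).hasFDerivAt

theorem contDiff_nat_intervalIntegral_smul {w : ℝ → 𝕜} (hw : Continuous w) (a b : ℝ) (n : ℕ) :
    ∀ {G : Type u} [NormedAddCommGroup G] [NormedSpace ℝ G] [NormedSpace 𝕜 G]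
      [SMulCommClass ℝ 𝕜 G] {F : E → ℝ → G}, ContDiff ℝ ∞ (Function.uncurry F) →
      ContDiff ℝ n fun x => ∫ t in a..b, w t • F x t := by
  induction n with
  | zero =>
    intro G _ _ _ _ F hF
    exact contDiff_zero.2 (continuous_iff_continuousAt.2 fun x =>
      (hasFDerivAt_intervalIntegral_smul (hF.of_le (mod_cast le_top)) hw a b x).continuousAt)
  | succ n ih =>
    intro G _ _ _ _ F hF
    exact contDiff_succ_iff_hasFDerivAt.2
      ⟨_, ih (contDiff_fderiv_left (m := ∞) hF le_rfl), fun x =>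
        hasFDerivAt_intervalIntegral_smul (hF.of_le (mod_cast le_top)) hw a b x⟩

theorem contDiff_intervalIntegral_smul {F : E → ℝ → G} {w : ℝ → 𝕜}
    (hF : ContDiff ℝ ∞ (Function.uncurry F)) (hw : Continuous w) (a b : ℝ) :
    ContDiff ℝ ∞ fun x => ∫ t in a..b, w t • F x t :=
  contDiff_infty.2 fun n => contDiff_nat_intervalIntegral_smul hw a b n hF

theorem contDiff_intervalIntegral {F : E → ℝ → G} (hF : ContDiff ℝ ∞ (Function.uncurry F))
    (a b : ℝ) : ContDiff ℝ ∞ fun x => ∫ t in a..b, F x t := by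
  simpa using contDiff_intervalIntegral_smul hF (continuous_const (y := (1 : ℝ))) a b

end Parameters

section ParametersReal

variable {G : Type*} [NormedAddCommGroup G] [NormedSpace ℝ G]

theorem contDiff_deriv_right {F : ℝ → ℝ → G} (hF : ContDiff ℝ ∞ (Function.uncurry F)) :
    ContDiff ℝ ∞ (Function.uncurry fun s t => deriv (F s) t) :=
  ContDiff.fderiv_apply (f := fun (p : ℝ × ℝ) t => F p.1 t)
    (hF.comp (by fun_prop : ContDiff ℝ ∞ fun q : (ℝ × ℝ) × ℝ => (q.1.1, q.2))) contDiff_snd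
    contDiff_const le_rfl

theorem contDiff_flip {F : ℝ → ℝ → G} (hF : ContDiff ℝ ∞ (Function.uncurry F)) :
    ContDiff ℝ ∞ (Function.uncurry (flip F)) :=
  hF.comp (contDiff_snd.prodMk contDiff_fst)

theorem contDiff_apply_left {F : ℝ → ℝ → G} (hF : ContDiff ℝ ∞ (Function.uncurry F)) (s : ℝ) :
    ContDiff ℝ ∞ (F s) :=
  hF.comp (contDiff_const.prodMk contDiff_id)

theorem hasDerivAt_intervalIntegral {F : ℝ → ℝ → G} (hF : ContDiff ℝ ∞ (Function.uncurry F))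
    (a b s : ℝ) :
    HasDerivAt (fun s => ∫ t in a..b, F s t) (∫ t in a..b, deriv (fun r => F r t) s) s := by
  have hF' : Continuous fun p : ℝ × ℝ => deriv (fun r => F r p.2) p.1 :=
    (contDiff_flip (contDiff_deriv_right (contDiff_flip hF))).continuous
  have hF₀ : Continuous fun p : ℝ × ℝ => F p.1 p.2 := hF.continuous
  obtain ⟨C, hC⟩ := ((isCompact_closedBall s 1).prod
    (isCompact_uIcc (a := a) (b := b))).exists_bound_of_continuousOn hF'.continuousOn
  refine (intervalIntegral.hasDerivAt_integral_of_dominated_loc_of_deriv_le (bound := fun _ => C)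
    (Metric.closedBall_mem_nhds s one_pos) (.of_forall fun y => ?_) ?_ ?_
    (.of_forall fun t ht y hy => hC (y, t) ⟨hy, uIoc_subset_uIcc ht⟩) intervalIntegrable_const
    (.of_forall fun t _ y _ => ?_)).2
  · exact Continuous.aestronglyMeasurable (by fun_prop)
  · exact Continuous.intervalIntegrable (by fun_prop) _ _
  · exact (hF'.comp (by fun_prop : Continuous fun t : ℝ => (s, t))).aestronglyMeasurable
  · exact ((contDiff_apply_left (contDiff_flip hF) t).differentiable (by simp) y).hasDerivAt

end ParametersReal

section HadamardQuotient

variable {g : ℝ → ℂ}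

/-- The divided difference `(g t - g s) / (t - s)` of a smooth function, in Hadamard's integral
form, which makes sense and is smooth across the diagonal. -/
noncomputable def hadamardQuotient (g : ℝ → ℂ) (s t : ℝ) : ℂ :=
  ∫ u in (0 : ℝ)..1, deriv g (s + u * (t - s))

theorem contDiff_hadamardQuotient (hg : ContDiff ℝ ∞ g) :
    ContDiff ℝ ∞ (Function.uncurry (hadamardQuotient g)) :=
  contDiff_intervalIntegral (F := fun (p : ℝ × ℝ) u => deriv g (p.1 + u * (p.2 - p.1)))
    ((contDiff_infty_iff_deriv.1 hg).2.comp
      (by fun_prop : ContDiff ℝ ∞ fun q : (ℝ × ℝ) × ℝ => q.1.1 + q.2 * (q.1.2 - q.1.1))) 0 1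

@[simp]
theorem hadamardQuotient_self (g : ℝ → ℂ) (t : ℝ) : hadamardQuotient g t t = deriv g t := by
  simp [hadamardQuotient]

theorem sub_eq_mul_hadamardQuotient (hg : ContDiff ℝ ∞ g) (s t : ℝ) :
    g t - g s = (t - s : ℝ) * hadamardQuotient g s t := by
  have hc : Continuous (deriv g) := (contDiff_infty_iff_deriv.1 hg).2.continuous
  have hderiv (u : ℝ) :
      HasDerivAt (fun u : ℝ => g (s + u * (t - s))) ((t - s) • deriv g (s + u * (t - s))) u := by
    have hu : HasDerivAt (fun u : ℝ => s + u * (t - s)) (t - s) u := by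
      simpa using ((hasDerivAt_id u).mul_const (t - s)).const_add s
    exact ((contDiff_infty_iff_deriv.1 hg).1 _).hasDerivAt.scomp u hu
  have hftc := intervalIntegral.integral_eq_sub_of_hasDerivAt (a := 0) (b := 1)
    (fun u _ => hderiv u) (Continuous.intervalIntegrable (by fun_prop) _ _)
  simpa [hadamardQuotient] using hftc.symm

end HadamardQuotient

/-! ### Divided differences along a closed curve -/

/-- The smooth `L`-periodic complex functions on the line: both the curves and the functions on them
that the integral operators below act on. -/
def smoothPeriodic (L : ℝ) : StarSubalgebra ℂ (ℝ → ℂ) where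
  carrier := {f | ContDiff ℝ ∞ f ∧ Function.Periodic f L}
  mul_mem' hf hg := ⟨hf.1.mul hg.1, hf.2.mul hg.2⟩
  add_mem' hf hg := ⟨hf.1.add hg.1, hf.2.add hg.2⟩
  algebraMap_mem' _ := ⟨contDiff_const, fun _ => rfl⟩
  star_mem' hf := ⟨Complex.conjCLE.contDiff.comp hf.1, fun t => congrArg conj (hf.2 t)⟩

/-- The type of smooth `L`-periodic functions. -/
abbrev SmoothPeriodic (L : ℝ) : Type := smoothPeriodic L

instance (L : ℝ) : CoeFun (SmoothPeriodic L) fun _ => ℝ → ℂ := ⟨Subtype.val⟩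

variable {L : ℝ}

namespace SmoothPeriodic

variable (g : SmoothPeriodic L)

theorem contDiff : ContDiff ℝ ∞ g := g.2.1

theorem periodic : Function.Periodic g L := g.2.2

theorem differentiable : Differentiable ℝ g := (contDiff_infty_iff_deriv.1 g.2.1).1

theorem hasDerivAt (t : ℝ) : HasDerivAt g (deriv g t) t := (differentiable g t).hasDerivAt

@[fun_prop]
theorem continuous : Continuous g := g.2.1.continuous

theorem star_apply (t : ℝ) : (star g : SmoothPeriodic L) t = conj (g t) := rfl

/-- The derivative of a smooth periodic function, as a smooth periodic function. -/
noncomputable def derivative : SmoothPeriodic L :=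
  ⟨deriv g, (contDiff_infty_iff_deriv.1 g.2.1).2, fun t => by
    rw [← deriv_comp_add_const, funext (periodic g)]⟩

@[fun_prop]
theorem continuous_deriv : Continuous (deriv g) := (derivative g).continuous

theorem hasDerivAt_star (t : ℝ) : HasDerivAt (star g : SmoothPeriodic L) (conj (deriv g t)) t :=
  (Complex.conjCLE.hasFDerivAt (x := g t)).comp_hasDerivAt t (hasDerivAt g t)

theorem deriv_star (t : ℝ) : deriv (star g : SmoothPeriodic L) t = conj (deriv g t) :=
  (hasDerivAt_star g t).deriv

end SmoothPeriodic

/-- A smooth closed curve of period `L` in the plane, regularly parametrized and without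
self-intersections. -/
structure IsRegularLoop (l : SmoothPeriodic L) : Prop where
  pos : 0 < L
  deriv_ne_zero : ∀ t, deriv l t ≠ 0
  injOn : InjOn l (Ico 0 L)

variable {l : SmoothPeriodic L}

theorem IsRegularLoop.apply_eq_iff (hl : IsRegularLoop l) {s t : ℝ} :
    l t = l s ↔ ∃ m : ℤ, t = s + m * L := by
  refine ⟨fun hts => ?_, fun ⟨m, hm⟩ => hm ▸ l.periodic.int_mul m s⟩
  have hmod (r : ℝ) : l (toIcoMod hl.pos 0 r) = l r := l.periodic.sub_zsmul_eq _
  obtain ⟨m, hm⟩ := (toIcoMod_eq_toIcoMod hl.pos).1 (hl.injOn (toIcoMod_mem_Ico' hl.pos s)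
    (toIcoMod_mem_Ico' hl.pos t) (by rw [hmod, hmod, hts]))
  exact ⟨m, by rw [← sub_eq_iff_eq_add', hm, zsmul_eq_mul]⟩

theorem IsRegularLoop.ae_apply_ne (hl : IsRegularLoop l) (s : ℝ) : ∀ᵐ t : ℝ, l t ≠ l s := by
  filter_upwards [(countable_range fun m : ℤ => s + m * L).ae_notMem volume] with t ht hts
  obtain ⟨m, hm⟩ := hl.apply_eq_iff.1 hts
  exact ht ⟨m, hm.symm⟩

open Classical in
/-- The divided difference of `g` with respect to `l`, extended by its limit `g' / l'` to the pairs
of parameters of the same point. -/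
noncomputable def dividedDifference (l g : ℝ → ℂ) (s t : ℝ) : ℂ :=
  if l t = l s then deriv g t / deriv l t else (g t - g s) / (l t - l s)

theorem dividedDifference_of_ne {l g : ℝ → ℂ} {s t : ℝ} (hst : l t ≠ l s) :
    dividedDifference l g s t = (g t - g s) / (l t - l s) := if_neg hst

section DividedDifference

variable (hl : IsRegularLoop l) (g : SmoothPeriodic L)

include hl

theorem dividedDifference_eq_hadamardQuotient_div {m : ℤ} {s t : ℝ}
    (hne : hadamardQuotient l (s + m * L) t ≠ 0) :
    dividedDifference l g s t =
      hadamardQuotient g (s + m * L) t / hadamardQuotient l (s + m * L) t := by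
  obtain rfl | hst := eq_or_ne t (s + m * L)
  · rw [dividedDifference, if_pos (hl.apply_eq_iff.2 ⟨m, rfl⟩), hadamardQuotient_self,
      hadamardQuotient_self]
  have hst' : ((t - (s + m * L) : ℝ) : ℂ) ≠ 0 := Complex.ofReal_ne_zero.2 (sub_ne_zero.2 hst)
  have hlq := sub_eq_mul_hadamardQuotient l.contDiff (s + m * L) t
  have hgq := sub_eq_mul_hadamardQuotient g.contDiff (s + m * L) t
  rw [l.periodic.int_mul m s] at hlq
  rw [g.periodic.int_mul m s] at hgq
  rw [dividedDifference_of_ne (sub_ne_zero.1 (hlq ▸ mul_ne_zero hst' hne)), hlq, hgq,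
    mul_div_mul_left _ _ hst']

theorem contDiff_dividedDifference :
    ContDiff ℝ ∞ (Function.uncurry (dividedDifference l g)) := by
  rw [contDiff_iff_contDiffAt]
  rintro ⟨s, t⟩
  by_cases hst : l t = l s
  · obtain ⟨m, rfl⟩ := hl.apply_eq_iff.1 hst
    have hq (f : SmoothPeriodic L) :
        ContDiff ℝ ∞ fun p : ℝ × ℝ => hadamardQuotient f (p.1 + m * L) p.2 :=
      (contDiff_hadamardQuotient f.contDiff).comp
        (by fun_prop : ContDiff ℝ ∞ fun p : ℝ × ℝ => (p.1 + m * L, p.2))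
    have hne : hadamardQuotient l (s + m * L) (s + m * L) ≠ 0 := by
      rw [hadamardQuotient_self]
      exact hl.deriv_ne_zero _
    refine ((hq g).contDiffAt.mul ((hq l).contDiffAt.inv hne)).congr_of_eventuallyEq ?_
    filter_upwards [(hq l).continuous.continuousAt.eventually_ne hne] with p hp
    exact (dividedDifference_eq_hadamardQuotient_div hl g hp).trans (div_eq_mul_inv _ _)
  · have hsub (f : SmoothPeriodic L) : ContDiff ℝ ∞ fun p : ℝ × ℝ => f p.2 - f p.1 :=
      (f.contDiff.comp contDiff_snd).sub (f.contDiff.comp contDiff_fst)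
    have hne := sub_ne_zero.2 hst
    refine ((hsub g).contDiffAt.mul ((hsub l).contDiffAt.inv hne)).congr_of_eventuallyEq ?_
    filter_upwards [(hsub l).continuous.continuousAt.eventually_ne (x := (s, t)) hne] with p hp
    exact (dividedDifference_of_ne (sub_ne_zero.1 hp)).trans (div_eq_mul_inv _ _)

theorem dividedDifference_mul_sub (s t : ℝ) :
    dividedDifference l g s t * (l t - l s) = g t - g s := by
  by_cases hst : l t = l s
  · obtain ⟨m, rfl⟩ := hl.apply_eq_iff.1 hst
    rw [l.periodic.int_mul, g.periodic.int_mul, sub_self, mul_zero, sub_self]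
  · rw [dividedDifference_of_ne hst, div_mul_cancel₀ _ (sub_ne_zero.2 hst)]

end DividedDifference

theorem dividedDifference_add_period_right (g : SmoothPeriodic L) (s t : ℝ) :
    dividedDifference l g s (t + L) = dividedDifference l g s t := by
  simp only [dividedDifference, l.periodic t, g.periodic t,
    show deriv l (t + L) = deriv l t from l.derivative.periodic t,
    show deriv g (t + L) = deriv g t from g.derivative.periodic t]

theorem dividedDifference_congr_left {l g : ℝ → ℂ} {s s' : ℝ} (hls : l s = l s')
    (hgs : g s = g s') : dividedDifference l g s = dividedDifference l g s' := by
  funext t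
  simp only [dividedDifference, hls, hgs]

/-! ### The double layer kernel -/

open Classical in
/-- The kernel of the (adjoint) double layer potential of the curve `l`: the rate of change in `t`
of the angle under which `l t` is seen from `l s`, extended by its limit to the pairs of parameters
of the same point. -/
noncomputable def doubleLayerKernel (l : ℝ → ℂ) (s t : ℝ) : ℝ :=
  if l t = l s then (deriv (deriv l) t / (2 * deriv l t)).im else (deriv l t / (l t - l s)).im

theorem doubleLayerKernel_of_eq {l : ℝ → ℂ} {s t : ℝ} (hst : l t = l s) :
    doubleLayerKernel l s t = (deriv (deriv l) t / (2 * deriv l t)).im := if_pos hst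

theorem doubleLayerKernel_of_ne {l : ℝ → ℂ} {s t : ℝ} (hst : l t ≠ l s) :
    doubleLayerKernel l s t = (deriv l t / (l t - l s)).im := if_neg hst

theorem doubleLayerKernel_add_period_left (l : SmoothPeriodic L) (s t : ℝ) :
    doubleLayerKernel l (s + L) t = doubleLayerKernel l s t := by
  simp only [doubleLayerKernel, l.periodic s]

theorem doubleLayerKernel_add_period_right (l : SmoothPeriodic L) (s t : ℝ) :
    doubleLayerKernel l s (t + L) = doubleLayerKernel l s t := by
  simp only [doubleLayerKernel, l.periodic t,
    show deriv l (t + L) = deriv l t from l.derivative.periodic t,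
    show deriv (deriv l) (t + L) = deriv (deriv l) t from l.derivative.derivative.periodic t]

theorem deriv_hadamardQuotient_self (g : SmoothPeriodic L) (t : ℝ) :
    deriv (hadamardQuotient g t) t = deriv (deriv g) t / 2 := by
  have hF : ContDiff ℝ ∞ (Function.uncurry fun r u : ℝ => deriv g (t + u * (r - t))) :=
    g.derivative.contDiff.comp (by fun_prop : ContDiff ℝ ∞ fun p : ℝ × ℝ => t + p.2 * (p.1 - t))
  have hderiv (u : ℝ) :
      deriv (fun r => deriv g (t + u * (r - t))) t = (u : ℂ) * deriv (deriv g) t := by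
    have hr : HasDerivAt (fun r : ℝ => t + u * (r - t)) u t := by
      simpa using (((hasDerivAt_id t).sub_const t).const_mul u).const_add t
    refine ((g.derivative.hasDerivAt (t + u * (t - t))).scomp t hr).deriv.trans ?_
    rw [sub_self, mul_zero, add_zero, Complex.real_smul]
    rfl
  refine (hasDerivAt_intervalIntegral hF 0 1 t).deriv.trans ?_
  simp only [hderiv]
  rw [intervalIntegral.integral_mul_const, intervalIntegral.integral_ofReal, integral_id]
  norm_num
  ring

section DoubleLayerKernel

variable (hl : IsRegularLoop l)

include hl

/- Since `l t - l s = (t - s) H(s, t)` with `H` smooth and nonzero near the diagonal, the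
logarithmic derivatives of `l t - l s` and `H` in `t` differ by the real number `1 / (t - s)`. -/
theorem doubleLayerKernel_eq_im_logDeriv_hadamardQuotient {m : ℤ} {s t : ℝ}
    (hne : hadamardQuotient l (s + m * L) t ≠ 0) :
    doubleLayerKernel l s t = (logDeriv (hadamardQuotient l (s + m * L)) t).im := by
  obtain rfl | hst := eq_or_ne t (s + m * L)
  · rw [doubleLayerKernel_of_eq (hl.apply_eq_iff.2 ⟨m, rfl⟩), logDeriv_apply,
      hadamardQuotient_self, deriv_hadamardQuotient_self, div_div]
  have hst' : ((t - (s + m * L) : ℝ) : ℂ) ≠ 0 := Complex.ofReal_ne_zero.2 (sub_ne_zero.2 hst)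
  have hsub (r : ℝ) := sub_eq_mul_hadamardQuotient l.contDiff (s + m * L) r
  simp only [l.periodic.int_mul m s] at hsub
  have hH : DifferentiableAt ℝ (hadamardQuotient l (s + m * L)) t :=
    (contDiff_apply_left (contDiff_hadamardQuotient l.contDiff) _).differentiable (by simp) t
  have hid : HasDerivAt (fun r : ℝ => ((r - (s + m * L) : ℝ) : ℂ)) 1 t := by
    simpa using ((hasDerivAt_id t).sub_const (s + m * L)).ofReal_comp
  have hlog : deriv l t / (l t - l s) =
      ((1 / (t - (s + m * L)) : ℝ) : ℂ) + logDeriv (hadamardQuotient l (s + m * L)) t := by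
    have := logDeriv_mul t hst' hne hid.differentiableAt hH
    rw [← funext hsub, logDeriv_apply, logDeriv_apply, hid.deriv, deriv_sub_const] at this
    simpa using this
  rw [doubleLayerKernel_of_ne (sub_ne_zero.1 (hsub t ▸ mul_ne_zero hst' hne)), hlog, Complex.add_im,
    Complex.ofReal_im, zero_add]

theorem contDiff_doubleLayerKernel :
    ContDiff ℝ ∞ (Function.uncurry (doubleLayerKernel l)) := by
  rw [contDiff_iff_contDiffAt]
  rintro ⟨s, t⟩
  by_cases hst : l t = l s
  · obtain ⟨m, rfl⟩ := hl.apply_eq_iff.1 hst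
    have hshift : ContDiff ℝ ∞ fun p : ℝ × ℝ => (p.1 + m * L, p.2) := by fun_prop
    have hH := contDiff_hadamardQuotient l.contDiff
    have hne : hadamardQuotient l (s + m * L) (s + m * L) ≠ 0 := by
      rw [hadamardQuotient_self]
      exact hl.deriv_ne_zero _
    refine (Complex.imCLM.contDiff.contDiffAt.comp _
      (((contDiff_deriv_right hH).comp hshift).contDiffAt.mul
        (ContDiffAt.inv (x := (s, s + m * L))
          (hH.comp hshift).contDiffAt hne))).congr_of_eventuallyEq ?_
    filter_upwards [(hH.comp hshift).continuous.continuousAt.eventually_ne hne] with p hp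
    exact (doubleLayerKernel_eq_im_logDeriv_hadamardQuotient hl hp).trans
      (congrArg Complex.im (div_eq_mul_inv _ _))
  · have hsub : ContDiff ℝ ∞ fun p : ℝ × ℝ => l p.2 - l p.1 :=
      (l.contDiff.comp contDiff_snd).sub (l.contDiff.comp contDiff_fst)
    have hne := sub_ne_zero.2 hst
    refine (Complex.imCLM.contDiff.contDiffAt.comp _
      ((l.derivative.contDiff.comp contDiff_snd).contDiffAt.mul
        (hsub.contDiffAt.inv hne))).congr_of_eventuallyEq ?_
    filter_upwards [hsub.continuous.continuousAt.eventually_ne (x := (s, t)) hne] with p hp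
    exact (doubleLayerKernel_of_ne (sub_ne_zero.1 hp)).trans
      (congrArg Complex.im (div_eq_mul_inv _ _))

theorem continuous_doubleLayerKernel (s : ℝ) : Continuous (doubleLayerKernel l s) :=
  (contDiff_apply_left (contDiff_doubleLayerKernel hl) s).continuous

omit hl in
theorem deriv_doubleLayerKernel_left {s t : ℝ} (hst : l t ≠ l s) :
    deriv (fun s => doubleLayerKernel l s t) s = (deriv l t * deriv l s / (l t - l s) ^ 2).im := by
  have hquot := (hasDerivAt_const s (deriv l t)).div ((l.hasDerivAt s).const_sub (l t))
    (sub_ne_zero.2 hst)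
  have hev : (fun s => doubleLayerKernel l s t) =ᶠ[𝓝 s] fun s => (deriv l t / (l t - l s)).im := by
    filter_upwards [l.continuous.continuousAt.eventually_ne hst.symm] with r hr
    exact doubleLayerKernel_of_ne (Ne.symm hr)
  rw [hev.deriv_eq]
  exact (Complex.imCLM.hasFDerivAt.comp_hasDerivAt s hquot).deriv.trans (by simp)

omit hl in
theorem deriv_doubleLayerKernel_left_comm {s t : ℝ} (hst : l t ≠ l s) :
    deriv (fun r => doubleLayerKernel l r t) s = deriv (fun r => doubleLayerKernel l r s) t := by
  rw [deriv_doubleLayerKernel_left hst, deriv_doubleLayerKernel_left hst.symm, mul_comm,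
    ← neg_sub (l s), neg_sq]

/- By symmetry `∂ₛ κ(s, t)` integrates in `t` to the increment of a periodic function. -/
theorem integral_doubleLayerKernel_eq (s s' : ℝ) :
    ∫ t in (0 : ℝ)..L, doubleLayerKernel l s t = ∫ t in (0 : ℝ)..L, doubleLayerKernel l s' t := by
  have hκ := contDiff_doubleLayerKernel hl
  have hzero (s : ℝ) :
      ∫ t in (0 : ℝ)..L, deriv (fun r => doubleLayerKernel l r t) s = 0 := by
    have hs : ContDiff ℝ ∞ fun r => doubleLayerKernel l r s :=
      contDiff_apply_left (contDiff_flip hκ) s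
    rw [intervalIntegral.integral_congr_ae (g := deriv fun r => doubleLayerKernel l r s)
        ((hl.ae_apply_ne s).mono fun t ht _ => deriv_doubleLayerKernel_left_comm ht),
      intervalIntegral.integral_deriv_eq_sub (fun t _ => hs.differentiable (by simp) t)
        ((contDiff_infty_iff_deriv.1 hs).2.continuous.intervalIntegrable _ _),
      sub_eq_zero, ← doubleLayerKernel_add_period_left l 0 s, zero_add]
  have hderiv (s : ℝ) :
      HasDerivAt (fun s => ∫ t in (0 : ℝ)..L, doubleLayerKernel l s t) 0 s := by
    simpa only [hzero] using hasDerivAt_intervalIntegral hκ 0 L s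
  exact is_const_of_deriv_eq_zero (fun s => (hderiv s).differentiableAt)
    (fun s => (hderiv s).deriv) s s'

end DoubleLayerKernel

/-! ### The total angle seen from a point of the curve -/

/- The curve `φ` stays in the slit plane and turns from the direction `w` to `-w`, both on the
imaginary axis. -/
theorem abs_integral_eq_pi_of_slitPlane {φ : ℝ → ℂ} {k c : ℝ → ℝ} {a b : ℝ} {w : ℂ} (hab : a < b)
    (hk : Continuous k) (hφ : ∀ t ∈ Ioo a b, φ t ∈ Complex.slitPlane)
    (hφ' : ∀ t ∈ Ioo a b, DifferentiableAt ℝ φ t)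
    (hφk : ∀ t ∈ Ioo a b, (logDeriv φ t).im = k t) (hc : ∀ t ∈ Ioo a b, 0 < c t)
    (hw : w.re = 0) (hw₀ : w ≠ 0) (ha : Tendsto (fun t => c t • φ t) (𝓝[>] a) (𝓝 w))
    (hb : Tendsto (fun t => c t • φ t) (𝓝[<] b) (𝓝 (-w))) : |∫ t in a..b, k t| = π := by
  have hwim : w.im ≠ 0 := fun him => hw₀ (Complex.ext hw him)
  have harg {F : Filter ℝ} (hF : Ioo a b ∈ F) {v : ℂ} (hv : v.im ≠ 0)
      (hlim : Tendsto (fun t => c t • φ t) F (𝓝 v)) :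
      Tendsto (fun t => (Complex.log (φ t)).im) F (𝓝 v.arg) := by
    refine ((Complex.continuousAt_arg (Or.inr hv)).tendsto.comp hlim).congr' ?_
    filter_upwards [hF] with t ht
    rw [Function.comp_apply, Complex.real_smul, Complex.arg_real_mul _ (hc t ht), Complex.log_im]
  have hderiv (t : ℝ) (ht : t ∈ Ioo a b) :
      HasDerivAt (fun t => (Complex.log (φ t)).im) (k t) t :=
    hφk t ht ▸ Complex.imCLM.hasFDerivAt.comp_hasDerivAt t
      ((hφ' t ht).hasDerivAt.clog_real (hφ t ht))
  rw [intervalIntegral.integral_eq_sub_of_hasDerivAt_of_tendsto hab hderiv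
    (hk.intervalIntegrable a b) (harg (Ioo_mem_nhdsGT hab) hwim ha)
    (harg (Ioo_mem_nhdsLT hab) (by simpa using hwim) hb)]
  rcases hwim.lt_or_gt with hneg | hpos
  · rw [Complex.arg_eq_neg_pi_div_two_iff.2 ⟨hw, hneg⟩,
      Complex.arg_eq_pi_div_two_iff.2 ⟨by simp [hw], by simpa using hneg⟩, sub_neg_eq_add,
      add_halves, abs_of_pos pi_pos]
  · rw [Complex.arg_eq_pi_div_two_iff.2 ⟨hw, hpos⟩,
      Complex.arg_eq_neg_pi_div_two_iff.2 ⟨by simp [hw], by simpa using hpos⟩, ← neg_add',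
      add_halves, abs_neg, abs_of_pos pi_pos]

theorem exists_forall_ge_of_periodic {f : ℝ → ℝ} (hf : Continuous f) (hper : Function.Periodic f L)
    (hL : 0 < L) : ∃ s, ∀ t, f s ≤ f t := by
  obtain ⟨_, ⟨s, rfl⟩, hs⟩ :=
    (hper.compact_of_continuous hL.ne' hf).exists_isLeast (range_nonempty f)
  exact ⟨s, fun t => hs (mem_range_self t)⟩

theorem integral_doubleLayerKernel_eq_integral_add (l : SmoothPeriodic L) (s : ℝ) :
    ∫ t in (0 : ℝ)..L, doubleLayerKernel l s t = ∫ t in s..(s + L), doubleLayerKernel l s t := by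
  have hper : Function.Periodic (doubleLayerKernel l s) L := doubleLayerKernel_add_period_right l s
  simpa using hper.intervalIntegral_add_eq 0 s

/-- A loop is positively oriented if the total angle under which it is seen from any of its points
is `π`, rather than `-π`. -/
def IsPositivelyOriented (l : SmoothPeriodic L) : Prop :=
  ∀ s, ∫ t in (0 : ℝ)..L, doubleLayerKernel l s t = π

theorem re_div_pos_of_norm_sub_le {p d : ℂ} (hd : d ≠ 0) (hpd : ‖p - d‖ ≤ ‖p‖) :
    0 < (p / d).re := by
  have hsq : ‖p / d - 1‖ ^ 2 ≤ ‖p / d‖ ^ 2 := by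
    rw [div_sub_one hd, norm_div, norm_div]
    gcongr
  simp only [← Complex.normSq_eq_norm_sq, Complex.normSq_sub, map_one, mul_one] at hsq
  linarith

section TotalAngle

theorem tendsto_chord_nhdsGT (l : SmoothPeriodic L) (hL : L ≠ 0) (s : ℝ) :
    Tendsto (fun t => ((t - s) * (s + L - t))⁻¹ • (l t - l s)) (𝓝[>] s) (𝓝 (L⁻¹ • deriv l s)) := by
  have hinv : Tendsto (fun t => (s + L - t)⁻¹) (𝓝 s) (𝓝 L⁻¹) := by
    have : ContinuousAt (fun t => (s + L - t)⁻¹) s :=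
      ContinuousAt.inv₀ (by fun_prop) (by simpa using hL)
    simpa [ContinuousAt] using this
  refine ((hinv.mono_left nhdsWithin_le_nhds).smul
    ((hasDerivAt_iff_tendsto_slope.1 (l.hasDerivAt s)).mono_left (nhdsGT_le_nhdsNE s))).congr
      fun t => ?_
  rw [slope_def_module, smul_smul, mul_inv_rev]

theorem tendsto_chord_nhdsLT (l : SmoothPeriodic L) (hL : L ≠ 0) (s : ℝ) :
    Tendsto (fun t => ((t - s) * (s + L - t))⁻¹ • (l t - l s)) (𝓝[<] (s + L))
      (𝓝 (-(L⁻¹ • deriv l s))) := by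
  have hinv : Tendsto (fun t => (t - s)⁻¹) (𝓝 (s + L)) (𝓝 L⁻¹) := by
    have : ContinuousAt (fun t => (t - s)⁻¹) (s + L) :=
      ContinuousAt.inv₀ (by fun_prop) (by simpa using hL)
    simpa [ContinuousAt] using this
  have hslope := (hasDerivAt_iff_tendsto_slope.1 (l.hasDerivAt (s + L))).mono_left
    (nhdsLT_le_nhdsNE (s + L))
  rw [show deriv l (s + L) = deriv l s from l.derivative.periodic s] at hslope
  refine ((hinv.mono_left nhdsWithin_le_nhds).smul hslope).neg.congr fun t => ?_
  rw [slope_def_module, smul_smul, ← neg_smul, ← mul_neg, ← inv_neg, neg_sub, mul_inv, l.periodic]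

theorem exists_forall_norm_sub_le_norm_sub (l : SmoothPeriodic L) (hL : 0 < L) (z₀ : ℂ) :
    ∃ s₀, (∀ t, ‖l s₀ - z₀‖ ≤ ‖l t - z₀‖) ∧ ((l s₀ - z₀) / deriv l s₀).re = 0 := by
  obtain ⟨s₀, hs₀⟩ := exists_forall_ge_of_periodic (f := fun t => ‖l t - z₀‖ ^ 2) (by fun_prop)
    (fun t => by simp [l.periodic t]) hL
  refine ⟨s₀, fun t => (sq_le_sq₀ (norm_nonneg _) (norm_nonneg _)).1 (hs₀ t), ?_⟩
  have hmin := IsLocalMin.hasDerivAt_eq_zero (.of_forall hs₀)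
    ((l.hasDerivAt s₀).sub_const z₀).norm_sq
  rw [Complex.inner, Complex.mul_re, Complex.conj_re, Complex.conj_im] at hmin
  rw [Complex.div_re, ← add_div]
  refine div_eq_zero_iff.2 (Or.inl ?_)
  linear_combination hmin / 2

theorem integral_im_deriv_div_sub {z₀ : ℂ} (hz₀ : ∀ t, l t ≠ z₀)
    (hwind : ∫ t in (0 : ℝ)..L, deriv l t / (l t - z₀) = 2 * π * Complex.I) (s : ℝ) :
    ∫ t in s..(s + L), (deriv l t / (l t - z₀)).im = 2 * π := by
  have hper : Function.Periodic (fun t => (deriv l t / (l t - z₀)).im) L := fun t => by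
    simp only [l.periodic t, show deriv l (t + L) = deriv l t from l.derivative.periodic t]
  rw [hper.intervalIntegral_add_eq s 0, zero_add]
  have him := Complex.imCLM.intervalIntegral_comp_comm (μ := volume)
    ((l.continuous_deriv.div (by fun_prop) fun t => sub_ne_zero.2 (hz₀ t)).intervalIntegrable 0 L)
  exact him.trans (by simp [hwind])

variable (hl : IsRegularLoop l)

include hl

theorem IsRegularLoop.apply_ne_of_mem_Ioo {s t : ℝ} (ht : t ∈ Ioo s (s + L)) : l t ≠ l s := by
  intro hts
  obtain ⟨m, rfl⟩ := hl.apply_eq_iff.1 hts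
  have hm₀ : 0 < (m : ℝ) := pos_of_mul_pos_left (by linarith [ht.1]) hl.pos.le
  have hm₁ : (m : ℝ) < 1 := by
    have := ht.2
    rwa [add_lt_add_iff_left, mul_lt_iff_lt_one_left hl.pos] at this
  norm_cast at hm₀ hm₁
  omega

/- From the lowest point of the curve the rest of it is seen in the upper half plane. -/
theorem abs_integral_doubleLayerKernel (s : ℝ) :
    |∫ t in (0 : ℝ)..L, doubleLayerKernel l s t| = π := by
  obtain ⟨s₀, hs₀⟩ := exists_forall_ge_of_periodic (f := fun t => (l t).im) (by fun_prop)
    (fun t => by simp [l.periodic t]) hl.pos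
  have him : (deriv l s₀).im = 0 := IsLocalMin.hasDerivAt_eq_zero (.of_forall hs₀)
    (Complex.imCLM.hasFDerivAt.comp_hasDerivAt s₀ (l.hasDerivAt s₀))
  rw [integral_doubleLayerKernel_eq hl s s₀, integral_doubleLayerKernel_eq_integral_add]
  have hsub (t : ℝ) : HasDerivAt (fun t => l t - l s₀) (deriv l t) t := (l.hasDerivAt t).sub_const _
  refine abs_integral_eq_pi_of_slitPlane (φ := fun t => -Complex.I * (l t - l s₀))
    (c := fun t => ((t - s₀) * (s₀ + L - t))⁻¹) (w := -Complex.I * (L⁻¹ • deriv l s₀))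
    (by linarith [hl.pos]) (continuous_doubleLayerKernel hl s₀) (fun t ht => ?_)
    (fun t _ => ((hsub t).const_mul _).differentiableAt) (fun t ht => ?_)
    (fun t ht => inv_pos.2 (mul_pos (sub_pos.2 ht.1) (sub_pos.2 ht.2))) (by simp [him])
    (by simp [hl.pos.ne', hl.deriv_ne_zero s₀]) ?_ ?_
  · have hne := hl.apply_ne_of_mem_Ioo ht
    refine Complex.mem_slitPlane_iff.2 ((hs₀ t).lt_or_eq.imp (fun hlt => by simpa using hlt)
      fun heq hre => hne (Complex.ext ?_ heq.symm))
    exact (sub_eq_zero.1 (by simpa using hre)).symm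
  · rw [logDeriv_const_mul t _ (neg_ne_zero.2 Complex.I_ne_zero), logDeriv_apply, (hsub t).deriv,
      doubleLayerKernel_of_ne (hl.apply_ne_of_mem_Ioo ht)]
  · simpa only [mul_smul_comm] using (tendsto_chord_nhdsGT l hl.pos.ne' s₀).const_mul (-Complex.I)
  · simpa only [mul_smul_comm, mul_neg] using
      (tendsto_chord_nhdsLT l hl.pos.ne' s₀).const_mul (-Complex.I)

/- If `l s₀` is the point of the curve closest to `z₀`, the quotient `(l t - z₀) / (l t - l s₀)` has
positive real part. -/
theorem abs_two_pi_sub_integral_doubleLayerKernel {z₀ : ℂ} (hz₀ : ∀ t, l t ≠ z₀)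
    (hwind : ∫ t in (0 : ℝ)..L, deriv l t / (l t - z₀) = 2 * π * Complex.I) (s : ℝ) :
    |2 * π - ∫ t in (0 : ℝ)..L, doubleLayerKernel l s t| = π := by
  obtain ⟨s₀, hs₀, hre⟩ := exists_forall_norm_sub_le_norm_sub l hl.pos z₀
  have hsub (z : ℂ) (t : ℝ) : HasDerivAt (fun t => l t - z) (deriv l t) t :=
    (l.hasDerivAt t).sub_const _
  have hk : Continuous fun t => (deriv l t / (l t - z₀)).im := Complex.continuous_im.comp
    (l.continuous_deriv.div (by fun_prop) fun t => sub_ne_zero.2 (hz₀ t))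
  have hκ := continuous_doubleLayerKernel hl s₀
  have hnum : Continuous fun t => l t - z₀ := by fun_prop
  have hne₀ : L⁻¹ • deriv l s₀ ≠ 0 := smul_ne_zero (inv_ne_zero hl.pos.ne') (hl.deriv_ne_zero s₀)
  have hscale (c : ℝ) (p d : ℂ) : p / (c⁻¹ • d) = c • (p / d) := by
    rw [div_eq_mul_inv, smul_inv₀, inv_inv, mul_smul_comm, div_eq_mul_inv]
  rw [integral_doubleLayerKernel_eq hl s s₀, integral_doubleLayerKernel_eq_integral_add,
    ← integral_im_deriv_div_sub hz₀ hwind s₀,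
    ← intervalIntegral.integral_sub (hk.intervalIntegrable _ _) (hκ.intervalIntegrable _ _)]
  refine abs_integral_eq_pi_of_slitPlane (φ := fun t => (l t - z₀) / (l t - l s₀))
    (c := fun t => (t - s₀) * (s₀ + L - t)) (w := (l s₀ - z₀) / (L⁻¹ • deriv l s₀))
    (by linarith [hl.pos]) (hk.sub hκ) (fun t ht => ?_)
    (fun t ht => (hsub z₀ t).differentiableAt.div (hsub _ t).differentiableAt
      (sub_ne_zero.2 (hl.apply_ne_of_mem_Ioo ht)))
    (fun t ht => ?_) (fun t ht => mul_pos (sub_pos.2 ht.1) (sub_pos.2 ht.2))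
    (by rw [hscale, Complex.smul_re, hre, smul_zero])
    (div_ne_zero (sub_ne_zero.2 (hz₀ s₀)) hne₀) ?_ ?_
  · refine Complex.mem_slitPlane_iff.2 (Or.inl (re_div_pos_of_norm_sub_le
      (sub_ne_zero.2 (hl.apply_ne_of_mem_Ioo ht)) ?_))
    rw [sub_sub_sub_cancel_left]
    exact hs₀ t
  · have hne := hl.apply_ne_of_mem_Ioo ht
    rw [logDeriv_div (f := fun t => l t - z₀) (g := fun t => l t - l s₀) t
      (sub_ne_zero.2 (hz₀ t)) (sub_ne_zero.2 hne) (hsub z₀ t).differentiableAt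
      (hsub _ t).differentiableAt, logDeriv_apply, logDeriv_apply, (hsub z₀ t).deriv,
      (hsub _ t).deriv, Complex.sub_im, doubleLayerKernel_of_ne hne]
  · exact (((hnum.tendsto s₀).mono_left nhdsWithin_le_nhds).div
      (tendsto_chord_nhdsGT l hl.pos.ne' s₀) hne₀).congr fun t => hscale _ _ _
  · have hlim := ((hnum.tendsto (s₀ + L)).mono_left nhdsWithin_le_nhds).div
      (tendsto_chord_nhdsLT l hl.pos.ne' s₀) (neg_ne_zero.2 hne₀)
    rw [l.periodic, div_neg] at hlim
    exact hlim.congr fun t => hscale _ _ _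

/- A total angle that is `±π` and stays so when subtracted from `2π` is `π`. -/
theorem isPositivelyOriented_of_winding {z₀ : ℂ} (hz₀ : ∀ t, l t ≠ z₀)
    (hwind : ∫ t in (0 : ℝ)..L, deriv l t / (l t - z₀) = 2 * π * Complex.I) :
    IsPositivelyOriented l := by
  intro s
  have hsub := abs_two_pi_sub_integral_doubleLayerKernel hl hz₀ hwind s
  rcases (abs_eq pi_pos.le).1 (abs_integral_doubleLayerKernel hl s) with h | h
  · exact h
  · rw [h, abs_of_pos (by linarith [pi_pos])] at hsub
    linarith [pi_pos]

end TotalAngle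

/-! ### The regularized Cauchy transform on the curve -/

/-- Lebesgue measure on the square of a period. -/
noncomputable abbrev square (L : ℝ) : Measure (ℝ × ℝ) :=
  (volume.restrict (Ioc 0 L)).prod (volume.restrict (Ioc 0 L))

section Square

variable {E : Type*} [NormedAddCommGroup E] {F : ℝ × ℝ → E}

theorem integrable_square (hF : Continuous F) : Integrable F (square L) := by
  rw [square, Measure.prod_restrict]
  exact (hF.continuousOn.integrableOn_compact (isCompact_Icc.prod isCompact_Icc)).mono_set
    (prod_mono Ioc_subset_Icc_self Ioc_subset_Icc_self)

theorem integral_square [NormedSpace ℝ E] (hL : 0 ≤ L) (hF : Continuous F) :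
    ∫ p, F p ∂square L = ∫ s in (0 : ℝ)..L, ∫ t in (0 : ℝ)..L, F (s, t) := by
  simp only [intervalIntegral.integral_of_le hL]
  exact integral_prod F (integrable_square hF)

theorem integral_interval_swap [NormedSpace ℝ E] {F : ℝ → ℝ → E} (hL : 0 ≤ L)
    (hF : Continuous (Function.uncurry F)) :
    ∫ s in (0 : ℝ)..L, ∫ t in (0 : ℝ)..L, F s t = ∫ t in (0 : ℝ)..L, ∫ s in (0 : ℝ)..L, F s t := by
  simp only [intervalIntegral.integral_of_le hL]
  exact integral_integral_swap (integrable_square hF)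

theorem ae_square_apply_ne (hl : IsRegularLoop l) : ∀ᵐ p ∂square L, l p.2 ≠ l p.1 := by
  refine (Measure.ae_prod_iff_ae_ae ?_).2 (.of_forall fun s =>
    ae_restrict_of_ae (hl.ae_apply_ne s))
  exact (isClosed_eq (by fun_prop) (by fun_prop)).measurableSet.compl

theorem integral_sub_mul_of_antisymm {G : ℝ → ℂ} {k : ℝ → ℝ → ℂ} (hG : Continuous G)
    (hk : Continuous (Function.uncurry k)) (hanti : ∀ s t, k t s = -k s t) :
    ∫ p, (G p.2 - G p.1) * k p.1 p.2 ∂square L = -2 * ∫ p, G p.1 * k p.1 p.2 ∂square L := by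
  have hswap : ∫ p, G p.2 * k p.1 p.2 ∂square L = -∫ p, G p.1 * k p.1 p.2 ∂square L := by
    rw [← integral_neg, ← integral_prod_swap]
    refine integral_congr_ae (.of_forall fun p => ?_)
    simp only [Prod.fst_swap, Prod.snd_swap, hanti p.1 p.2, mul_neg]
  have hk' : Continuous fun p : ℝ × ℝ => k p.1 p.2 := hk
  simp only [sub_mul]
  rw [integral_sub (integrable_square (by fun_prop)) (integrable_square (by fun_prop)), hswap]
  ring

end Square

theorem tendsto_integral_div_add_smul {α E : Type*} [MeasurableSpace α] {μ : Measure α}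
    [NormedAddCommGroup E] [NormedSpace ℝ E] {ρ : α → ℝ} {F : α → E}
    (hρ : AEStronglyMeasurable ρ μ) (hpos : ∀ᵐ x ∂μ, 0 < ρ x) (hF : Integrable F μ) :
    Tendsto (fun ε : ℝ => ∫ x, (ρ x / (ρ x + ε)) • F x ∂μ) (𝓝[>] 0) (𝓝 (∫ x, F x ∂μ)) := by
  refine tendsto_integral_filter_of_dominated_convergence (fun x => ‖F x‖)
    (.of_forall fun ε => ?_) ?_ hF.norm ?_
  · exact (hρ.aemeasurable.div (hρ.aemeasurable.add_const ε)).aestronglyMeasurable.smul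
      hF.aestronglyMeasurable
  · filter_upwards [self_mem_nhdsWithin] with ε (hε : 0 < ε)
    filter_upwards [hpos] with x hx
    rw [norm_smul, Real.norm_of_nonneg (by positivity)]
    exact mul_le_of_le_one_left (norm_nonneg _) ((div_le_one (by positivity)).2 (by linarith))
  · filter_upwards [hpos] with x hx
    have hlim : Tendsto (fun ε : ℝ => ρ x / (ρ x + ε)) (𝓝 0) (𝓝 1) := by
      have : ContinuousAt (fun ε : ℝ => ρ x / (ρ x + ε)) 0 :=
        ContinuousAt.div (by fun_prop) (by fun_prop) (by simpa using hx.ne')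
      simpa [ContinuousAt, hx.ne'] using this
    simpa using (hlim.mono_left nhdsWithin_le_nhds).smul_const (F x)

/-- The square of the length of the chord between two points of the curve. -/
noncomputable def sqChord (l : ℝ → ℂ) (s t : ℝ) : ℝ := Complex.normSq (l t - l s)

theorem sqChord_nonneg (l : ℝ → ℂ) (s t : ℝ) : 0 ≤ sqChord l s t := Complex.normSq_nonneg _

theorem sqChord_comm (l : ℝ → ℂ) (s t : ℝ) : sqChord l s t = sqChord l t s := by
  rw [sqChord, ← neg_sub, Complex.normSq_neg, sqChord]

theorem continuous_sqChord (l : SmoothPeriodic L) :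
    Continuous fun p : ℝ × ℝ => sqChord l p.1 p.2 := by
  unfold sqChord
  fun_prop

theorem sqChord_add_pos (l : ℝ → ℂ) (s t : ℝ) {ε : ℝ} (hε : 0 < ε) : 0 < sqChord l s t + ε :=
  add_pos_of_nonneg_of_pos (sqChord_nonneg l s t) hε

theorem hasDerivAt_sqChord (l : SmoothPeriodic L) (s t : ℝ) :
    HasDerivAt (sqChord l s) (2 * (deriv l t * conj (l t - l s)).re) t := by
  have := ((l.hasDerivAt t).sub_const (l s)).norm_sq
  simp only [Complex.inner, ← Complex.normSq_eq_norm_sq] at this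
  exact this

theorem deriv_mul_conj_chord (l : ℝ → ℂ) (s t : ℝ) : deriv l t * conj (l t - l s) =
    ((deriv l t * conj (l t - l s)).re : ℂ) +
      Complex.I * doubleLayerKernel l s t * (sqChord l s t : ℂ) := by
  by_cases hst : l t = l s
  · simp [hst, sqChord]
  have him : (deriv l t * conj (l t - l s)).im = doubleLayerKernel l s t * sqChord l s t := by
    have hne := sub_ne_zero.2 hst
    rw [doubleLayerKernel_of_ne hst, sqChord, ← Complex.im_mul_ofReal, ← Complex.mul_conj,
      ← mul_assoc, div_mul_cancel₀ _ hne]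
  conv_lhs => rw [← Complex.re_add_im (deriv l t * conj (l t - l s)), him]
  push_cast
  ring

theorem dividedDifference_add (l : ℝ → ℂ) (f g : SmoothPeriodic L) (s t : ℝ) :
    dividedDifference l (f + g : SmoothPeriodic L) s t =
      dividedDifference l f s t + dividedDifference l g s t := by
  simp only [dividedDifference, ((f.hasDerivAt t).add (g.hasDerivAt t)).deriv,
    AddMemClass.coe_add, Pi.add_apply]
  split_ifs <;> ring

theorem dividedDifference_smul (l : ℝ → ℂ) (c : ℂ) (g : SmoothPeriodic L) (s t : ℝ) :
    dividedDifference l (c • g : SmoothPeriodic L) s t = c * dividedDifference l g s t := by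
  have hderiv : deriv (c • g : SmoothPeriodic L) t = c * deriv g t :=
    ((g.hasDerivAt t).const_mul c).deriv
  have happly (r : ℝ) : (c • g : SmoothPeriodic L) r = c * g r := rfl
  simp only [dividedDifference, hderiv, happly]
  split_ifs <;> ring

section CauchyTransform

variable (hl : IsRegularLoop l)

include hl

/- The real parts of the two sides differ by the derivative of `log (ρ + ε) / 2`. -/
theorem integral_deriv_mul_conj_chord_div (s : ℝ) {ε : ℝ} (hε : 0 < ε) :
    ∫ t in (0 : ℝ)..L, deriv l t * conj (l t - l s) / (sqChord l s t + ε : ℝ) =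
      ∫ t in (0 : ℝ)..L, (sqChord l s t / (sqChord l s t + ε)) •
        (Complex.I * doubleLayerKernel l s t) := by
  have hκ := continuous_doubleLayerKernel hl s
  have hρ : Continuous (sqChord l s) := (continuous_sqChord l).comp (Continuous.prodMk_right s)
  have hne (t : ℝ) : sqChord l s t + ε ≠ 0 := (sqChord_add_pos l s t hε).ne'
  have hre : Continuous fun t => (deriv l t * conj (l t - l s)).re / (sqChord l s t + ε) :=
    Continuous.div (by fun_prop) (by fun_prop) hne
  have : Continuous fun t => sqChord l s t / (sqChord l s t + ε) :=
    hρ.div (by fun_prop) hne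
  have hzero : ∫ t in (0 : ℝ)..L, (deriv l t * conj (l t - l s)).re / (sqChord l s t + ε) = 0 := by
    have hderiv (t : ℝ) : HasDerivAt (fun t => Real.log (sqChord l s t + ε) / 2)
        ((deriv l t * conj (l t - l s)).re / (sqChord l s t + ε)) t :=
      ((((hasDerivAt_sqChord l s t).add_const ε).log (hne t)).div_const 2).congr_deriv (by ring)
    rw [intervalIntegral.integral_eq_sub_of_hasDerivAt (fun t _ => hderiv t)
      (hre.intervalIntegrable _ _), sub_eq_zero, sqChord, sqChord, ← l.periodic 0, zero_add]
  have hsplit (t : ℝ) : deriv l t * conj (l t - l s) / (sqChord l s t + ε : ℝ) =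
      ((deriv l t * conj (l t - l s)).re / (sqChord l s t + ε) : ℝ) +
        (sqChord l s t / (sqChord l s t + ε)) • (Complex.I * doubleLayerKernel l s t) := by
    conv_lhs => rw [deriv_mul_conj_chord]
    rw [Complex.real_smul, add_div, Complex.ofReal_div, Complex.ofReal_div]
    ring
  simp only [hsplit]
  rw [intervalIntegral.integral_add, intervalIntegral.integral_ofReal, hzero, Complex.ofReal_zero,
    zero_add]
  · exact (Complex.continuous_ofReal.comp hre).intervalIntegrable _ _
  · exact Continuous.intervalIntegrable (by fun_prop) _ _

theorem continuous_dividedDifference (g : SmoothPeriodic L) :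
    Continuous fun p : ℝ × ℝ => dividedDifference l g p.1 p.2 :=
  (contDiff_dividedDifference hl g).continuous

theorem continuous_dividedDifference_mul_deriv (g : SmoothPeriodic L) (s : ℝ) :
    Continuous fun t => dividedDifference l g s t * deriv l t :=
  ((continuous_dividedDifference hl g).comp (Continuous.prodMk_right s)).mul l.continuous_deriv

/-- The regularized Cauchy transform `g ↦ (s ↦ ∫ (g t - g s) / (l t - l s) dl t)` on the curve. -/
noncomputable def cauchyTransform : Module.End ℂ (SmoothPeriodic L) where
  toFun g := ⟨fun s => ∫ t in (0 : ℝ)..L, dividedDifference l g s t * deriv l t,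
    contDiff_intervalIntegral (F := fun s t => dividedDifference l g s t * deriv l t)
      ((contDiff_dividedDifference hl g).mul (l.derivative.contDiff.comp contDiff_snd)) 0 L,
    fun s => by simp only [dividedDifference_congr_left (l.periodic s) (g.periodic s)]⟩
  map_add' f g := by
    ext s
    simp only [dividedDifference_add, add_mul]
    exact intervalIntegral.integral_add
      ((continuous_dividedDifference_mul_deriv hl f s).intervalIntegrable 0 L)
      ((continuous_dividedDifference_mul_deriv hl g s).intervalIntegrable 0 L)
  map_smul' c g := by
    ext s
    simp only [dividedDifference_smul, mul_assoc]
    exact intervalIntegral.integral_const_mul _ _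

theorem cauchyTransform_apply (g : SmoothPeriodic L) (s : ℝ) :
    cauchyTransform hl g s = ∫ t in (0 : ℝ)..L, dividedDifference l g s t * deriv l t := rfl

theorem integral_div_add_smul_dividedDifference (G : SmoothPeriodic L) {ε : ℝ} (hε : 0 < ε) :
    ∫ p, (sqChord l p.1 p.2 / (sqChord l p.1 p.2 + ε)) •
        (dividedDifference l G p.1 p.2 * deriv l p.2 * deriv l p.1) ∂square L =
      -2 * ∫ p, (sqChord l p.1 p.2 / (sqChord l p.1 p.2 + ε)) •
        (G p.1 * deriv l p.1 * (Complex.I * doubleLayerKernel l p.1 p.2)) ∂square L := by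
  have hρ := continuous_sqChord l
  have hκ : Continuous fun p : ℝ × ℝ => doubleLayerKernel l p.1 p.2 :=
    (contDiff_doubleLayerKernel hl).continuous
  have hne (p : ℝ × ℝ) : sqChord l p.1 p.2 + ε ≠ 0 := (sqChord_add_pos l p.1 p.2 hε).ne'
  have : Continuous fun p : ℝ × ℝ => sqChord l p.1 p.2 / (sqChord l p.1 p.2 + ε) :=
    hρ.div (by fun_prop) hne
  let k (s t : ℝ) : ℂ := deriv l s * (deriv l t * conj (l t - l s) / (sqChord l s t + ε : ℝ))
  have hk : Continuous (Function.uncurry k) :=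
    Continuous.mul (by fun_prop) (Continuous.div (by fun_prop) (by fun_prop)
      fun p => Complex.ofReal_ne_zero.2 (hne p))
  have hk' : Continuous fun p : ℝ × ℝ => k p.1 p.2 := hk
  have hanti (s t : ℝ) : k t s = -k s t := by
    simp only [k, sqChord_comm l t s, ← neg_sub (l t) (l s), map_neg]
    ring
  have hquot (p : ℝ × ℝ) : (sqChord l p.1 p.2 / (sqChord l p.1 p.2 + ε)) •
      (dividedDifference l G p.1 p.2 * deriv l p.2 * deriv l p.1) =
        (G p.2 - G p.1) * k p.1 p.2 := by
    rw [← dividedDifference_mul_sub hl G, Complex.real_smul, Complex.ofReal_div]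
    nth_rw 1 [sqChord, ← Complex.mul_conj]
    ring
  simp only [hquot]
  rw [integral_sub_mul_of_antisymm G.continuous hk hanti,
    integral_square hl.pos.le (by fun_prop), integral_square hl.pos.le (by fun_prop)]
  simp only [k, ← mul_smul_comm, intervalIntegral.integral_const_mul, ← mul_assoc (G _)]
  simp only [integral_deriv_mul_conj_chord_div hl _ hε, ← mul_smul_comm,
    intervalIntegral.integral_const_mul]

variable (hor : IsPositivelyOriented l)

include hor

/- Both sides are limits of the integrals weighted by `ρ / (ρ + ε)`, where `ρ` is the squared chord:
the weight allows the numerator `G t - G s` to be split, and each half yields the total angle. -/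
theorem integral_cauchyTransform_mul_deriv (G : SmoothPeriodic L) :
    ∫ s in (0 : ℝ)..L, cauchyTransform hl G s * deriv l s =
      -2 * π * Complex.I * ∫ s in (0 : ℝ)..L, G s * deriv l s := by
  have hκ : Continuous fun p : ℝ × ℝ => doubleLayerKernel l p.1 p.2 :=
    (contDiff_doubleLayerKernel hl).continuous
  have hdd := continuous_dividedDifference hl G
  have hlim {F : ℝ × ℝ → ℂ} (hF : Continuous F) := tendsto_integral_div_add_smul
    (continuous_sqChord l).aestronglyMeasurable
    ((ae_square_apply_ne hl).mono fun p hp => Complex.normSq_pos.2 (sub_ne_zero.2 hp))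
    (integrable_square (L := L) hF)
  have hleft := hlim
    (by fun_prop : Continuous fun p : ℝ × ℝ =>
      dividedDifference l G p.1 p.2 * deriv l p.2 * deriv l p.1)
  have hright := (hlim
    (by fun_prop : Continuous fun p : ℝ × ℝ =>
      G p.1 * deriv l p.1 * (Complex.I * doubleLayerKernel l p.1 p.2))).const_mul (-2)
  have heq := tendsto_nhds_unique
    (hleft.congr' (eventually_mem_nhdsWithin.mono fun ε (hε : ε ∈ Ioi (0 : ℝ)) =>
      integral_div_add_smul_dividedDifference hl G hε)) hright
  rw [integral_square hl.pos.le (by fun_prop), integral_square hl.pos.le (by fun_prop)] at heq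
  simp only [intervalIntegral.integral_const_mul, intervalIntegral.integral_mul_const,
    intervalIntegral.integral_ofReal, hor _] at heq
  refine heq.trans ?_
  ring

theorem cauchyTransform_cauchyTransform (f : SmoothPeriodic L) :
    cauchyTransform hl (cauchyTransform hl f) = (-2 * π * Complex.I) • cauchyTransform hl f := by
  ext s
  let G : SmoothPeriodic L := ⟨dividedDifference l f s,
    contDiff_apply_left (contDiff_dividedDifference hl f) s,
    dividedDifference_add_period_right f s⟩
  have hG (t : ℝ) (ht : l t ≠ l s) :
      dividedDifference l (cauchyTransform hl f) s t = cauchyTransform hl G t := by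
    have hint (s : ℝ) :=
      (continuous_dividedDifference_mul_deriv hl f s).intervalIntegrable (μ := volume) 0 L
    rw [dividedDifference_of_ne ht, cauchyTransform_apply, cauchyTransform_apply,
      cauchyTransform_apply, ← intervalIntegral.integral_sub (hint t) (hint s),
      ← intervalIntegral.integral_div]
    refine intervalIntegral.integral_congr_ae ?_
    filter_upwards [hl.ae_apply_ne s, hl.ae_apply_ne t] with r hrs hrt _
    have hts := sub_ne_zero.2 ht
    simp only [G, dividedDifference_of_ne ht, dividedDifference_of_ne hrs,
      dividedDifference_of_ne hrt]
    have := sub_ne_zero.2 hrs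
    have := sub_ne_zero.2 hrt
    field_simp
    ring
  calc cauchyTransform hl (cauchyTransform hl f) s
      = ∫ t in (0 : ℝ)..L, cauchyTransform hl G t * deriv l t :=
        intervalIntegral.integral_congr_ae
          ((hl.ae_apply_ne s).mono fun t ht _ => congrArg (· * deriv l t) (hG t ht))
    _ = -2 * π * Complex.I * cauchyTransform hl f s :=
        integral_cauchyTransform_mul_deriv hl hor G

end CauchyTransform

/-! ### The real and imaginary parts of the Cauchy transform -/

section RealImaginaryParts

variable {V : Type*} [AddCommGroup V] [Module ℂ V] [StarAddMonoid V] [StarModule ℂ V]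

/-- The operator `v ↦ conj (T (conj v))` conjugate to `T`. -/
def conjOperator (T : Module.End ℂ V) : Module.End ℂ V where
  toFun v := star (T (star v))
  map_add' v w := by simp only [star_add, map_add]
  map_smul' c v := by simp only [star_smul, map_smul, star_star, RingHom.id_apply]

/-- The real part of an operator, that is its component commuting with the conjugation. -/
noncomputable def reOperator (T : Module.End ℂ V) : Module.End ℂ V :=
  (2 : ℂ)⁻¹ • (T + conjOperator T)

/-- The imaginary part of an operator, so that `T = reOperator T + I • imOperator T` with both
parts commuting with the conjugation. -/
noncomputable def imOperator (T : Module.End ℂ V) : Module.End ℂ V :=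
  (2 * Complex.I)⁻¹ • (T - conjOperator T)

theorem conjOperator_apply (T : Module.End ℂ V) (v : V) :
    conjOperator T v = star (T (star v)) := rfl

theorem reOperator_apply (T : Module.End ℂ V) (v : V) :
    reOperator T v = (2 : ℂ)⁻¹ • (T v + star (T (star v))) := rfl

theorem imOperator_apply (T : Module.End ℂ V) (v : V) :
    imOperator T v = (2 * Complex.I)⁻¹ • (T v - star (T (star v))) := rfl

theorem reOperator_star (T : Module.End ℂ V) (v : V) :
    reOperator T (star v) = star (reOperator T v) := by
  simp only [reOperator_apply, star_smul, star_add, star_star, add_comm (T (star v))]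
  simp

theorem imOperator_star (T : Module.End ℂ V) (v : V) :
    imOperator T (star v) = star (imOperator T v) := by
  simp only [imOperator_apply, star_smul, star_sub, star_star, ← neg_sub (T (star v)), smul_neg,
    ← neg_smul]
  simp

variable {T : Module.End ℂ V} {c : ℝ} (hT : T * T = (-2 * c * Complex.I) • T)

include hT

theorem conjOperator_mul_self :
    conjOperator T * conjOperator T = (2 * c * Complex.I) • conjOperator T := by
  ext v
  have := congrArg star (LinearMap.congr_fun hT (star v))
  simpa [conjOperator_apply, star_smul] using this

theorem reOperator_mul_self :
    reOperator T * reOperator T =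
      ((c : ℂ) • 1 + imOperator T) * ((c : ℂ) • 1 + imOperator T) - ((c : ℂ) ^ 2) • 1 := by
  have hT' := conjOperator_mul_self hT
  simp only [reOperator, imOperator, mul_add, add_mul, mul_sub, sub_mul, smul_mul_assoc,
    mul_smul_comm, smul_smul, smul_add, smul_sub, one_mul, mul_one, hT, hT', mul_inv,
    Complex.inv_I]
  match_scalars <;> ring_nf <;> simp <;> ring

theorem reOperator_mul_add_imOperator :
    reOperator T * ((c : ℂ) • 1 + imOperator T) =
      -(((c : ℂ) • 1 + imOperator T) * reOperator T) := by
  have hT' := conjOperator_mul_self hT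
  simp only [reOperator, imOperator, mul_add, add_mul, mul_sub, sub_mul, smul_mul_assoc,
    mul_smul_comm, smul_smul, smul_add, smul_sub, one_mul, mul_one, hT, hT', mul_inv,
    Complex.inv_I]
  match_scalars <;> ring_nf <;> simp

end RealImaginaryParts

section LayerOperators

theorem integral_mul_deriv_eq_neg (u v : SmoothPeriodic L) :
    ∫ t in (0 : ℝ)..L, u t * deriv v t = -∫ t in (0 : ℝ)..L, deriv u t * v t := by
  rw [intervalIntegral.integral_mul_deriv_eq_deriv_mul (fun t _ => u.hasDerivAt t)
    (fun t _ => v.hasDerivAt t) (u.continuous_deriv.intervalIntegrable _ _)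
    (v.continuous_deriv.intervalIntegrable _ _), u.periodic.eq, v.periodic.eq, sub_self, zero_sub]

variable (hl : IsRegularLoop l)

/-- The single layer potential `g ↦ (s ↦ -∫ log |l t - l s| g'(t) dt)`, obtained without singular
integrals as the real part of the Cauchy transform. -/
noncomputable def singleLayer : Module.End ℂ (SmoothPeriodic L) := reOperator (cauchyTransform hl)

/-- The double layer potential `g ↦ (s ↦ ∫ κ(s, t) g(t) dt)` of a positively oriented curve,
obtained from the imaginary part of the Cauchy transform. -/
noncomputable def doubleLayer : Module.End ℂ (SmoothPeriodic L) :=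
  ((π : ℝ) : ℂ) • 1 + imOperator (cauchyTransform hl)

theorem singleLayer_star (g : SmoothPeriodic L) :
    singleLayer hl (star g) = star (singleLayer hl g) := reOperator_star _ _

theorem doubleLayer_star (g : SmoothPeriodic L) :
    doubleLayer hl (star g) = star (doubleLayer hl g) := by
  simp [doubleLayer, imOperator_star, star_smul]

theorem star_cauchyTransform_star_apply (g : SmoothPeriodic L) (s : ℝ) :
    star (cauchyTransform hl (star g)) s =
      ∫ t in (0 : ℝ)..L,
        conj (dividedDifference l (star g : SmoothPeriodic L) s t * deriv l t) := by
  rw [SmoothPeriodic.star_apply, cauchyTransform_apply, intervalIntegral.integral_of_le hl.pos.le,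
    intervalIntegral.integral_of_le hl.pos.le, integral_conj]

/-- The integrand of `singleLayer`, a continuous form of `re (l' t / (l t - l s)) * (g t - g s)`. -/
noncomputable def singleLayerIntegrand (l g : SmoothPeriodic L) (s t : ℝ) : ℂ :=
  (2 : ℂ)⁻¹ * (dividedDifference l g s t * deriv l t +
    conj (dividedDifference l (star g : SmoothPeriodic L) s t * deriv l t))

theorem singleLayer_apply (g : SmoothPeriodic L) (s : ℝ) :
    singleLayer hl g s = ∫ t in (0 : ℝ)..L, singleLayerIntegrand l g s t := by
  have hint (f : SmoothPeriodic L) := continuous_dividedDifference_mul_deriv hl f s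
  have hint' : Continuous fun t =>
      conj (dividedDifference l (star g : SmoothPeriodic L) s t * deriv l t) :=
    Complex.continuous_conj.comp (hint _)
  simp only [singleLayerIntegrand]
  rw [intervalIntegral.integral_const_mul, intervalIntegral.integral_add
    ((hint g).intervalIntegrable _ _) (hint'.intervalIntegrable _ _),
    ← star_cauchyTransform_star_apply, ← cauchyTransform_apply]
  rfl

theorem imOperator_cauchyTransform_apply (g : SmoothPeriodic L) (s : ℝ) :
    imOperator (cauchyTransform hl) g s =
      ∫ t in (0 : ℝ)..L, doubleLayerKernel l s t * (g t - g s) := by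
  have hint (f : SmoothPeriodic L) := continuous_dividedDifference_mul_deriv hl f s
  have hint' : Continuous fun t =>
      conj (dividedDifference l (star g : SmoothPeriodic L) s t * deriv l t) :=
    Complex.continuous_conj.comp (hint _)
  calc imOperator (cauchyTransform hl) g s
      = (2 * Complex.I)⁻¹ * (cauchyTransform hl g s - star (cauchyTransform hl (star g)) s) := rfl
    _ = ∫ t in (0 : ℝ)..L, (2 * Complex.I)⁻¹ * (dividedDifference l g s t * deriv l t -
          conj (dividedDifference l (star g : SmoothPeriodic L) s t * deriv l t)) := by
      rw [intervalIntegral.integral_const_mul, intervalIntegral.integral_sub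
        ((hint g).intervalIntegrable _ _) (hint'.intervalIntegrable _ _),
        star_cauchyTransform_star_apply, cauchyTransform_apply]
    _ = ∫ t in (0 : ℝ)..L, doubleLayerKernel l s t * (g t - g s) := by
      refine intervalIntegral.integral_congr_ae ((hl.ae_apply_ne s).mono fun t ht _ => ?_)
      rw [doubleLayerKernel_of_ne ht, Complex.im_eq_sub_conj, dividedDifference_of_ne ht,
        dividedDifference_of_ne ht]
      simp only [SmoothPeriodic.star_apply, map_mul, map_div₀, map_sub, Complex.conj_conj]
      ring

variable {hl} (hor : IsPositivelyOriented l)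

include hor

theorem doubleLayer_apply (g : SmoothPeriodic L) (s : ℝ) :
    doubleLayer hl g s = ∫ t in (0 : ℝ)..L, doubleLayerKernel l s t * g t := by
  have hκ := continuous_doubleLayerKernel hl s
  have hsplit : imOperator (cauchyTransform hl) g s =
      (∫ t in (0 : ℝ)..L, doubleLayerKernel l s t * g t) - π * g s := by
    simp only [imOperator_cauchyTransform_apply, mul_sub]
    rw [intervalIntegral.integral_sub (Continuous.intervalIntegrable (by fun_prop) _ _)
      (Continuous.intervalIntegrable (by fun_prop) _ _), intervalIntegral.integral_mul_const,
      intervalIntegral.integral_ofReal, hor s]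
  calc doubleLayer hl g s = π * g s + imOperator (cauchyTransform hl) g s := rfl
    _ = ∫ t in (0 : ℝ)..L, doubleLayerKernel l s t * g t := by rw [hsplit, add_sub_cancel]

theorem cauchyTransform_mul_self :
    cauchyTransform hl * cauchyTransform hl = (-2 * π * Complex.I) • cauchyTransform hl :=
  LinearMap.ext fun f => cauchyTransform_cauchyTransform hl hor f

theorem singleLayer_mul_self :
    singleLayer hl * singleLayer hl = doubleLayer hl * doubleLayer hl - (π : ℂ) ^ 2 • 1 :=
  reOperator_mul_self (cauchyTransform_mul_self hor)

theorem singleLayer_mul_doubleLayer :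
    singleLayer hl * doubleLayer hl = -(doubleLayer hl * singleLayer hl) :=
  reOperator_mul_add_imOperator (cauchyTransform_mul_self hor)

theorem deriv_doubleLayer (g : SmoothPeriodic L) (s : ℝ) :
    deriv (doubleLayer hl g) s = -∫ t in (0 : ℝ)..L, doubleLayerKernel l t s * deriv g t := by
  have hκ : ContDiff ℝ ∞ (Function.uncurry fun s t => (doubleLayerKernel l s t : ℂ)) :=
    Complex.ofRealCLM.contDiff.comp (contDiff_doubleLayerKernel hl)
  let κs : SmoothPeriodic L := ⟨fun t => doubleLayerKernel l t s,
    contDiff_apply_left (contDiff_flip hκ) s,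
    fun t => by simp only [doubleLayerKernel_add_period_left]⟩
  have hκg : ContDiff ℝ ∞ (Function.uncurry fun s t => doubleLayerKernel l s t * g t) :=
    hκ.mul (g.contDiff.comp contDiff_snd)
  have hderiv (s t : ℝ) : HasDerivAt (fun r => (doubleLayerKernel l r t : ℂ))
      (deriv (fun r => doubleLayerKernel l r t) s : ℝ) s :=
    ((contDiff_apply_left (contDiff_flip (contDiff_doubleLayerKernel hl)) t).differentiable
      (by simp) s).hasDerivAt.ofReal_comp
  have hswap (t : ℝ) (ht : l t ≠ l s) :
      deriv (fun r => doubleLayerKernel l r t * g t) s = deriv κs t * g t := by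
    rw [((hderiv s t).mul_const (g t)).deriv, deriv_doubleLayerKernel_left_comm ht]
    exact congrArg (· * g t) (hderiv t s).deriv.symm
  rw [funext (doubleLayer_apply hor g), (hasDerivAt_intervalIntegral hκg 0 L s).deriv,
    integral_mul_deriv_eq_neg κs g, neg_neg]
  exact intervalIntegral.integral_congr_ae ((hl.ae_apply_ne s).mono fun t ht _ => hswap t ht)

end LayerOperators

/-! ### The logarithmic energy -/

/-- The bilinear form `(u, v) ↦ ∫ u dv`. -/
noncomputable def derivPairing (L : ℝ) : SmoothPeriodic L →ₗ[ℂ] SmoothPeriodic L →ₗ[ℂ] ℂ :=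
  LinearMap.mk₂ ℂ (fun u v => ∫ t in (0 : ℝ)..L, u t * deriv v t)
    (fun u u' v => by
      simp only [AddMemClass.coe_add, Pi.add_apply, add_mul]
      exact intervalIntegral.integral_add (Continuous.intervalIntegrable (by fun_prop) _ _)
        (Continuous.intervalIntegrable (by fun_prop) _ _))
    (fun c u v => by
      simp only [SetLike.val_smul, Pi.smul_apply, smul_eq_mul, mul_assoc]
      exact intervalIntegral.integral_const_mul _ _)
    (fun u v v' => by
      simp only [AddMemClass.coe_add, ((v.hasDerivAt _).add (v'.hasDerivAt _)).deriv, mul_add]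
      exact intervalIntegral.integral_add (Continuous.intervalIntegrable (by fun_prop) _ _)
        (Continuous.intervalIntegrable (by fun_prop) _ _))
    (fun c u v => by
      simp only [SetLike.val_smul, ((v.hasDerivAt _).const_smul c).deriv, mul_smul_comm]
      exact intervalIntegral.integral_smul _ _)

theorem derivPairing_apply (u v : SmoothPeriodic L) :
    derivPairing L u v = ∫ t in (0 : ℝ)..L, u t * deriv v t := rfl

theorem derivPairing_eq_neg_swap (u v : SmoothPeriodic L) :
    derivPairing L u v = -derivPairing L v u := by
  rw [derivPairing_apply, integral_mul_deriv_eq_neg]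
  simp only [derivPairing_apply, mul_comm]

theorem derivPairing_algebraMap_right (u : SmoothPeriodic L) (c : ℂ) :
    derivPairing L u (algebraMap ℂ _ c) = 0 := by
  have hzero (t : ℝ) : deriv (algebraMap ℂ (SmoothPeriodic L) c) t = 0 := deriv_const t c
  simp only [derivPairing_apply, hzero, mul_zero, intervalIntegral.integral_zero]

theorem derivPairing_algebraMap_left (c : ℂ) (v : SmoothPeriodic L) :
    derivPairing L (algebraMap ℂ _ c) v = 0 := by
  rw [derivPairing_eq_neg_swap, derivPairing_algebraMap_right, neg_zero]

section LogEnergy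

variable (hl : IsRegularLoop l)

/-- The logarithmic energy `(g, k) ↦ -∬ log |l t - l s| dg(t) dk(s)`. -/
noncomputable def logEnergy : SmoothPeriodic L →ₗ[ℂ] SmoothPeriodic L →ₗ[ℂ] ℂ :=
  derivPairing L ∘ₗ singleLayer hl

theorem logEnergy_apply (g k : SmoothPeriodic L) :
    logEnergy hl g k = derivPairing L (singleLayer hl g) k := rfl

theorem integral_re_div_mul_sub (g : SmoothPeriodic L) (s : ℝ) {ε : ℝ} (hε : 0 < ε) :
    ∫ t in (0 : ℝ)..L, ((deriv l t * conj (l t - l s)).re / (sqChord l s t + ε) : ℝ) *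
        (g t - g s) =
      -∫ t in (0 : ℝ)..L, (Real.log (sqChord l s t + ε) / 2 : ℝ) * deriv g t := by
  have hne (t : ℝ) : sqChord l s t + ε ≠ 0 := (sqChord_add_pos l s t hε).ne'
  have hρ : Continuous (sqChord l s) := (continuous_sqChord l).comp (Continuous.prodMk_right s)
  have hre : Continuous fun t => (deriv l t * conj (l t - l s)).re / (sqChord l s t + ε) :=
    Continuous.div (by fun_prop) (by fun_prop) hne
  have hderiv (t : ℝ) : HasDerivAt (fun t => ((Real.log (sqChord l s t + ε) / 2 : ℝ) : ℂ))
      ((deriv l t * conj (l t - l s)).re / (sqChord l s t + ε) : ℝ) t :=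
    ((((hasDerivAt_sqChord l s t).add_const ε).log (hne t)).div_const 2).congr_deriv (by ring)
      |>.ofReal_comp
  rw [intervalIntegral.integral_mul_deriv_eq_deriv_mul (fun t _ => hderiv t)
    (fun t _ => (g.hasDerivAt t).sub_const (g s))
    ((Complex.continuous_ofReal.comp hre).intervalIntegrable _ _)
    (g.continuous_deriv.intervalIntegrable _ _)]
  simp only [sqChord, l.periodic.eq, g.periodic.eq]
  ring

include hl

theorem continuous_singleLayerIntegrand (g : SmoothPeriodic L) :
    Continuous fun p : ℝ × ℝ => singleLayerIntegrand l g p.1 p.2 := by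
  have hg := continuous_dividedDifference hl g
  have hg' := continuous_dividedDifference hl (star g)
  unfold singleLayerIntegrand
  fun_prop

theorem sqChord_mul_singleLayerIntegrand (g : SmoothPeriodic L) (s t : ℝ) :
    sqChord l s t * singleLayerIntegrand l g s t =
      (deriv l t * conj (l t - l s)).re * (g t - g s) := by
  have hg := dividedDifference_mul_sub hl g s t
  have hg' := congrArg conj (dividedDifference_mul_sub hl (star g) s t)
  rw [sqChord, ← Complex.mul_conj, Complex.re_eq_add_conj, singleLayerIntegrand]
  simp only [SmoothPeriodic.star_apply, map_mul, map_sub, Complex.conj_conj] at hg' ⊢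
  linear_combination (2 : ℂ)⁻¹ * deriv l t * (conj (l t) - conj (l s)) * hg +
    (2 : ℂ)⁻¹ * conj (deriv l t) * (l t - l s) * hg'

theorem integral_div_add_smul_singleLayerIntegrand (g k : SmoothPeriodic L) {ε : ℝ} (hε : 0 < ε) :
    ∫ p, (sqChord l p.1 p.2 / (sqChord l p.1 p.2 + ε)) •
        (singleLayerIntegrand l g p.1 p.2 * deriv k p.1) ∂square L =
      -∫ p, (Real.log (sqChord l p.1 p.2 + ε) / 2 : ℝ) * (deriv g p.2 * deriv k p.1) ∂square L := by
  have hB := continuous_singleLayerIntegrand hl g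
  have hρ := continuous_sqChord l
  have hne (p : ℝ × ℝ) : sqChord l p.1 p.2 + ε ≠ 0 := (sqChord_add_pos l p.1 p.2 hε).ne'
  have : Continuous fun p : ℝ × ℝ => sqChord l p.1 p.2 / (sqChord l p.1 p.2 + ε) :=
    hρ.div (by fun_prop) hne
  have : Continuous fun p : ℝ × ℝ => Real.log (sqChord l p.1 p.2 + ε) :=
    Continuous.log (by fun_prop) hne
  have hre (s t : ℝ) : (sqChord l s t / (sqChord l s t + ε)) • singleLayerIntegrand l g s t =
      ((deriv l t * conj (l t - l s)).re / (sqChord l s t + ε) : ℝ) * (g t - g s) := by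
    rw [Complex.real_smul, Complex.ofReal_div, div_mul_eq_mul_div,
      sqChord_mul_singleLayerIntegrand hl, Complex.ofReal_div, div_mul_eq_mul_div]
  rw [integral_square hl.pos.le (by fun_prop), integral_square hl.pos.le (by fun_prop)]
  simp only [← smul_mul_assoc, hre, ← mul_assoc, intervalIntegral.integral_mul_const,
    integral_re_div_mul_sub g _ hε, neg_mul, intervalIntegral.integral_neg]

theorem tendsto_logEnergy (g k : SmoothPeriodic L) :
    Tendsto (fun ε : ℝ => -∫ p : ℝ × ℝ,
      (Real.log (sqChord l p.1 p.2 + ε) / 2 : ℝ) * (deriv g p.2 * deriv k p.1) ∂square L)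
      (𝓝[>] 0) (𝓝 (logEnergy hl g k)) := by
  have hB := continuous_singleLayerIntegrand hl g
  have hlim : ∫ p : ℝ × ℝ, singleLayerIntegrand l g p.1 p.2 * deriv k p.1 ∂square L =
      logEnergy hl g k := by
    rw [integral_square hl.pos.le (by fun_prop)]
    simp only [intervalIntegral.integral_mul_const, logEnergy_apply, derivPairing_apply,
      singleLayer_apply]
  rw [← hlim]
  refine (tendsto_integral_div_add_smul (continuous_sqChord l).aestronglyMeasurable
    ((ae_square_apply_ne hl).mono fun p hp => Complex.normSq_pos.2 (sub_ne_zero.2 hp))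
    (integrable_square (by fun_prop))).congr' ?_
  filter_upwards [self_mem_nhdsWithin] with ε (hε : 0 < ε)
  exact integral_div_add_smul_singleLayerIntegrand hl g k hε

theorem logEnergy_comm (g k : SmoothPeriodic L) : logEnergy hl g k = logEnergy hl k g := by
  refine tendsto_nhds_unique (tendsto_logEnergy hl g k)
    ((tendsto_logEnergy hl k g).congr fun ε => ?_)
  rw [← integral_prod_swap]
  simp only [Prod.fst_swap, Prod.snd_swap, sqChord_comm l _ _, mul_comm (deriv g _)]

variable {hl} (hor : IsPositivelyOriented l)

include hor

theorem derivPairing_doubleLayer (g k : SmoothPeriodic L) :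
    derivPairing L (doubleLayer hl g) k = derivPairing L (doubleLayer hl k) g := by
  have hκ : Continuous fun p : ℝ × ℝ => doubleLayerKernel l p.1 p.2 :=
    (contDiff_doubleLayerKernel hl).continuous
  calc derivPairing L (doubleLayer hl g) k
      = ∫ s in (0 : ℝ)..L, ∫ t in (0 : ℝ)..L, doubleLayerKernel l t s * k s * deriv g t := by
        rw [derivPairing_eq_neg_swap, derivPairing_apply, ← intervalIntegral.integral_neg]
        simp only [deriv_doubleLayer hor, mul_neg, neg_neg, ← intervalIntegral.integral_const_mul,
          mul_left_comm (k _), mul_assoc]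
    _ = ∫ t in (0 : ℝ)..L, ∫ s in (0 : ℝ)..L, doubleLayerKernel l t s * k s * deriv g t :=
        integral_interval_swap hl.pos.le (by fun_prop)
    _ = derivPairing L (doubleLayer hl k) g := by
        simp only [derivPairing_apply, doubleLayer_apply hor, intervalIntegral.integral_mul_const]

theorem logEnergy_singleLayer (g k : SmoothPeriodic L) :
    logEnergy hl (singleLayer hl g) (singleLayer hl k) =
      (π : ℂ) ^ 2 * logEnergy hl g k - logEnergy hl (doubleLayer hl g) (doubleLayer hl k) := by
  have hsq : singleLayer hl (singleLayer hl g) =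
      doubleLayer hl (doubleLayer hl g) - (π : ℂ) ^ 2 • g := by
    simpa only [Module.End.mul_apply, LinearMap.sub_apply, LinearMap.smul_apply,
      Module.End.one_apply] using LinearMap.congr_fun (singleLayer_mul_self hor) g
  have hanti : doubleLayer hl (singleLayer hl k) = -singleLayer hl (doubleLayer hl k) := by
    rw [eq_neg_iff_add_eq_zero, add_comm, ← eq_neg_iff_add_eq_zero]
    simpa only [Module.End.mul_apply, LinearMap.neg_apply] using
      LinearMap.congr_fun (singleLayer_mul_doubleLayer hor) k
  calc logEnergy hl (singleLayer hl g) (singleLayer hl k)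
      = derivPairing L (doubleLayer hl (doubleLayer hl g)) (singleLayer hl k) -
          (π : ℂ) ^ 2 * derivPairing L g (singleLayer hl k) := by
        rw [logEnergy_apply, hsq, map_sub, map_smul, LinearMap.sub_apply, LinearMap.smul_apply,
          smul_eq_mul]
    _ = -derivPairing L (singleLayer hl (doubleLayer hl k)) (doubleLayer hl g) +
          (π : ℂ) ^ 2 * derivPairing L (singleLayer hl k) g := by
        rw [derivPairing_doubleLayer hor, hanti, map_neg, LinearMap.neg_apply,
          derivPairing_eq_neg_swap g, mul_neg, sub_neg_eq_add]
    _ = (π : ℂ) ^ 2 * logEnergy hl g k - logEnergy hl (doubleLayer hl g) (doubleLayer hl k) := by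
        rw [logEnergy_comm hl g, logEnergy_comm hl (doubleLayer hl g), logEnergy_apply,
          logEnergy_apply]
        ring

end LogEnergy

/-! ### Positivity of the energy -/

theorem hasSum_integral_log_one_sub {β : Type*} [MeasurableSpace β] {ν : Measure β} {K : β → ℝ}
    {v : β → ℂ} {q : ℝ} (hK : Measurable K) (hKq : ∀ y, |K y| ≤ q) (hq : q < 1)
    (hv : Integrable v ν) :
    HasSum (fun n : ℕ => ∫ y, (K y ^ (n + 1) / (n + 1) : ℝ) * v y ∂ν)
      (-∫ y, Real.log (1 - K y) * v y ∂ν) := by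
  obtain _ | ⟨⟨y₀⟩⟩ := isEmpty_or_nonempty β
  · simp [integral_of_isEmpty, hasSum_zero]
  have hq₀ : 0 ≤ q := (abs_nonneg _).trans (hKq y₀)
  have hbound (n : ℕ) (y : β) : ‖((K y ^ (n + 1) / (n + 1) : ℝ) : ℂ) * v y‖ ≤ q ^ n * ‖v y‖ := by
    rw [norm_mul, Complex.norm_real, norm_div, norm_pow, Real.norm_eq_abs, Real.norm_eq_abs,
      abs_of_pos (by positivity : (0 : ℝ) < n + 1)]
    gcongr
    calc |K y| ^ (n + 1) / (n + 1) ≤ q ^ (n + 1) / 1 := by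
          gcongr
          · exact hKq y
          · linarith [n.cast_nonneg (α := ℝ)]
      _ ≤ q ^ n := by
          rw [div_one]
          exact pow_le_pow_of_le_one hq₀ hq.le n.le_succ
  have hint (n : ℕ) : Integrable (fun y => ((K y ^ (n + 1) / (n + 1) : ℝ) : ℂ) * v y) ν :=
    (hv.norm.const_mul (q ^ n)).mono' ((by fun_prop : Measurable fun y =>
      ((K y ^ (n + 1) / (n + 1) : ℝ) : ℂ)).aestronglyMeasurable.mul hv.1) (.of_forall (hbound n))
  have hsum : Summable fun n : ℕ => ∫ y, ‖((K y ^ (n + 1) / (n + 1) : ℝ) : ℂ) * v y‖ ∂ν := by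
    refine .of_nonneg_of_le (fun n => integral_nonneg fun y => norm_nonneg _) (fun n => ?_)
      ((summable_geometric_of_lt_one hq₀ hq).mul_right (∫ y, ‖v y‖ ∂ν))
    rw [← integral_const_mul]
    exact integral_mono (hint n).norm (hv.norm.const_mul _) (hbound n)
  have htsum (y : β) : ∑' n : ℕ, ((K y ^ (n + 1) / (n + 1) : ℝ) : ℂ) * v y =
      -(Real.log (1 - K y) * v y) := by
    rw [← neg_mul, ← Complex.ofReal_neg]
    exact (Complex.hasSum_ofReal.2 (Real.hasSum_pow_div_log_of_abs_lt_one
      ((hKq y).trans_lt hq))).mul_right (v y) |>.tsum_eq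
  simpa only [htsum, integral_neg] using hasSum_integral_of_summable_integral_norm hint hsum

section FeatureKernel

variable {α ι : Type*} [Fintype ι]

/-- The positive semidefinite kernel with features `X i` of weights `c i`. -/
def featureKernel (c : ι → ℝ) (X : ι → α → ℝ) (s t : α) : ℝ := ∑ i, c i * (X i s * X i t)

variable {c : ι → ℝ} {X : ι → α → ℝ}

theorem featureKernel_pow (n : ℕ) (s t : α) :
    featureKernel c X s t ^ n =
      ∑ w : Fin n → ι, (∏ j, c (w j)) * ((∏ j, X (w j) s) * ∏ j, X (w j) t) := by
  rw [featureKernel, Fintype.sum_pow]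
  simp only [Finset.prod_mul_distrib]

theorem abs_featureKernel_le {q : ℝ} (hc : 0 ≤ c) (hq : ∀ s, featureKernel c X s s ≤ q) (s t : α) :
    |featureKernel c X s t| ≤ q := by
  have hdiag (s : α) : ∑ i, c i * X i s ^ 2 ≤ q := by
    simpa only [featureKernel, sq] using hq s
  calc |featureKernel c X s t| ≤ ∑ i, (c i * X i s ^ 2 + c i * X i t ^ 2) / 2 := by
        refine (Finset.abs_sum_le_sum_abs _ _).trans (Finset.sum_le_sum fun i _ => ?_)
        rw [abs_mul, abs_of_nonneg (hc i), ← mul_add, mul_div_assoc]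
        refine mul_le_mul_of_nonneg_left (abs_le.2 ⟨?_, ?_⟩) (hc i)
        · linarith [sq_nonneg (X i s + X i t), add_sq (X i s) (X i t)]
        · linarith [sq_nonneg (X i s - X i t), sub_sq (X i s) (X i t)]
    _ ≤ q := by
        rw [← Finset.sum_div, Finset.sum_add_distrib]
        linarith [hdiag s, hdiag t]

variable [MeasurableSpace α] {μ : Measure α} [SFinite μ] {u : α → ℂ}

theorem measurable_featureKernel (hX : ∀ i, Measurable (X i)) :
    Measurable fun p : α × α => featureKernel c X p.1 p.2 := by
  unfold featureKernel
  fun_prop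

omit [SFinite μ] in
theorem integrable_prod_features_mul (hX : ∀ i, Measurable (X i)) {q : ℝ} (hc : ∀ i, 0 < c i)
    (hq : ∀ s, featureKernel c X s s ≤ q) (hu : Integrable u μ) {n : ℕ} (w : Fin n → ι) :
    Integrable (fun s => (∏ j, X (w j) s : ℝ) * u s) μ := by
  have hbound (i : ι) (s : α) : |X i s| ≤ √(q / c i) := by
    refine Real.abs_le_sqrt ((le_div_iff₀' (hc i)).2 (le_trans ?_ (hq s)))
    rw [sq]
    exact Finset.single_le_sum (fun j _ => mul_nonneg (hc j).le (mul_self_nonneg (X j s)))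
      (Finset.mem_univ i)
  have hmeas : Measurable fun s => ((∏ j, X (w j) s : ℝ) : ℂ) := by fun_prop
  refine hu.bdd_mul (c := ∏ j, √(q / c (w j))) hmeas.aestronglyMeasurable (.of_forall fun s => ?_)
  rw [Complex.norm_real, Real.norm_eq_abs, Finset.abs_prod]
  exact Finset.prod_le_prod (fun _ _ => abs_nonneg _) fun j _ => hbound (w j) s

theorem integral_featureKernel_pow_mul (hX : ∀ i, Measurable (X i)) {q : ℝ} (hc : ∀ i, 0 < c i)
    (hq : ∀ s, featureKernel c X s s ≤ q) (hu : Integrable u μ) (n : ℕ) :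
    ∫ p : α × α, (featureKernel c X p.1 p.2 ^ n : ℝ) * (u p.2 * conj (u p.1)) ∂μ.prod μ =
      (∑ w : Fin n → ι, (∏ j, c (w j)) * ‖∫ s, (∏ j, X (w j) s : ℝ) * u s ∂μ‖ ^ 2 : ℝ) := by
  let m (w : Fin n → ι) (s : α) : ℂ := (∏ j, X (w j) s : ℝ) * u s
  have hm (w : Fin n → ι) : Integrable (m w) μ := integrable_prod_features_mul hX hc hq hu w
  have hconj (w : Fin n → ι) : Integrable (fun s => conj (m w s)) μ :=
    Complex.conjCLE.toContinuousLinearMap.integrable_comp (hm w)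
  have hexpand (p : α × α) :
      (featureKernel c X p.1 p.2 ^ n : ℝ) * (u p.2 * conj (u p.1)) =
        ∑ w : Fin n → ι, (∏ j, c (w j) : ℝ) * (conj (m w p.1) * m w p.2) := by
    rw [featureKernel_pow, Complex.ofReal_sum, Finset.sum_mul]
    refine Finset.sum_congr rfl fun w _ => ?_
    simp only [m, map_mul, Complex.conj_ofReal, Complex.ofReal_mul]
    ring
  simp only [hexpand]
  rw [integral_finsetSum _ fun w _ => ((hconj w).mul_prod (hm w)).const_mul _, Complex.ofReal_sum]
  refine Finset.sum_congr rfl fun w _ => ?_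
  rw [integral_const_mul, integral_prod_mul (fun s => conj (m w s)) (m w), integral_conj,
    Complex.conj_mul', Complex.ofReal_mul, Complex.ofReal_pow]

theorem hasSum_integral_log_one_sub_featureKernel (hX : ∀ i, Measurable (X i)) {q : ℝ}
    (hc : ∀ i, 0 < c i) (hq : ∀ s, featureKernel c X s s ≤ q) (hq₁ : q < 1) (hu : Integrable u μ) :
    HasSum (fun n : ℕ => (∑ w : Fin (n + 1) → ι, (∏ j, c (w j)) *
        ‖∫ s, (∏ j, X (w j) s : ℝ) * u s ∂μ‖ ^ 2) / (n + 1))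
      (-∫ p : α × α, Real.log (1 - featureKernel c X p.1 p.2) *
        (u p.2 * conj (u p.1)) ∂μ.prod μ).re := by
  have hv : Integrable (fun p : α × α => u p.2 * conj (u p.1)) (μ.prod μ) :=
    ((Complex.conjCLE.toContinuousLinearMap.integrable_comp hu).mul_prod hu).congr
      (.of_forall fun p => mul_comm _ _)
  have hlog := Complex.hasSum_re (hasSum_integral_log_one_sub (measurable_featureKernel hX)
    (fun p => abs_featureKernel_le (fun i => (hc i).le) hq p.1 p.2) hq₁ hv)
  have hdiv (n : ℕ) (p : α × α) :
      ((featureKernel c X p.1 p.2 ^ (n + 1) / (n + 1) : ℝ) : ℂ) * (u p.2 * conj (u p.1)) =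
        (featureKernel c X p.1 p.2 ^ (n + 1) : ℝ) * (u p.2 * conj (u p.1)) *
          (((n + 1 : ℝ)⁻¹ : ℝ) : ℂ) := by
    rw [div_eq_mul_inv, Complex.ofReal_mul]
    ring
  simpa only [hdiv, integral_mul_const, integral_featureKernel_pow_mul hX hc hq hu,
    Complex.re_mul_ofReal, Complex.ofReal_re, ← div_eq_mul_inv] using hlog

theorem pow_div_mul_norm_sq_le_neg_integral_log (hX : ∀ i, Measurable (X i)) {b q : ℝ} (hb : 0 < b)
    (hc : ∀ i, b ≤ c i) (hq : ∀ s, featureKernel c X s s ≤ q) (hq₁ : q < 1) (hu : Integrable u μ)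
    {n : ℕ} (w : Fin (n + 1) → ι) :
    b ^ (n + 1) / (n + 1) * ‖∫ s, (∏ j, X (w j) s : ℝ) * u s ∂μ‖ ^ 2 ≤
      (-∫ p : α × α, Real.log (1 - featureKernel c X p.1 p.2) *
        (u p.2 * conj (u p.1)) ∂μ.prod μ).re := by
  have hpow {m : ℕ} (w : Fin m → ι) : b ^ m ≤ ∏ j, c (w j) := by
    simpa only [Finset.prod_const, Finset.card_univ, Fintype.card_fin] using
      Finset.prod_le_prod (s := Finset.univ) (fun _ _ => hb.le) fun j _ => hc (w j)
  have hnonneg {m : ℕ} (w : Fin m → ι) :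
      0 ≤ (∏ j, c (w j)) * ‖∫ s, (∏ j, X (w j) s : ℝ) * u s ∂μ‖ ^ 2 :=
    mul_nonneg ((pow_pos hb m).le.trans (hpow w)) (sq_nonneg _)
  refine le_trans ?_ (le_hasSum (hasSum_integral_log_one_sub_featureKernel hX
    (fun i => hb.trans_le (hc i)) hq hq₁ hu) n fun m _ =>
      div_nonneg (Finset.sum_nonneg fun w _ => hnonneg w) (by positivity))
  rw [div_mul_eq_mul_div]
  gcongr
  calc b ^ (n + 1) * ‖∫ s, (∏ j, X (w j) s : ℝ) * u s ∂μ‖ ^ 2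
      ≤ (∏ j, c (w j)) * ‖∫ s, (∏ j, X (w j) s : ℝ) * u s ∂μ‖ ^ 2 :=
        mul_le_mul_of_nonneg_right (hpow w) (sq_nonneg _)
    _ ≤ _ := Finset.single_le_sum (fun w _ => hnonneg w) (Finset.mem_univ w)

end FeatureKernel

/-- Together with `chordWeight`, features for which `1 - K` is the regularized squared chord
`|l t - l s| ^ 2 + ε` divided by a function of `s` and a function of `t`. -/
noncomputable def chordFeature (l : SmoothPeriodic L) (i : Fin 4) (s : ℝ) : ℝ :=
  ![1, Complex.normSq (l s), (l s).re, (l s).im] i / (1 + Complex.normSq (l s))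

/-- The weights of the features `chordFeature`. -/
def chordWeight (ε : ℝ) : Fin 4 → ℝ := ![1 - ε, 1, 2, 2]

section Energy

theorem le_chordWeight {ε : ℝ} (hε : ε ≤ 1 / 2) (i : Fin 4) : 1 / 2 ≤ chordWeight ε i := by
  fin_cases i <;> simp [chordWeight] <;> linarith

theorem one_add_normSq_pos (z : ℂ) : 0 < 1 + Complex.normSq z :=
  add_pos_of_pos_of_nonneg one_pos (Complex.normSq_nonneg z)

variable (l) in
theorem one_sub_featureKernel_chordFeature (ε s t : ℝ) :
    1 - featureKernel (chordWeight ε) (chordFeature l) s t =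
      (sqChord l s t + ε) / ((1 + Complex.normSq (l s)) * (1 + Complex.normSq (l t))) := by
  have hs := (one_add_normSq_pos (l s)).ne'
  have ht := (one_add_normSq_pos (l t)).ne'
  rw [eq_div_iff (mul_ne_zero hs ht)]
  simp only [featureKernel, Fin.sum_univ_four, chordWeight, chordFeature, Matrix.cons_val]
  field_simp
  simp only [sqChord, Complex.normSq_apply, Complex.sub_re, Complex.sub_im]
  ring

variable (l) in
theorem continuous_chordFeature (i : Fin 4) : Continuous (chordFeature l i) := by
  have : Continuous fun s => Complex.normSq (l s) := Complex.continuous_normSq.comp l.continuous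
  refine Continuous.div ?_ (by fun_prop) fun s => (one_add_normSq_pos _).ne'
  fin_cases i <;> simp only <;> fun_prop

variable (l) in
theorem exists_featureKernel_chordFeature_le (hL : 0 < L) {ε : ℝ} (hε : 0 < ε) :
    ∃ q < 1, ∀ s, featureKernel (chordWeight ε) (chordFeature l) s s ≤ q := by
  have hsq : Continuous fun s => Complex.normSq (l s) := Complex.continuous_normSq.comp l.continuous
  obtain ⟨s₀, hs₀⟩ := exists_forall_ge_of_periodic (f := fun s => -Complex.normSq (l s))
    hsq.neg (fun s => by simp only [l.periodic s]) hL
  have hpos := one_add_normSq_pos (l s₀)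
  refine ⟨1 - ε / (1 + Complex.normSq (l s₀)) ^ 2, by linarith [div_pos hε (pow_pos hpos 2)],
    fun s => ?_⟩
  have hker := one_sub_featureKernel_chordFeature l ε s s
  rw [sqChord, sub_self, map_zero, zero_add, ← sq] at hker
  have hle : ε / (1 + Complex.normSq (l s₀)) ^ 2 ≤ ε / (1 + Complex.normSq (l s)) ^ 2 := by
    have := one_add_normSq_pos (l s)
    have := hs₀ s
    gcongr
    linarith
  linarith

theorem integral_deriv_eq_zero (g : SmoothPeriodic L) : ∫ t in (0 : ℝ)..L, deriv g t = 0 := by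
  rw [intervalIntegral.integral_deriv_eq_sub (fun t _ => g.differentiable t)
    (g.continuous_deriv.intervalIntegrable _ _), g.periodic.eq, sub_self]

/- The two logarithms differ by functions of `s` or `t` alone, which integrate to zero against
`g'(t) conj (g'(s))`. -/
theorem integral_log_sqChord_add_mul (l g : SmoothPeriodic L) (hL : 0 ≤ L) {ε : ℝ} (hε : 0 < ε) :
    ∫ p, Real.log (sqChord l p.1 p.2 + ε) * (deriv g p.2 * conj (deriv g p.1)) ∂square L =
      ∫ p, Real.log (1 - featureKernel (chordWeight ε) (chordFeature l) p.1 p.2) *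
        (deriv g p.2 * conj (deriv g p.1)) ∂square L := by
  let a (s : ℝ) : ℝ := Real.log (1 + Complex.normSq (l s))
  have ha : Continuous a := Continuous.log
    (continuous_const.add (Complex.continuous_normSq.comp l.continuous))
    fun s => (one_add_normSq_pos _).ne'
  let κ (p : ℝ × ℝ) : ℝ := Real.log (sqChord l p.1 p.2 + ε)
  have hκ : Continuous κ := Continuous.log ((continuous_sqChord l).add continuous_const)
    fun p => (sqChord_add_pos l p.1 p.2 hε).ne'
  have hlog (p : ℝ × ℝ) : Real.log (1 - featureKernel (chordWeight ε) (chordFeature l) p.1 p.2) *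
      (deriv g p.2 * conj (deriv g p.1)) =
      κ p * (deriv g p.2 * conj (deriv g p.1)) - a p.1 * conj (deriv g p.1) * deriv g p.2 -
        conj (deriv g p.1) * (a p.2 * deriv g p.2) := by
    have hs := (one_add_normSq_pos (l p.1)).ne'
    have ht := (one_add_normSq_pos (l p.2)).ne'
    rw [one_sub_featureKernel_chordFeature, Real.log_div (sqChord_add_pos l p.1 p.2 hε).ne'
      (mul_ne_zero hs ht), Real.log_mul hs ht, Complex.ofReal_sub, Complex.ofReal_add]
    ring
  have hzero : ∫ t in Ioc 0 L, deriv g t = 0 := by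
    rw [← intervalIntegral.integral_of_le hL, integral_deriv_eq_zero]
  simp only [hlog]
  rw [integral_sub (integrable_square (by fun_prop)) (integrable_square (by fun_prop)),
    integral_sub (integrable_square (by fun_prop)) (integrable_square (by fun_prop)),
    integral_prod_mul (fun s => a s * conj (deriv g s)) (deriv g),
    integral_prod_mul (fun s => conj (deriv g s)) (fun t => a t * deriv g t), integral_conj, hzero,
    map_zero, mul_zero, zero_mul, sub_zero, sub_zero]

theorem mul_norm_integral_sq_le_logEnergy (hl : IsRegularLoop l) (g : SmoothPeriodic L) {n : ℕ}
    (w : Fin (n + 1) → Fin 4) :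
    (1 / 2) ^ (n + 1) / (2 * (n + 1)) *
        ‖∫ s in (0 : ℝ)..L, (∏ j, chordFeature l (w j) s : ℝ) * deriv g s‖ ^ 2 ≤
      (logEnergy hl g (star g)).re := by
  refine ge_of_tendsto ((Complex.continuous_re.tendsto _).comp (tendsto_logEnergy hl g (star g))) ?_
  filter_upwards [Ioo_mem_nhdsGT (by norm_num : (0 : ℝ) < 1 / 2)] with ε ⟨hε, hε'⟩
  have hc := le_chordWeight hε'.le
  obtain ⟨q, hq₁, hq⟩ := exists_featureKernel_chordFeature_le l hl.pos hε
  have hmoment := pow_div_mul_norm_sq_le_neg_integral_log (μ := volume.restrict (Ioc 0 L))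
    (fun i => (continuous_chordFeature l i).measurable) one_half_pos hc hq hq₁
    g.continuous_deriv.integrableOn_Ioc w
  rw [← integral_log_sqChord_add_mul l g hl.pos.le hε] at hmoment
  have hhalf (p : ℝ × ℝ) : ((Real.log (sqChord l p.1 p.2 + ε) / 2 : ℝ) : ℂ) *
      (deriv g p.2 * deriv (star g : SmoothPeriodic L) p.1) = ((1 / 2 : ℝ) : ℂ) *
        (Real.log (sqChord l p.1 p.2 + ε) * (deriv g p.2 * conj (deriv g p.1))) := by
    rw [g.deriv_star, div_eq_inv_mul, one_div, Complex.ofReal_mul, mul_assoc]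
  simp only [Function.comp_apply, hhalf, integral_const_mul]
  rw [← mul_neg, Complex.re_ofReal_mul, intervalIntegral.integral_of_le hl.pos.le,
    div_mul_eq_div_div_swap]
  linarith

end Energy

section Moments

variable {X ι : Type*} [TopologicalSpace X] [CompactSpace X] [MeasurableSpace X]
  [OpensMeasurableSpace X] (μ : Measure X) [IsFiniteMeasure μ]

theorem integrable_continuousMap_smul (f : C(X, ℝ)) (u : C(X, ℂ)) :
    Integrable (fun x => f x • u x) μ :=
  ((map_continuous f).smul (map_continuous u)).integrable_of_hasCompactSupport (.of_compactSpace _)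

/-- The functional `f ↦ ∫ f u dμ` on the real continuous functions. -/
noncomputable def integralMul (u : C(X, ℂ)) : C(X, ℝ) →L[ℝ] ℂ :=
  LinearMap.mkContinuous
    { toFun f := ∫ x, f x • u x ∂μ
      map_add' f g := by
        simp only [ContinuousMap.add_apply, add_smul]
        exact integral_add (integrable_continuousMap_smul μ f u)
          (integrable_continuousMap_smul μ g u)
      map_smul' r f := by
        simp only [ContinuousMap.smul_apply, smul_assoc, integral_smul, RingHom.id_apply] }
    (‖u‖ * μ.real univ) fun f => by
      refine (norm_integral_le_of_norm_le_const (.of_forall fun x => ?_)).trans_eq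
        (by ring : ‖f‖ * ‖u‖ * μ.real univ = _)
      rw [norm_smul]
      gcongr
      exacts [f.norm_coe_le_norm x, u.norm_coe_le_norm x]

variable {μ}

theorem integralMul_apply (u : C(X, ℂ)) (f : C(X, ℝ)) :
    integralMul μ u f = ∫ x, f x • u x ∂μ := rfl

theorem eq_zero_of_integralMul_eq_zero [μ.IsOpenPosMeasure] {u : C(X, ℂ)}
    (hu : integralMul μ u = 0) : u = 0 := by
  have hzero (f : C(X, ℝ)) : ∫ x, f x • u x ∂μ = 0 := DFunLike.congr_fun hu f
  let re : C(X, ℝ) := ⟨fun x => (u x).re, by fun_prop⟩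
  let im : C(X, ℝ) := ⟨fun x => (u x).im, by fun_prop⟩
  have hnormSq (x : X) : (Complex.normSq (u x) : ℂ) = re x • u x - Complex.I * (im x • u x) :=
    Complex.ext (by simp [re, im, Complex.normSq_apply]) (by simp [re, im, mul_comm])
  have hint : ∫ x, Complex.normSq (u x) ∂μ = 0 := by
    rw [← Complex.ofReal_inj, ← integral_complex_ofReal]
    simp only [hnormSq]
    rw [integral_sub (integrable_continuousMap_smul μ re u)
      ((integrable_continuousMap_smul μ im u).const_mul _), integral_const_mul, hzero, hzero,
      mul_zero, sub_zero, Complex.ofReal_zero]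
  have hcont : Continuous fun x => Complex.normSq (u x) :=
    Complex.continuous_normSq.comp (map_continuous u)
  have hae := (integral_eq_zero_iff_of_nonneg (fun x => Complex.normSq_nonneg (u x))
    (hcont.integrable_of_hasCompactSupport (.of_compactSpace _))).1 hint
  ext1 x
  exact Complex.normSq_eq_zero.1
    (congrFun ((Continuous.ae_eq_iff_eq μ hcont continuous_const).1 hae) x)

theorem eq_zero_of_integral_prod_mul_eq_zero [μ.IsOpenPosMeasure] {p : ι → C(X, ℝ)}
    (hp : ∀ x y, (∀ i, p i x = p i y) → x = y) {u : C(X, ℂ)}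
    (hu : ∀ (n : ℕ) (w : Fin n → ι), ∫ x, (∏ j, p (w j) x : ℝ) * u x ∂μ = 0) : u = 0 := by
  let A : Subalgebra ℝ C(X, ℝ) := Algebra.adjoin ℝ (range p)
  have hsep : A.SeparatesPoints := fun x y hxy => by
    obtain ⟨i, hi⟩ := not_forall.1 fun h => hxy (hp x y h)
    exact ⟨p i, ⟨p i, Algebra.subset_adjoin ⟨i, rfl⟩, rfl⟩, hi⟩
  have hmonomial : ∀ f ∈ Submonoid.closure (range p), integralMul μ u f = 0 := fun f hf => by
    obtain ⟨ps, hps, rfl⟩ := Submonoid.exists_list_of_mem_closure hf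
    choose w hw using fun j : Fin ps.length => hps (ps.get j) (ps.get_mem j)
    rw [integralMul_apply, ← hu ps.length w]
    refine integral_congr_ae (.of_forall fun x => ?_)
    dsimp only
    rw [Complex.real_smul, ← ContinuousMap.prod_apply, ← Fin.prod_univ_getElem]
    simp only [hw, List.get_eq_getElem]
  have hA : A.toSubmodule ≤ (integralMul μ u).ker := by
    rw [Algebra.adjoin_eq_span, Submodule.span_le]
    exact hmonomial
  have hclosed : IsClosed ((integralMul μ u).ker : Set C(X, ℝ)) := (integralMul μ u).isClosed_ker
  refine eq_zero_of_integralMul_eq_zero (μ := μ) (ContinuousLinearMap.ext fun f => ?_)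
  have hf : f ∈ A.topologicalClosure := by
    rw [ContinuousMap.subalgebra_topologicalClosure_eq_top_of_separatesPoints A hsep]
    trivial
  exact closure_minimal hA hclosed hf

end Moments

section Definite

theorem exists_continuousMap_addCircle {E : Type*} [TopologicalSpace E] {f : ℝ → E}
    (hf : Continuous f) (hper : Function.Periodic f L) :
    ∃ k : C(AddCircle L, E), ∀ t : ℝ, k t = f t :=
  ⟨⟨hper.lift, continuous_coinduced_dom.2 hf⟩, hper.lift_coe⟩

variable (l) in
theorem chordFeature_periodic (i : Fin 4) : Function.Periodic (chordFeature l i) L := fun s => by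
  simp only [chordFeature, l.periodic s]

theorem apply_eq_of_chordFeature_eq {s t : ℝ}
    (hst : ∀ i, chordFeature l i s = chordFeature l i t) : l s = l t := by
  have hs := (one_add_normSq_pos (l s)).ne'
  have ht := (one_add_normSq_pos (l t)).ne'
  have h₀ := hst 0
  have hre := hst 2
  have him := hst 3
  simp only [chordFeature, Matrix.cons_val, div_eq_div_iff hs ht, one_mul] at h₀ hre him
  rw [h₀] at hre him
  exact Complex.ext (mul_right_cancel₀ hs hre) (mul_right_cancel₀ hs him)

variable (hl : IsRegularLoop l) (g : SmoothPeriodic L)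

theorem logEnergy_re_nonneg : 0 ≤ (logEnergy hl g (star g)).re :=
  le_trans (by positivity) (mul_norm_integral_sq_le_logEnergy hl g (n := 0) fun _ => 0)

theorem deriv_eq_zero_of_logEnergy_re_nonpos (hg : (logEnergy hl g (star g)).re ≤ 0) (t : ℝ) :
    deriv g t = 0 := by
  have : Fact (0 < L) := ⟨hl.pos⟩
  choose p hp using fun i =>
    exists_continuousMap_addCircle (continuous_chordFeature l i) (chordFeature_periodic l i)
  obtain ⟨u, hu⟩ := exists_continuousMap_addCircle g.continuous_deriv g.derivative.periodic
  have hmoment (n : ℕ) (w : Fin n → Fin 4) :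
      ∫ s in (0 : ℝ)..L, (∏ j, chordFeature l (w j) s : ℝ) * deriv g s = 0 := by
    obtain _ | n := n
    · simpa using integral_deriv_eq_zero g
    have hle := (mul_norm_integral_sq_le_logEnergy hl g w).trans hg
    have hc : (0 : ℝ) < (1 / 2) ^ (n + 1) / (2 * (n + 1)) := by positivity
    exact norm_eq_zero.1 (sq_eq_zero_iff.1 (le_antisymm (nonpos_of_mul_nonpos_right hle hc)
      (sq_nonneg _)))
  have hu₀ : u = 0 := by
    refine eq_zero_of_integral_prod_mul_eq_zero (μ := volume) (p := p) (fun x y hxy => ?_)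
      fun n w => ?_
    · induction x using QuotientAddGroup.induction_on with | H s =>
      induction y using QuotientAddGroup.induction_on with | H t =>
      have hst : l t = l s := apply_eq_of_chordFeature_eq fun i => by
        rw [← hp, ← hp]
        exact (hxy i).symm
      obtain ⟨m, rfl⟩ := hl.apply_eq_iff.1 hst
      rw [AddCircle.coe_add, ← zsmul_eq_mul, AddCircle.coe_zsmul, AddCircle.coe_period, smul_zero,
        add_zero]
    · rw [← AddCircle.intervalIntegral_preimage L 0, zero_add]
      simpa only [hp, hu] using hmoment n w
  rw [← hu, hu₀, ContinuousMap.zero_apply]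

end Definite

/-! ### Eigenfunctions of the adjoint double layer operator -/

theorem exists_eq_algebraMap_of_deriv_eq_zero {g : SmoothPeriodic L} (hg : ∀ t, deriv g t = 0) :
    ∃ c : ℂ, g = algebraMap ℂ _ c :=
  ⟨g 0, Subtype.ext (funext fun t => is_const_of_deriv_eq_zero g.differentiable hg t 0)⟩

theorem exists_deriv_eq_of_integral_eq_zero (f : SmoothPeriodic L)
    (hf : ∫ t in (0 : ℝ)..L, f t = 0) : ∃ g : SmoothPeriodic L, deriv g = f := by
  have hint (a b : ℝ) : IntervalIntegrable f volume a b := f.continuous.intervalIntegrable a b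
  have hderiv (s : ℝ) : HasDerivAt (fun s => ∫ t in (0 : ℝ)..s, f t) (f s) s :=
    intervalIntegral.integral_hasDerivAt_right (hint 0 s)
      f.continuous.stronglyMeasurable.stronglyMeasurableAtFilter f.continuous.continuousAt
  refine ⟨⟨fun s => ∫ t in (0 : ℝ)..s, f t, contDiff_infty_iff_deriv.2
    ⟨fun s => (hderiv s).differentiableAt, ?_⟩, fun s => ?_⟩, funext fun s => (hderiv s).deriv⟩
  · rw [funext fun s => (hderiv s).deriv]
    exact f.contDiff
  · dsimp only
    rw [← intervalIntegral.integral_add_adjacent_intervals (hint 0 s) (hint s (s + L)),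
      f.periodic.intervalIntegral_add_eq s 0, zero_add, hf, add_zero]

section Eigenfunction

variable (hl : IsRegularLoop l) (hor : IsPositivelyOriented l)

include hor

theorem logEnergy_singleLayer_star_of_doubleLayer_eq {g : SmoothPeriodic L} {z c : ℂ}
    (hg : doubleLayer hl g = z • g + algebraMap ℂ _ c) :
    logEnergy hl (singleLayer hl g) (star (singleLayer hl g)) =
      ((π ^ 2 - ‖z‖ ^ 2 : ℝ) : ℂ) * logEnergy hl g (star g) := by
  have hstar : doubleLayer hl (star g) = conj z • star g + algebraMap ℂ _ (conj c) := by
    rw [doubleLayer_star, hg, star_add, star_smul]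
    rfl
  have hright (u : SmoothPeriodic L) (a : ℂ) : logEnergy hl u (algebraMap ℂ _ a) = 0 :=
    derivPairing_algebraMap_right _ a
  have hleft (u : SmoothPeriodic L) (a : ℂ) : logEnergy hl (algebraMap ℂ _ a) u = 0 := by
    rw [logEnergy_comm, hright]
  rw [← singleLayer_star, logEnergy_singleLayer hor, hg, hstar]
  simp only [map_add, map_smul, LinearMap.add_apply, LinearMap.smul_apply, hright, hleft,
    smul_eq_mul, add_zero]
  rw [Complex.ofReal_sub, Complex.ofReal_pow, Complex.ofReal_pow, ← Complex.mul_conj']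
  ring

theorem deriv_eq_zero_of_doubleLayer_eq {g : SmoothPeriodic L} {z c : ℂ} (hz : π ≤ ‖z‖)
    (hg : doubleLayer hl g = z • g + algebraMap ℂ _ c) (t : ℝ) : deriv g t = 0 := by
  refine deriv_eq_zero_of_logEnergy_re_nonpos hl g (le_of_eq ?_) t
  have hS : ∀ t, deriv (singleLayer hl g) t = 0 := by
    refine deriv_eq_zero_of_logEnergy_re_nonpos hl _ ?_
    rw [logEnergy_singleLayer_star_of_doubleLayer_eq hl hor hg, Complex.re_ofReal_mul]
    exact mul_nonpos_of_nonpos_of_nonneg (sub_nonpos.2 (pow_le_pow_left₀ pi_pos.le hz 2))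
      (logEnergy_re_nonneg hl g)
  obtain ⟨a, ha⟩ := exists_eq_algebraMap_of_deriv_eq_zero hS
  rw [logEnergy_apply, ha, derivPairing_algebraMap_left, Complex.zero_re]

include hl

theorem integral_eq_zero_of_eigenfunction {f : ℝ → ℂ} (hf : Continuous f) {z : ℂ} (hz : z ≠ π)
    (heig : ∀ s, ∫ t in (0 : ℝ)..L, doubleLayerKernel l t s * f t = z * f s) :
    ∫ t in (0 : ℝ)..L, f t = 0 := by
  have hκ : Continuous fun p : ℝ × ℝ => doubleLayerKernel l p.1 p.2 :=
    (contDiff_doubleLayerKernel hl).continuous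
  have hmass : z * ∫ s in (0 : ℝ)..L, f s = π * ∫ s in (0 : ℝ)..L, f s := by
    rw [← intervalIntegral.integral_const_mul, ← intervalIntegral.integral_const_mul]
    simp only [← heig]
    rw [integral_interval_swap hl.pos.le (by fun_prop)]
    simp only [intervalIntegral.integral_mul_const, intervalIntegral.integral_ofReal, hor _]
  exact (mul_eq_zero.1 (by rw [sub_mul, hmass, sub_self] : (z - π) * _ = 0)).resolve_left
    (sub_ne_zero.2 hz)

omit hor in
theorem exists_smoothPeriodic_eq_of_eigenfunction {f : ℝ → ℂ} (hf : Continuous f) {z : ℂ}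
    (hz : z ≠ 0) (heig : ∀ s, ∫ t in (0 : ℝ)..L, doubleLayerKernel l t s * f t = z * f s) :
    ∃ g : SmoothPeriodic L, ⇑g = f := by
  have hf' : f = fun s => z⁻¹ * ∫ t in (0 : ℝ)..L, doubleLayerKernel l t s * f t :=
    funext fun s => by rw [heig, inv_mul_cancel_left₀ hz]
  refine ⟨⟨f, ?_, fun s => ?_⟩, rfl⟩
  · have hκ : ContDiff ℝ ∞ (Function.uncurry fun s t => (doubleLayerKernel l t s : ℂ)) :=
      Complex.ofRealCLM.contDiff.comp (contDiff_flip (contDiff_doubleLayerKernel hl))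
    rw [hf']
    simpa only [smul_eq_mul, mul_comm (f _)] using
      contDiff_const.mul (contDiff_intervalIntegral_smul (𝕜 := ℂ) hκ hf 0 L)
  · refine mul_left_cancel₀ hz ?_
    simp only [← heig, doubleLayerKernel_add_period_right]

theorem eq_zero_of_integral_doubleLayerKernel_mul_eq {f : ℝ → ℂ} (hf : Continuous f) {z : ℂ}
    (hz : π ≤ ‖z‖) (hzπ : z ≠ π)
    (heig : ∀ s, ∫ t in (0 : ℝ)..L, doubleLayerKernel l t s * f t = z * f s) : f = 0 := by
  have hz₀ : z ≠ 0 := norm_pos_iff.1 (pi_pos.trans_le hz)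
  obtain ⟨f, rfl⟩ := exists_smoothPeriodic_eq_of_eigenfunction hl hf hz₀ heig
  obtain ⟨g, hg⟩ := exists_deriv_eq_of_integral_eq_zero f
    (integral_eq_zero_of_eigenfunction hl hor hf hzπ heig)
  have hderiv (t : ℝ) : deriv (doubleLayer hl g + z • g : SmoothPeriodic L) t = 0 := by
    have hz : deriv (z • g : SmoothPeriodic L) t = z * f t := by
      rw [← hg]
      exact deriv_const_mul z (g.differentiable t)
    have hadd : deriv (doubleLayer hl g + z • g : SmoothPeriodic L) t =
        deriv (doubleLayer hl g) t + deriv (z • g : SmoothPeriodic L) t :=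
      deriv_add ((doubleLayer hl g).differentiable t) ((z • g).differentiable t)
    rw [hadd, hz, deriv_doubleLayer hor, hg, heig, neg_add_cancel]
  obtain ⟨c, hc⟩ := exists_eq_algebraMap_of_deriv_eq_zero hderiv
  rw [← hg]
  refine funext (deriv_eq_zero_of_doubleLayer_eq hl hor (z := -z) (c := c) (by rwa [norm_neg]) ?_)
  rw [← hc]
  module

end Eigenfunction

/-! ### The fluid charge method -/

section DoubleLayerMatrix

variable (hl : IsRegularLoop l) (hor : IsPositivelyOriented l)

include hl hor

theorem norm_sub_pi_lt_of_mem_spectrum_kernelOp [Fact (0 < L)]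
    {k : C(AddCircle L × AddCircle L, ℂ)}
    (hk : ∀ s t : ℝ, k (s, t) = doubleLayerKernel l t s) {z : ℂ}
    (hz : z ∈ spectrum ℂ (kernelOp volume k)) : ‖z - π‖ < 2 * π := by
  have hπ : ‖(π : ℂ)‖ = π := by rw [Complex.norm_real, norm_of_nonneg pi_pos.le]
  by_contra! hfar
  have hnorm : π ≤ ‖z‖ := by linarith [norm_sub_le z (π : ℂ)]
  have hzπ : z ≠ π := fun h => by
    rw [h, sub_self, norm_zero] at hfar
    linarith [pi_pos]
  obtain ⟨g, hg, heig⟩ := exists_eigenfunction_of_mem_spectrum_kernelOp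
    (norm_pos_iff.1 (pi_pos.trans_le hnorm)) hz
  have hg₀ : (fun t : ℝ => g t) = 0 :=
    eq_zero_of_integral_doubleLayerKernel_mul_eq hl hor (by fun_prop) hnorm hzπ fun s => by
      rw [← heig, ← AddCircle.intervalIntegral_preimage L 0, zero_add]
      simp only [hk]
  exact hg (ContinuousMap.ext fun x => QuotientAddGroup.induction_on x (congrFun hg₀))

theorem exists_kernelOp_doubleLayerKernel [Fact (0 < L)] :
    ∃ k : C(AddCircle L × AddCircle L, ℂ), (∀ s t : ℝ, k (s, t) = doubleLayerKernel l t s) ∧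
      ∀ z ∈ spectrum ℂ (kernelOp volume k), ‖z - π‖ < 2 * π := by
  obtain ⟨k, hk⟩ := exists_continuousMap_addCircle_prod
    (F := fun s t => (doubleLayerKernel l t s : ℂ))
    (Complex.continuous_ofReal.comp (contDiff_flip (contDiff_doubleLayerKernel hl)).continuous)
    (fun s t => by rw [doubleLayerKernel_add_period_right])
    (fun s t => by rw [doubleLayerKernel_add_period_left])
  exact ⟨k, hk, fun _ => norm_sub_pi_lt_of_mem_spectrum_kernelOp hl hor hk⟩

variable {a b : (N : ℕ) → Fin N → ℝ} (ha : IsAsymptoticallyUniform L a)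
  (hb : IsAsymptoticallyUniform L b)

include ha hb

theorem exists_l2norm_doubleLayer_pow_mulVec_le :
    ∃ σ < 2 * π, ∃ m₀ : ℕ, ∀ᶠ N in atTop, ∀ m ≥ m₀, ∀ z : Fin N → ℝ,
      l2norm ((((L / N) • Matrix.of (fun i j => doubleLayerKernel l (b N j) (a N i)) - π • 1)
        ^ m).mulVec z) ≤ σ ^ m * l2norm z := by
  have : Fact (0 < L) := ⟨hl.pos⟩
  obtain ⟨k, hk, hspec⟩ := exists_kernelOp_doubleLayerKernel hl hor
  exact exists_l2norm_pow_mulVec_le hk ha hb two_pi_pos hspec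

theorem exists_mul_l2norm_le_l2norm_doubleLayer_mulVec :
    ∃ η > 0, ∀ᶠ N in atTop, ∀ z : Fin N → ℝ,
      η * l2norm z ≤ l2norm (((L / N) • Matrix.of (fun i j => doubleLayerKernel l (b N j) (a N i)) +
        π • 1).mulVec z) := by
  have : Fact (0 < L) := ⟨hl.pos⟩
  obtain ⟨k, hk, hspec⟩ := exists_kernelOp_doubleLayerKernel hl hor
  have hneg : ((-π : ℝ) : ℂ) ∉ spectrum ℂ (kernelOp volume k) := fun h => (hspec _ h).not_ge <| by
    rw [← Complex.ofReal_sub, Complex.norm_real, Real.norm_eq_abs]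
    linarith [neg_le_abs (-π - π)]
  simpa only [neg_smul, sub_neg_eq_add] using exists_mul_l2norm_le_l2norm_mulVec hk ha hb hneg

end DoubleLayerMatrix

theorem smul_add_smul_one_mulVec {ι R : Type*} [Fintype ι] [DecidableEq ι] [CommSemiring R]
    (A : Matrix ι ι R) (r s : R) (z : ι → R) :
    (r • A + s • 1).mulVec z = r • A.mulVec z + s • z := by
  rw [Matrix.add_mulVec, Matrix.smul_mulVec, Matrix.smul_mulVec, Matrix.one_mulVec]

theorem AmatE_eq_doubleLayerKernel {l : ℝ → ℂ} (hl : ∀ s, ‖deriv l s‖ = 1) {N : ℕ}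
    (a b : Fin N → ℝ) :
    AmatE l a b = Matrix.of fun i j => doubleLayerKernel l (b j) (a i) := by
  ext i j
  simp only [AmatE, Matrix.of_apply]
  split_ifs with hij
  · rw [doubleLayerKernel_of_eq hij, Complex.div_im]
    have hnorm : Complex.normSq (2 * deriv l (a i)) = 4 := by
      rw [Complex.normSq_mul, Complex.normSq_eq_norm_sq (deriv l _), hl]
      norm_num
    rw [hnorm]
    simp [dotR, normalv]
    ring
  · rw [doubleLayerKernel_of_ne hij, Complex.div_im]
    simp [dotR, normalv, ← Complex.normSq_eq_norm_sq]
    ring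

end FluidCharge

open Filter FluidCharge in
theorem fluid_charge_invertibility_general
    (L : ℝ) (hL : 0 < L) (l : ℝ → ℂ)
    (hsm : ContDiff ℝ (⊤ : ℕ∞) l) (hper : ∀ s, l (s + L) = l s)
    (harc : ∀ s, ‖deriv l s‖ = 1) (hinj : Set.InjOn l (Set.Ico 0 L))
    (horient : ∃ z₀ : ℂ, (∀ s, l s ≠ z₀) ∧
      (∫ t in (0 : ℝ)..L, deriv l t / (l t - z₀)) = 2 * (π : ℂ) * Complex.I)
    (ms mst : (N : ℕ) → Fin N → ℝ)
    (hms : IsAsymptoticallyUniform L ms) (hmst : IsAsymptoticallyUniform L mst) :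
    (∃ δ > 0, ∃ Nstar kstar : ℕ, 1 ≤ Nstar ∧ 1 ≤ kstar ∧
      ∀ N : ℕ, Nstar ≤ N → ∀ k : ℕ, kstar ≤ k → ∀ z : Fin N → ℝ,
        l2norm ((((L / (N : ℝ)) • AmatE l (mst N) (ms N)
            - π • (1 : Matrix (Fin N) (Fin N) ℝ)) ^ k).mulVec z)
          ≤ (2 * π - δ) ^ k * l2norm z) ∧
    (∃ C > 0, ∃ N₀ : ℕ, ∀ N : ℕ, N₀ ≤ N → ∀ v : Fin N → ℝ,
      (∃! z : Fin N → ℝ,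
        (L / (N : ℝ)) • (AmatE l (mst N) (ms N)).mulVec z + π • z = v) ∧
      ∀ z : Fin N → ℝ,
        (L / (N : ℝ)) • (AmatE l (mst N) (ms N)).mulVec z + π • z = v →
        l2norm z ≤ C * l2norm v) := by
  obtain ⟨l, rfl⟩ : ∃ l' : SmoothPeriodic L, l' = l := ⟨⟨l, hsm, hper⟩, rfl⟩
  obtain ⟨z₀, hz₀, hwind⟩ := horient
  have hl : IsRegularLoop l := ⟨hL, fun t => norm_ne_zero_iff.1 (by simp [harc t]), hinj⟩
  have hor : IsPositivelyOriented l := isPositivelyOriented_of_winding hl hz₀ hwind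
  simp only [AmatE_eq_doubleLayerKernel harc, ← smul_add_smul_one_mulVec]
  constructor
  · obtain ⟨σ, hσ, m₀, hpow⟩ := exists_l2norm_doubleLayer_pow_mulVec_le hl hor hmst hms
    obtain ⟨N₀, hN₀⟩ := eventually_atTop.1 hpow
    refine ⟨2 * π - σ, sub_pos.2 hσ, max N₀ 1, max m₀ 1, le_max_right _ _, le_max_right _ _,
      fun N hN m hm z => ?_⟩
    rw [sub_sub_cancel]
    exact hN₀ N (le_of_max_le_left hN) m (le_of_max_le_left hm) z
  · obtain ⟨η, hη, hlow⟩ := exists_mul_l2norm_le_l2norm_doubleLayer_mulVec hl hor hmst hms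
    obtain ⟨N₀, hN₀⟩ := eventually_atTop.1 hlow
    refine ⟨η⁻¹, inv_pos.2 hη, N₀, fun N hN v => ⟨existsUnique_mulVec_eq hη (hN₀ N hN) v, ?_⟩⟩
    rintro z rfl
    exact (le_inv_mul_iff₀ hη).2 (hN₀ N hN z)

/-- Spectral estimate and uniform invertibility of `(L/N)A_N + π` for the fluid
charge method. -/
theorem fluid_charge_invertibility
    (L : ℝ) (hL : 0 < L) (l : ℝ → ℂ)
    (hsm : ContDiff ℝ (⊤ : ℕ∞) l) (hper : ∀ s, l (s + L) = l s)
    (harc : ∀ s, ‖deriv l s‖ = 1) (hinj : Set.InjOn l (Set.Ico 0 L))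
    (horient : ∃ z₀ : ℂ, (∀ s, l s ≠ z₀) ∧
      (∫ t in (0:ℝ)..L, deriv l t / (l t - z₀)) = 2 * (π : ℂ) * Complex.I)
    (κ : ℕ) (hκ : 2 ≤ κ) (M : ℝ) (hM : 0 < M)
    (ms mst : (N : ℕ) → Fin N → ℝ)
    (hms : ∀ N, 2 ≤ N → ∀ i : Fin N,
      |ms N i - ((i : ℕ) : ℝ) * L / (N : ℝ)| ≤ M / (N : ℝ) ^ κ)
    (hmst : ∀ N, 2 ≤ N → ∀ i : Fin N,
      |mst N i - ((i : ℕ) : ℝ) * L / (N : ℝ)| ≤ M / (N : ℝ) ^ κ) :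
    (∃ δ > 0, ∃ Nstar kstar : ℕ, 1 ≤ Nstar ∧ 1 ≤ kstar ∧
      ∀ N : ℕ, Nstar ≤ N → ∀ k : ℕ, kstar ≤ k → ∀ z : Fin N → ℝ,
        l2norm ((((L / (N : ℝ)) • AmatE l (mst N) (ms N)
            - π • (1 : Matrix (Fin N) (Fin N) ℝ)) ^ k).mulVec z)
          ≤ (2 * π - δ) ^ k * l2norm z) ∧
    (∃ C > 0, ∃ N₀ : ℕ, ∀ N : ℕ, N₀ ≤ N → ∀ v : Fin N → ℝ,
      (∃! z : Fin N → ℝ,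
        (L / (N : ℝ)) • (AmatE l (mst N) (ms N)).mulVec z + π • z = v) ∧
      ∀ z : Fin N → ℝ,
        (L / (N : ℝ)) • (AmatE l (mst N) (ms N)).mulVec z + π • z = v →
        l2norm z ≤ C * l2norm v) := by
  have hmesh {a : (N : ℕ) → Fin N → ℝ} (ha : ∀ N, 2 ≤ N → ∀ i : Fin N,
      |a N i - ((i : ℕ) : ℝ) * L / (N : ℝ)| ≤ M / (N : ℝ) ^ κ) :
      FluidCharge.IsAsymptoticallyUniform L a :=
    FluidCharge.isAsymptoticallyUniform_of_abs_sub_le (by omega)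
      (Filter.eventually_atTop.2 ⟨2, ha⟩)
  exact fluid_charge_invertibility_general L hL l hsm hper harc hinj horient ms mst
    (hmesh hms) (hmesh hmst)
end

section
/- Assume the curve setup with counterclockwise orientation, and assume the curve is strictly convex in the sense that (l(s) − l(t))·n(s) > 0 whenever l(s) ≠ l(t), and l''(s)·n(s) < 0 for all s. Let a well-* distributed mesh with parameters κ ≥ 2 and M > 0 be given and define A_N(i,j) = ((l(s̃_i^N) − l(s_j^N))·n(s̃_i^N))/‖l(s̃_i^N) − l(s_j^N)‖² when l(s̃_i^N) ≠ l(s_j^N), and A_N(i,j) = −(1/2)·l''(s̃_i^N)·n(s̃_i^N) when l(s̃_i^N) = l(s_j^N). Then there exists N₀ such that for every N ≥ N₀ the matrix M_N = (L/N)·A_N + π·I is strictly diagonally dominant with respect to columns: for every 1 ≤ j ≤ N, Σ_{i=1, i≠j}^{N} |M_N(i,j)| < |M_N(j,j)|. -/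
open Real MeasureTheory

/- Column `j` of `A_N` samples `K (s_j, ·)`, the kernel of the double layer potential with source
point `s_j`. For a simple closed curve `K` extends continuously to the diagonal, with a jointly
continuous derivative in the target point; strict convexity makes it bounded below by some `c > 0`,
and by Gauss' theorem `∫ K (s, t) dt = π` for every source point `s`. The composite midpoint rule
for periodic `C¹` functions has an error `o(1 / N)`, uniformly in `s` by compactness, so with
`h = L / N` the `j`-th column of `h A_N` sums to at most `π + o(h)`. The off-diagonal part of this
sum is then at most `π - h A_N(j, j) + o(h)`, which is less than `π + h A_N(j, j)` since
`2 h A_N(j, j) ≥ 2 c h`. -/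

open Filter Set Topology
open scoped Interval

section Quadrature

variable {E : Type*} [NormedAddCommGroup E] [NormedSpace ℝ E]

theorem norm_sub_tangent_le {f f' : ℝ → E} {c r ε : ℝ}
    (hf : ∀ t ∈ Icc (c - r) (c + r), HasDerivAt f (f' t) t)
    (hε : ∀ t ∈ Icc (c - r) (c + r), ‖f' t - f' c‖ ≤ ε) {t : ℝ} (ht : t ∈ Icc (c - r) (c + r)) :
    ‖f t - (f c + (t - c) • f' c)‖ ≤ ε * r := by
  have htc : ‖t - c‖ ≤ r := abs_le.2 ⟨by linarith [ht.1], by linarith [ht.2]⟩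
  have hr : 0 ≤ r := (norm_nonneg _).trans htc
  have hc : c ∈ Icc (c - r) (c + r) := ⟨by linarith, by linarith⟩
  have hε₀ : 0 ≤ ε := (norm_nonneg _).trans (hε c hc)
  have hderiv : ∀ u ∈ Icc (c - r) (c + r),
      HasDerivWithinAt (fun u ↦ f u - (u - c) • f' c) (f' u - f' c) (Icc (c - r) (c + r)) u := by
    intro u hu
    simpa using! ((hf u hu).sub
      (((hasDerivAt_id u).sub_const c).smul_const (f' c))).hasDerivWithinAt
  calc ‖f t - (f c + (t - c) • f' c)‖
      = ‖f t - (t - c) • f' c - (f c - (c - c) • f' c)‖ := by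
        congr 1; rw [sub_self, zero_smul]; abel
    _ ≤ ε * ‖t - c‖ :=
        (convex_Icc _ _).norm_image_sub_le_of_norm_hasDerivWithin_le hderiv hε hc ht
    _ ≤ ε * r := by gcongr

theorem integral_add_sub_smul [CompleteSpace E] (v w : E) (c r : ℝ) :
    ∫ t in (c - r)..(c + r), (v + (t - c) • w) = (2 * r) • v := by
  have hodd : ∫ t in (c - r)..(c + r), (t - c) = 0 := by
    rw [intervalIntegral.integral_comp_sub_right (fun t ↦ t)]
    norm_num
  rw [intervalIntegral.integral_add (by simp) (Continuous.intervalIntegrable (by fun_prop) _ _),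
    intervalIntegral.integral_smul_const, hodd, intervalIntegral.integral_const]
  module

theorem norm_integral_sub_smul_midpoint_le [CompleteSpace E] {f f' : ℝ → E} {c r ε : ℝ}
    (hr : 0 ≤ r) (hf : ∀ t ∈ Icc (c - r) (c + r), HasDerivAt f (f' t) t)
    (hε : ∀ t ∈ Icc (c - r) (c + r), ‖f' t - f' c‖ ≤ ε) :
    ‖(∫ t in (c - r)..(c + r), f t) - (2 * r) • f c‖ ≤ 2 * r ^ 2 * ε := by
  have huIcc : uIcc (c - r) (c + r) = Icc (c - r) (c + r) := uIcc_of_le (by linarith)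
  have hint : IntervalIntegrable f volume (c - r) (c + r) :=
    ContinuousOn.intervalIntegrable fun t ht ↦
      (hf t (huIcc ▸ ht)).continuousAt.continuousWithinAt
  rw [← integral_add_sub_smul (f c) (f' c), ← intervalIntegral.integral_sub hint
    (Continuous.intervalIntegrable (by fun_prop) _ _)]
  refine (intervalIntegral.norm_integral_le_of_norm_le_const fun t ht ↦
    norm_sub_tangent_le hf hε (huIcc ▸ uIoc_subset_uIcc ht)).trans_eq ?_
  rw [abs_of_nonneg (by linarith)]
  ring

theorem integral_period_eq_sum_integral_cells {f : ℝ → E} {L : ℝ} (hper : Function.Periodic f L)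
    (hf : Continuous f) {N : ℕ} (hN : N ≠ 0) :
    ∫ t in 0..L, f t
      = ∑ i : Fin N,
        ∫ t in ((i : ℕ) * L / N - L / (2 * N))..((i : ℕ) * L / N + L / (2 * N)), f t := by
  have hN' : (N : ℝ) ≠ 0 := by exact_mod_cast hN
  have key := intervalIntegral.sum_integral_adjacent_intervals (μ := volume) (f := f)
    (a := fun k : ℕ ↦ k * L / N - L / (2 * N)) (n := N) fun k _ ↦ hf.intervalIntegrable _ _
  rw [Fin.sum_univ_eq_sum_range fun k : ℕ ↦
    ∫ t in (k * L / N - L / (2 * N))..(k * L / N + L / (2 * N)), f t]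
  calc ∫ t in 0..L, f t
      = ∫ t in (-(L / (2 * N)))..(-(L / (2 * N)) + L), f t := by
        simpa using hper.intervalIntegral_add_eq 0 (-(L / (2 * N)))
    _ = ∑ k ∈ Finset.range N, ∫ t in (k * L / N - L / (2 * N))..
          ((k + 1 : ℕ) * L / N - L / (2 * N)), f t := by
        rw [key]
        congr 1
        · simp
        · field_simp
          ring
    _ = _ := by
        refine Finset.sum_congr rfl fun k _ ↦ ?_
        congr 1
        push_cast
        field_simp
        ring

theorem norm_integral_period_sub_smul_sum_le [CompleteSpace E] {f f' : ℝ → E} {L B ε δ : ℝ}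
    (hL : 0 ≤ L) (hper : Function.Periodic f L) (hf : ∀ t, HasDerivAt f (f' t) t)
    (hB : ∀ t, ‖f' t‖ ≤ B) {N : ℕ} (hN : N ≠ 0)
    (hε : ∀ t u, |t - u| ≤ L / (2 * N) → ‖f' t - f' u‖ ≤ ε)
    {x : Fin N → ℝ} (hx : ∀ i : Fin N, |x i - (i : ℕ) * L / N| ≤ δ) :
    ‖(∫ t in 0..L, f t) - (L / N) • ∑ i, f (x i)‖ ≤ L * (ε * (L / N) / 2 + B * δ) := by
  have hcont : Continuous f := continuous_iff_continuousAt.2 fun t ↦ (hf t).continuousAt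
  have hB₀ : 0 ≤ B := (norm_nonneg _).trans (hB 0)
  have cell (i : Fin N) :
      ‖(∫ t in ((i : ℕ) * L / N - L / (2 * N))..((i : ℕ) * L / N + L / (2 * N)), f t)
        - (L / N) • f (x i)‖ ≤ L / N * (ε * (L / N) / 2 + B * δ) := by
    set c : ℝ := (i : ℕ) * L / N
    have midpoint := norm_integral_sub_smul_midpoint_le (c := c) (r := L / (2 * N)) (by positivity)
      (fun t _ ↦ hf t) fun t ht ↦ hε t c (abs_le.2 ⟨by linarith [ht.1], by linarith [ht.2]⟩)
    have node : ‖f c - f (x i)‖ ≤ B * δ := by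
      have hmvt := convex_univ.norm_image_sub_le_of_norm_hasDerivWithin_le
        (fun t _ ↦ (hf t).hasDerivWithinAt) (fun t _ ↦ hB t) (mem_univ c) (mem_univ (x i))
      rw [norm_sub_rev]
      exact hmvt.trans (mul_le_mul_of_nonneg_left (hx i) hB₀)
    have hwidth : 2 * (L / (2 * N)) = L / N := by field_simp
    rw [hwidth] at midpoint
    calc _ ≤ ‖(∫ t in (c - L / (2 * N))..(c + L / (2 * N)), f t) - (L / N) • f c‖
          + ‖(L / N) • f c - (L / N) • f (x i)‖ := norm_sub_le_norm_sub_add_norm_sub _ _ _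
      _ ≤ 2 * (L / (2 * N)) ^ 2 * ε + L / N * (B * δ) := by
          rw [← smul_sub, norm_smul, Real.norm_of_nonneg (by positivity)]
          gcongr
      _ = _ := by ring
  rw [integral_period_eq_sum_integral_cells hper hcont hN, Finset.smul_sum,
    ← Finset.sum_sub_distrib]
  refine (norm_sum_le_of_le _ fun i _ ↦ cell i).trans_eq ?_
  rw [Finset.sum_const, Finset.card_univ, Fintype.card_fin, nsmul_eq_mul]
  field_simp

/- The midpoint rule makes the nodes `i * L / N` accurate to `o(1 / N)`, although they are only the
end points of the cells of length `L / N` of `[0, L]`: by periodicity these may be shifted. -/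
theorem eventually_norm_integral_period_sub_smul_sum_le [CompleteSpace E] {ι : Type*}
    {F F' : ι → ℝ → E} {L B : ℝ} (hL : 0 < L) (hper : ∀ i, Function.Periodic (F i) L)
    (hF : ∀ i t, HasDerivAt (F i) (F' i t) t) (hB : ∀ i t, ‖F' i t‖ ≤ B)
    (hequi : UniformEquicontinuous F') {δ : ℕ → ℝ}
    (hδ : Tendsto (fun N : ℕ ↦ N * δ N) atTop (𝓝 0)) {x : (N : ℕ) → Fin N → ℝ}
    (hx : ∀ᶠ N in atTop, ∀ i : Fin N, |x N i - (i : ℕ) * L / N| ≤ δ N) {ε : ℝ} (hε : 0 < ε) :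
    ∀ᶠ N : ℕ in atTop, ∀ i, ‖(∫ t in 0..L, F i t) - (L / N) • ∑ k, F i (x N k)‖ ≤ ε * (L / N) := by
  obtain ⟨η, hη, hosc⟩ := Metric.uniformEquicontinuous_iff.1 hequi (ε / L) (by positivity)
  have hmesh : ∀ᶠ N : ℕ in atTop, L / 2 / N < η :=
    (tendsto_const_div_atTop_nhds_zero_nat (L / 2)).eventually_lt_const hη
  have hshift : ∀ᶠ N : ℕ in atTop, B * (N * δ N) < ε / 2 :=
    Tendsto.eventually_lt_const (by positivity) (by simpa using hδ.const_mul B)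
  filter_upwards [hx, hmesh, hshift, eventually_ne_atTop 0] with N hxN hmeshN hshiftN hN i
  have hosc' (t u : ℝ) (htu : |t - u| ≤ L / (2 * N)) : ‖F' i t - F' i u‖ ≤ ε / L := by
    rw [← dist_eq_norm]
    exact (hosc t u (htu.trans_lt (by rwa [← div_div])) i).le
  calc ‖(∫ t in 0..L, F i t) - (L / N) • ∑ k, F i (x N k)‖
      ≤ L * (ε / L * (L / N) / 2 + B * δ N) :=
        norm_integral_period_sub_smul_sum_le hL.le (hper i) (hF i) (hB i) hN hosc' hxN
    _ = (ε / 2 + B * (N * δ N)) * (L / N) := by field_simp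
    _ ≤ ε * (L / N) := by gcongr; linarith

end Quadrature

section DoublyPeriodic

variable {X : Type*} {F : ℝ → ℝ → X} {L : ℝ}

theorem exists_continuous_lift_addCircle_prod [TopologicalSpace X]
    (hF : Continuous (Function.uncurry F)) (hper₁ : Function.Periodic F L)
    (hper₂ : ∀ s, Function.Periodic (F s) L) :
    ∃ G : AddCircle L × AddCircle L → X, Continuous G ∧ ∀ s t : ℝ, G (s, t) = F s t := by
  have hlift : Function.Periodic (fun s ↦ (hper₂ s).lift) L := by
    intro s
    funext q
    induction q using QuotientAddGroup.induction_on with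
    | H t => exact congrFun (hper₁ s) t
  refine ⟨Function.uncurry hlift.lift, ?_, fun s t ↦ rfl⟩
  have hquot := (QuotientAddGroup.isOpenQuotientMap_mk (N := AddSubgroup.zmultiples L)).prodMap
    (QuotientAddGroup.isOpenQuotientMap_mk (N := AddSubgroup.zmultiples L))
  exact hquot.continuous_comp_iff.1 hF

theorem isCompact_range_uncurry_of_periodic [TopologicalSpace X] (hL : 0 < L)
    (hF : Continuous (Function.uncurry F)) (hper₁ : Function.Periodic F L)
    (hper₂ : ∀ s, Function.Periodic (F s) L) : IsCompact (range (Function.uncurry F)) := by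
  have : Fact (0 < L) := ⟨hL⟩
  obtain ⟨G, hG, hGF⟩ := exists_continuous_lift_addCircle_prod hF hper₁ hper₂
  have hrange : range (Function.uncurry F) = range G := by
    have hsurj : Function.Surjective
        (Prod.map ((↑) : ℝ → AddCircle L) ((↑) : ℝ → AddCircle L)) :=
      QuotientAddGroup.mk_surjective.prodMap QuotientAddGroup.mk_surjective
    rw [← hsurj.range_comp G]
    congr 1
    ext p
    exact (hGF p.1 p.2).symm
  exact hrange ▸ isCompact_range hG

theorem uniformEquicontinuous_of_periodic [PseudoMetricSpace X] (hL : 0 < L)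
    (hF : Continuous (Function.uncurry F)) (hper₁ : Function.Periodic F L)
    (hper₂ : ∀ s, Function.Periodic (F s) L) : UniformEquicontinuous F := by
  have : Fact (0 < L) := ⟨hL⟩
  obtain ⟨G, hG, hGF⟩ := exists_continuous_lift_addCircle_prod hF hper₁ hper₂
  have hmk : UniformContinuous (QuotientAddGroup.mk' (AddSubgroup.zmultiples L)) :=
    uniformContinuous_addMonoidHom_of_continuous continuous_quotient_mk'
  have hfactor : Function.uncurry F = G ∘ Prod.map QuotientAddGroup.mk QuotientAddGroup.mk :=
    funext fun p ↦ (hGF p.1 p.2).symm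
  have hFu : UniformContinuous (Function.uncurry F) :=
    hfactor ▸ (CompactSpace.uniformContinuous_of_continuous hG).comp (hmk.prodMap hmk)
  rw [Metric.uniformEquicontinuous_iff]
  intro ε hε
  obtain ⟨δ, hδ, hFδ⟩ := Metric.uniformContinuous_iff.1 hFu ε hε
  exact ⟨δ, hδ, fun t t' htt' s ↦
    hFδ (a := (s, t)) (b := (s, t')) (by rwa [dist_prod_same_left])⟩

theorem exists_int_abs_sub_add_mul_lt (hL : 0 < L) (s t : ℝ) : ∃ n : ℤ, |t - (s + n * L)| < L := by
  refine ⟨toIcoDiv hL s t, ?_⟩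
  have hmem := sub_toIcoDiv_zsmul_mem_Ico hL s t
  rw [zsmul_eq_mul] at hmem
  exact abs_lt.2 ⟨by linarith [hmem.1], by linarith [hmem.2]⟩

theorem continuous_uncurry_of_periodic_of_continuousOn [TopologicalSpace X] (hL : 0 < L)
    (hper : Function.Periodic F L)
    (hF : ContinuousOn (Function.uncurry F) {p | |p.2 - p.1| < L}) :
    Continuous (Function.uncurry F) := by
  have hopen : IsOpen {p : ℝ × ℝ | |p.2 - p.1| < L} := isOpen_lt (by fun_prop) continuous_const
  rw [continuous_iff_continuousAt]
  rintro ⟨s, t⟩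
  obtain ⟨n, hn⟩ := exists_int_abs_sub_add_mul_lt hL s t
  have hshift : Function.uncurry F = Function.uncurry F ∘ fun p ↦ (p.1 + n * L, p.2) := by
    ext p
    exact (congrFun (hper.int_mul n p.1) p.2).symm
  rw [hshift]
  exact ContinuousAt.comp (hF.continuousAt (hopen.mem_nhds hn)) (by fun_prop)

end DoublyPeriodic

section DSlope

variable {E : Type*} [NormedAddCommGroup E] [NormedSpace ℝ E] {f : ℝ → E}

theorem hasDerivAt_integral_of_continuous_deriv {F F' : ℝ → ℝ → E} {a b x₀ : ℝ}
    (hF : ∀ x, Continuous (F x)) (hF' : Continuous (Function.uncurry F'))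
    (hderiv : ∀ x u, HasDerivAt (F · u) (F' x u) x) :
    HasDerivAt (fun x ↦ ∫ u in a..b, F x u) (∫ u in a..b, F' x₀ u) x₀ := by
  obtain ⟨C, hC⟩ := ((isCompact_closedBall x₀ 1).prod
    (isCompact_uIcc (a := a) (b := b))).exists_bound_of_continuousOn hF'.continuousOn
  refine (intervalIntegral.hasDerivAt_integral_of_dominated_loc_of_deriv_le (bound := fun _ ↦ C)
    (Metric.closedBall_mem_nhds x₀ one_pos) (.of_forall fun x ↦ (hF x).aestronglyMeasurable)
    ((hF x₀).intervalIntegrable _ _)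
    (Continuous.aestronglyMeasurable (hF'.comp (Continuous.prodMk_right x₀)))
    (.of_forall fun u hu x hx ↦ hC (x, u) ⟨hx, uIoc_subset_uIcc hu⟩)
    intervalIntegrable_const (.of_forall fun u _ x _ ↦ hderiv x u)).2

/-- Hadamard's integral form of the `k`-th derivative in `t` of the divided difference
`dslope f s t`. Unlike the quotient `(f t - f s) / (t - s)`, it is visibly smooth in `(s, t)` across
the diagonal. -/
noncomputable def iteratedDSlope (f : ℝ → E) (k : ℕ) (s t : ℝ) : E :=
  ∫ u in (0 : ℝ)..1, u ^ k • iteratedDeriv (k + 1) f (s + u * (t - s))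

theorem continuous_iteratedDSlope {k : ℕ} (hf : ContDiff ℝ (k + 1 : ℕ) f) :
    Continuous (Function.uncurry (iteratedDSlope f k)) := by
  refine intervalIntegral.continuous_parametric_intervalIntegral_of_continuous' ?_ 0 1
  have := hf.continuous_iteratedDeriv (k + 1) le_rfl
  fun_prop

theorem hasDerivAt_iteratedDSlope {k : ℕ} (hf : ContDiff ℝ (k + 2 : ℕ) f) (s t : ℝ) :
    HasDerivAt (iteratedDSlope f k s) (iteratedDSlope f (k + 1) s t) t := by
  have hcont₁ := hf.continuous_iteratedDeriv (k + 1) (by norm_cast; omega)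
  have := hf.continuous_iteratedDeriv (k + 2) le_rfl
  refine hasDerivAt_integral_of_continuous_deriv
    (F := fun x u ↦ u ^ k • iteratedDeriv (k + 1) f (s + u * (x - s)))
    (F' := fun x u ↦ u ^ (k + 1) • iteratedDeriv (k + 2) f (s + u * (x - s)))
    (fun x ↦ by fun_prop) (by fun_prop) fun x u ↦ ?_
  have hinner : HasDerivAt (fun x ↦ s + u * (x - s)) u x := by
    simpa using (((hasDerivAt_id x).sub_const s).const_mul u).const_add s
  have houter : HasDerivAt (iteratedDeriv (k + 1) f) (iteratedDeriv (k + 2) f (s + u * (x - s)))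
      (s + u * (x - s)) := by
    rw [iteratedDeriv_succ (n := k + 1)]
    exact (hf.differentiable_iteratedDeriv (k + 1) (by norm_cast; omega) _).hasDerivAt
  have := (houter.scomp x hinner).const_smul (u ^ k)
  rwa [smul_smul, ← pow_succ] at this

theorem sub_smul_iteratedDSlope_zero [CompleteSpace E] (hf : ContDiff ℝ 1 f) (s t : ℝ) :
    (t - s) • iteratedDSlope f 0 s t = f t - f s := by
  have := hf.continuous_deriv le_rfl
  have hderiv (u : ℝ) :
      HasDerivAt (fun u ↦ f (s + u * (t - s))) ((t - s) • deriv f (s + u * (t - s))) u := by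
    have hinner : HasDerivAt (fun u ↦ s + u * (t - s)) (t - s) u := by
      simpa using ((hasDerivAt_id u).mul_const (t - s)).const_add s
    exact (hf.differentiable one_ne_zero _).hasDerivAt.scomp u hinner
  have hftc := intervalIntegral.integral_eq_sub_of_hasDerivAt (a := 0) (b := 1)
    (fun u _ ↦ hderiv u) (Continuous.intervalIntegrable (by fun_prop) _ _)
  simpa [iteratedDSlope, iteratedDeriv_one] using hftc

theorem iteratedDSlope_self [CompleteSpace E] (k : ℕ) (s : ℝ) :
    iteratedDSlope f k s s = ((k : ℝ) + 1)⁻¹ • iteratedDeriv (k + 1) f s := by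
  simp [iteratedDSlope, intervalIntegral.integral_smul_const]

theorem deriv_eq_iteratedDSlope_zero_add [CompleteSpace E] (hf : ContDiff ℝ 2 f) (s t : ℝ) :
    deriv f t = iteratedDSlope f 0 s t + (t - s) • iteratedDSlope f 1 s t := by
  have hf₁ : ContDiff ℝ 1 f := hf.of_le one_le_two
  have hprod : HasDerivAt (fun x ↦ (x - s) • iteratedDSlope f 0 s x)
      ((t - s) • iteratedDSlope f 1 s t + (1 : ℝ) • iteratedDSlope f 0 s t) t :=
    ((hasDerivAt_id t).sub_const s).smul (hasDerivAt_iteratedDSlope (k := 0) hf s t)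
  simp only [sub_smul_iteratedDSlope_zero hf₁, one_smul] at hprod
  rw [add_comm, ← hprod.deriv, deriv_sub_const]

end DSlope

theorem eq_of_periodic_of_injOn_of_abs_sub_lt {X : Type*} {f : ℝ → X} {L : ℝ} (hL : 0 < L)
    (hper : Function.Periodic f L) (hinj : InjOn f (Ico 0 L)) {s t : ℝ} (hst : |t - s| < L)
    (h : f t = f s) : t = s := by
  have hmem (x : ℝ) : toIcoMod hL 0 x ∈ Ico 0 L := by simpa using toIcoMod_mem_Ico hL 0 x
  have hmod : toIcoMod hL 0 t = toIcoMod hL 0 s := by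
    refine hinj (hmem t) (hmem s) ?_
    rw [toIcoMod, toIcoMod, hper.sub_zsmul_eq, hper.sub_zsmul_eq, h]
  obtain ⟨n, hn⟩ := AddCommGroup.modEq_iff_zsmul'.1 ((toIcoMod_inj hL).1 hmod.symm)
  rw [zsmul_eq_mul] at hn
  have hn₁ : |(n : ℝ)| < 1 := by
    rwa [hn, abs_mul, abs_of_pos hL, mul_lt_iff_lt_one_left hL] at hst
  have hn₀ : n = 0 := Int.abs_lt_one_iff.1 (by exact_mod_cast hn₁)
  rwa [hn₀, Int.cast_zero, zero_mul, sub_eq_zero] at hn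

theorem deriv_periodic {E : Type*} [NormedAddCommGroup E] [NormedSpace ℝ E] {f : ℝ → E} {L : ℝ}
    (hf : Function.Periodic f L) : Function.Periodic (deriv f) L := by
  intro t
  rw [← deriv_comp_add_const, funext hf]

section Kernel

theorem im_div_eq_dotR (w z : ℂ) : (w / z).im = dotR z (-Complex.I * w) / ‖z‖ ^ 2 := by
  rw [Complex.div_im, Complex.sq_norm]
  simp [dotR]
  ring

theorem dotR_neg_left (z w : ℂ) : dotR (-z) w = -dotR z w := by
  simp only [dotR, Complex.neg_re, Complex.neg_im]
  ring

theorem dotR_neg_I_mul_comm (z w : ℂ) :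
    dotR z (-Complex.I * w) = -dotR w (-Complex.I * z) := by
  simp [dotR]
  ring

open Classical in
/-- The kernel of the double layer potential of a curve `l` in `ℂ ≃ ℝ²`, with source point `l s` and
target point `l t`. For a unit speed curve it is `(l t - l s) · n(t) / ‖l t - l s‖ ^ 2`, extended
continuously by half the curvature to the diagonal; the complex quotients encode the dot products.
-/
noncomputable def doubleLayerKernel (l : ℝ → ℂ) (s t : ℝ) : ℝ :=
  if l t = l s then (deriv (deriv l) t / deriv l t).im / 2 else (deriv l t / (l t - l s)).im

variable {l : ℝ → ℂ} {L : ℝ}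

theorem doubleLayerKernel_periodic_left (hl : Function.Periodic l L) :
    Function.Periodic (doubleLayerKernel l) L := by
  intro s
  ext t
  simp only [doubleLayerKernel, hl s]

theorem doubleLayerKernel_periodic_right (hl : Function.Periodic l L) (s : ℝ) :
    Function.Periodic (doubleLayerKernel l s) L := by
  intro t
  simp only [doubleLayerKernel, hl t, deriv_periodic hl t, deriv_periodic (deriv_periodic hl) t]

theorem deriv_doubleLayerKernel_periodic_left (hl : Function.Periodic l L) :
    Function.Periodic (fun s ↦ deriv (doubleLayerKernel l s)) L :=
  fun s ↦ congrArg deriv (doubleLayerKernel_periodic_left hl s)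

theorem doubleLayerKernel_eq_im_iteratedDSlope_div (hl : ContDiff ℝ 2 l) {s t : ℝ}
    (hst : l t = l s → t = s) :
    doubleLayerKernel l s t = (iteratedDSlope l 1 s t / iteratedDSlope l 0 s t).im := by
  have hsub := sub_smul_iteratedDSlope_zero (hl.of_le one_le_two) s t
  rw [Complex.real_smul] at hsub
  by_cases h : l t = l s
  · obtain rfl := hst h
    rw [doubleLayerKernel, if_pos rfl, iteratedDSlope_self, iteratedDSlope_self,
      iteratedDeriv_succ, iteratedDeriv_one, smul_div_assoc, Complex.smul_im]
    norm_num
    ring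
  · have hmul : ((t - s : ℝ) : ℂ) * iteratedDSlope l 0 s t ≠ 0 := hsub ▸ sub_ne_zero.2 h
    have hts := left_ne_zero_of_mul hmul
    have h₀ := right_ne_zero_of_mul hmul
    have hquot : deriv l t / (l t - l s)
        = ((t - s)⁻¹ : ℝ) + iteratedDSlope l 1 s t / iteratedDSlope l 0 s t := by
      rw [← hsub, deriv_eq_iteratedDSlope_zero_add hl s t, Complex.real_smul, Complex.ofReal_inv]
      field_simp
    rw [doubleLayerKernel, if_neg h, hquot, Complex.add_im, Complex.ofReal_im, zero_add]

/-- A regular `C³` parametrization, of period `L`, of a simple closed plane curve. Three derivatives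
make the double layer kernel continuously differentiable. -/
structure IsRegularJordanCurve (l : ℝ → ℂ) (L : ℝ) : Prop where
  period_pos : 0 < L
  contDiff : ContDiff ℝ 3 l
  periodic : Function.Periodic l L
  injOn : InjOn l (Ico 0 L)
  deriv_ne_zero : ∀ s, deriv l s ≠ 0

namespace IsRegularJordanCurve

theorem eq_of_abs_sub_lt (hl : IsRegularJordanCurve l L) {s t : ℝ} (hst : |t - s| < L)
    (h : l t = l s) : t = s :=
  eq_of_periodic_of_injOn_of_abs_sub_lt hl.period_pos hl.periodic hl.injOn hst h

theorem iteratedDSlope_zero_ne_zero (hl : IsRegularJordanCurve l L) {s t : ℝ}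
    (hst : |t - s| < L) : iteratedDSlope l 0 s t ≠ 0 := by
  intro h₀
  have hsub := sub_smul_iteratedDSlope_zero (hl.contDiff.of_le (by norm_num)) s t
  rw [h₀, smul_zero] at hsub
  obtain rfl := hl.eq_of_abs_sub_lt hst (sub_eq_zero.1 hsub.symm)
  rw [iteratedDSlope_self] at h₀
  exact hl.deriv_ne_zero t (by simpa [iteratedDeriv_one] using h₀)

theorem doubleLayerKernel_eq (hl : IsRegularJordanCurve l L) {s t : ℝ} (hst : |t - s| < L) :
    doubleLayerKernel l s t = (iteratedDSlope l 1 s t / iteratedDSlope l 0 s t).im :=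
  doubleLayerKernel_eq_im_iteratedDSlope_div (hl.contDiff.of_le (by norm_num))
    (hl.eq_of_abs_sub_lt hst)

theorem continuous_doubleLayerKernel (hl : IsRegularJordanCurve l L) :
    Continuous (Function.uncurry (doubleLayerKernel l)) := by
  refine continuous_uncurry_of_periodic_of_continuousOn hl.period_pos
    (doubleLayerKernel_periodic_left hl.periodic) ?_
  have h₀ := continuous_iteratedDSlope (k := 0) (hl.contDiff.of_le (by norm_num))
  have h₁ := continuous_iteratedDSlope (k := 1) (hl.contDiff.of_le (by norm_num))
  exact (Complex.continuous_im.comp_continuousOn (h₁.continuousOn.div h₀.continuousOn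
    fun p hp ↦ hl.iteratedDSlope_zero_ne_zero hp)).congr fun p hp ↦ hl.doubleLayerKernel_eq hp

theorem hasDerivAt_doubleLayerKernel_of_abs_sub_lt (hl : IsRegularJordanCurve l L) {s t : ℝ}
    (hst : |t - s| < L) :
    HasDerivAt (doubleLayerKernel l s)
      ((iteratedDSlope l 2 s t * iteratedDSlope l 0 s t
        - iteratedDSlope l 1 s t * iteratedDSlope l 1 s t) / iteratedDSlope l 0 s t ^ 2).im t := by
  have hopen : IsOpen {x : ℝ | |x - s| < L} := isOpen_lt (by fun_prop) continuous_const
  have hquot := (hasDerivAt_iteratedDSlope (k := 1) hl.contDiff s t).div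
    (hasDerivAt_iteratedDSlope (k := 0) (hl.contDiff.of_le (by norm_num)) s t)
    (hl.iteratedDSlope_zero_ne_zero hst)
  exact (Complex.imCLM.hasFDerivAt.comp_hasDerivAt t hquot).congr_of_eventuallyEq
    (Filter.mem_of_superset (hopen.mem_nhds hst) fun x hx ↦ hl.doubleLayerKernel_eq hx)

theorem hasDerivAt_doubleLayerKernel (hl : IsRegularJordanCurve l L) (s t : ℝ) :
    HasDerivAt (doubleLayerKernel l s) (deriv (doubleLayerKernel l s) t) t := by
  obtain ⟨n, hn⟩ := exists_int_abs_sub_add_mul_lt hl.period_pos s t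
  rw [← (doubleLayerKernel_periodic_left hl.periodic).int_mul n s]
  exact (hl.hasDerivAt_doubleLayerKernel_of_abs_sub_lt hn).differentiableAt.hasDerivAt

theorem continuous_deriv_doubleLayerKernel (hl : IsRegularJordanCurve l L) :
    Continuous (Function.uncurry fun s ↦ deriv (doubleLayerKernel l s)) := by
  refine continuous_uncurry_of_periodic_of_continuousOn hl.period_pos
    (deriv_doubleLayerKernel_periodic_left hl.periodic) ?_
  have h₀ := continuous_iteratedDSlope (k := 0) (hl.contDiff.of_le (by norm_num))
  have h₁ := continuous_iteratedDSlope (k := 1) (hl.contDiff.of_le (by norm_num))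
  have h₂ := continuous_iteratedDSlope (k := 2) hl.contDiff
  refine (Complex.continuous_im.comp_continuousOn
    (((h₂.mul h₀).sub (h₁.mul h₁)).continuousOn.div (h₀.pow 2).continuousOn
      fun p hp ↦ pow_ne_zero 2 (hl.iteratedDSlope_zero_ne_zero hp))).congr fun p hp ↦ ?_
  exact (hl.hasDerivAt_doubleLayerKernel_of_abs_sub_lt hp).deriv

end IsRegularJordanCurve

end Kernel

section Gauss

theorem tendsto_mul_slope_div_nhdsNE {γ : ℝ → ℂ} {v : ℂ} {s : ℝ} (hγ : HasDerivAt γ v s)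
    (hv : v ≠ 0) (c : ℂ) : Tendsto (fun t ↦ c * slope γ s t / v) (𝓝[≠] s) (𝓝 c) := by
  simpa [hv] using ((hasDerivAt_iff_tendsto_slope.1 hγ).const_mul c).div_const v

theorem tendsto_arg_mul_sub_div_nhdsGT {γ : ℝ → ℂ} {v c : ℂ} {s : ℝ} (hγ : HasDerivAt γ v s)
    (hv : v ≠ 0) (hc : c ∈ Complex.slitPlane) :
    Tendsto (fun t ↦ Complex.arg (c * (γ t - γ s) / v)) (𝓝[>] s) (𝓝 (Complex.arg c)) := by
  have hslope := (tendsto_mul_slope_div_nhdsNE hγ hv c).mono_left (nhdsGT_le_nhdsNE s)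
  refine ((Complex.continuousAt_arg hc).tendsto.comp hslope).congr' ?_
  filter_upwards [self_mem_nhdsWithin] with t ht
  have hsub : γ t - γ s = (t - s : ℝ) * slope γ s t := (sub_smul_slope γ s t).symm
  rw [Function.comp_apply, ← Complex.arg_real_mul _ (sub_pos.2 ht), hsub]
  ring_nf

theorem tendsto_arg_mul_sub_div_nhdsLT {γ : ℝ → ℂ} {v c : ℂ} {s : ℝ} (hγ : HasDerivAt γ v s)
    (hv : v ≠ 0) (hc : -c ∈ Complex.slitPlane) :
    Tendsto (fun t ↦ Complex.arg (c * (γ t - γ s) / v)) (𝓝[<] s) (𝓝 (Complex.arg (-c))) := by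
  have hslope := (tendsto_mul_slope_div_nhdsNE hγ hv (-c)).mono_left (nhdsLT_le_nhdsNE s)
  refine ((Complex.continuousAt_arg hc).tendsto.comp hslope).congr' ?_
  filter_upwards [self_mem_nhdsWithin] with t ht
  have hsub : γ t - γ s = (t - s : ℝ) * slope γ s t := (sub_smul_slope γ s t).symm
  rw [Function.comp_apply, ← Complex.arg_real_mul _ (sub_pos.2 ht), hsub]
  push_cast
  ring_nf

theorem hasDerivAt_arg_comp {f : ℝ → ℂ} {f' : ℂ} {t : ℝ} (hf : HasDerivAt f f' t)
    (ht : f t ∈ Complex.slitPlane) : HasDerivAt (fun t ↦ Complex.arg (f t)) (f' / f t).im t := by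
  simp only [← Complex.log_im]
  exact Complex.imCLM.hasFDerivAt.comp_hasDerivAt t (hf.clog_real ht)

theorem hasDerivAt_arg_neg_I_mul_sub_div {l : ℝ → ℂ} {s t : ℝ}
    (hl : DifferentiableAt ℝ l t) (hpos : 0 < dotR (l s - l t) (normalv l s)) :
    HasDerivAt (fun t ↦ Complex.arg (-Complex.I * (l t - l s) / deriv l s))
      (doubleLayerKernel l s t) t := by
  have hs : deriv l s ≠ 0 := fun h₀ ↦ by simp [normalv, dotR, h₀] at hpos
  have hst : l t ≠ l s := fun h ↦ by simp [dotR, h] at hpos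
  have hre : 0 < (-Complex.I * (l t - l s) / deriv l s).re := by
    have := norm_pos_iff.2 hs
    have him : (-Complex.I * (l t - l s) / deriv l s).re = ((l t - l s) / deriv l s).im := by
      rw [mul_div_assoc]
      simp
    rw [him, im_div_eq_dotR, dotR_neg_I_mul_comm, ← dotR_neg_left, neg_sub]
    exact div_pos hpos (by positivity)
  refine (hasDerivAt_arg_comp (((hl.hasDerivAt.sub_const (l s)).const_mul
    (-Complex.I)).div_const (deriv l s)) (Or.inl hre)).congr_deriv ?_
  have hsub := sub_ne_zero.2 hst
  rw [doubleLayerKernel, if_neg hst]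
  congr 1
  field_simp

/- Seen from `l s`, a convex curve stays on one side of its tangent, so the angle
`arg (-i (l t - l s) / l' s)` is a smooth function of `t`; it increases from `-π / 2` to `π / 2`. -/
theorem IsRegularJordanCurve.integral_doubleLayerKernel {l : ℝ → ℂ} {L : ℝ}
    (hl : IsRegularJordanCurve l L)
    (hconv : ∀ s t : ℝ, l s ≠ l t → 0 < dotR (l s - l t) (normalv l s)) (s : ℝ) :
    ∫ t in 0..L, doubleLayerKernel l s t = π := by
  have hdiff : Differentiable ℝ l := hl.contDiff.differentiable (by norm_num)
  have hangle : ∀ t ∈ Ioo s (s + L),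
      HasDerivAt (fun t ↦ Complex.arg (-Complex.I * (l t - l s) / deriv l s))
        (doubleLayerKernel l s t) t := by
    intro t ht
    have hst : |t - s| < L := abs_lt.2 ⟨by linarith [ht.1, hl.period_pos], by linarith [ht.2]⟩
    have hne : l s ≠ l t := fun h ↦ ht.1.ne' (hl.eq_of_abs_sub_lt hst h.symm)
    exact hasDerivAt_arg_neg_I_mul_sub_div (hdiff t) (hconv s t hne)
  have hcont : Continuous (doubleLayerKernel l s) :=
    hl.continuous_doubleLayerKernel.comp (Continuous.prodMk_right s)
  have hstart := tendsto_arg_mul_sub_div_nhdsGT (c := -Complex.I) (hdiff s).hasDerivAt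
    (hl.deriv_ne_zero s) (by simp [Complex.mem_slitPlane_iff])
  have hend := tendsto_arg_mul_sub_div_nhdsLT (c := -Complex.I) (hdiff (s + L)).hasDerivAt
    (hl.deriv_ne_zero (s + L)) (by simp [Complex.mem_slitPlane_iff])
  rw [hl.periodic s, deriv_periodic hl.periodic s] at hend
  have hftc := intervalIntegral.integral_eq_sub_of_hasDerivAt_of_tendsto
    (lt_add_of_pos_right s hl.period_pos) hangle (hcont.intervalIntegrable _ _) hstart hend
  have hshift := (doubleLayerKernel_periodic_right hl.periodic s).intervalIntegral_add_eq 0 s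
  rw [zero_add] at hshift
  rw [hshift, hftc, neg_neg, Complex.arg_I, Complex.arg_neg_I]
  ring

end Gauss

section DiagonalDominance

theorem AmatE_apply_eq_doubleLayerKernel {l : ℝ → ℂ} (harc : ∀ s, ‖deriv l s‖ = 1) {N : ℕ}
    (a b : Fin N → ℝ) (i j : Fin N) : AmatE l a b i j = doubleLayerKernel l (b j) (a i) := by
  rw [AmatE, Matrix.of_apply, doubleLayerKernel]
  split_ifs
  · rw [im_div_eq_dotR, harc, dotR_neg_I_mul_comm, normalv]
    ring
  · rw [im_div_eq_dotR, normalv]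

theorem doubleLayerKernel_pos {l : ℝ → ℂ}
    (hconv : ∀ s t : ℝ, l s ≠ l t → 0 < dotR (l s - l t) (normalv l s))
    (hcurv : ∀ s : ℝ, dotR (deriv (deriv l) s) (normalv l s) < 0) (s t : ℝ) :
    0 < doubleLayerKernel l s t := by
  rw [doubleLayerKernel]
  split_ifs with h
  · have hderiv : deriv l t ≠ 0 := fun h₀ ↦ by simpa [normalv, dotR, h₀] using hcurv t
    have := norm_pos_iff.2 hderiv
    rw [im_div_eq_dotR, dotR_neg_I_mul_comm]
    exact half_pos (div_pos (neg_pos.2 (hcurv t)) (by positivity))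
  · have := norm_pos_iff.2 (sub_ne_zero.2 h)
    rw [im_div_eq_dotR]
    exact div_pos (hconv t s h) (by positivity)

namespace IsRegularJordanCurve

variable {l : ℝ → ℂ} {L : ℝ}

theorem exists_pos_forall_le_doubleLayerKernel (hl : IsRegularJordanCurve l L)
    (hpos : ∀ s t, 0 < doubleLayerKernel l s t) :
    ∃ c > 0, ∀ s t, c ≤ doubleLayerKernel l s t := by
  obtain ⟨c, ⟨p, hp⟩, hc⟩ := (isCompact_range_uncurry_of_periodic hl.period_pos
    hl.continuous_doubleLayerKernel (doubleLayerKernel_periodic_left hl.periodic)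
    (doubleLayerKernel_periodic_right hl.periodic)).exists_isLeast (range_nonempty _)
  exact ⟨c, hp ▸ hpos p.1 p.2, fun s t ↦ hc ⟨(s, t), rfl⟩⟩

theorem eventually_abs_integral_sub_sum_doubleLayerKernel_le (hl : IsRegularJordanCurve l L)
    {δ : ℕ → ℝ} (hδ : Tendsto (fun N : ℕ ↦ N * δ N) atTop (𝓝 0)) {x : (N : ℕ) → Fin N → ℝ}
    (hx : ∀ᶠ N in atTop, ∀ i : Fin N, |x N i - (i : ℕ) * L / N| ≤ δ N) {ε : ℝ} (hε : 0 < ε) :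
    ∀ᶠ N : ℕ in atTop, ∀ s, |(∫ t in 0..L, doubleLayerKernel l s t)
      - L / N * ∑ k, doubleLayerKernel l s (x N k)| ≤ ε * (L / N) := by
  have hper₁ := deriv_doubleLayerKernel_periodic_left hl.periodic
  have hper₂ (s : ℝ) := deriv_periodic (doubleLayerKernel_periodic_right hl.periodic s)
  have hcont := hl.continuous_deriv_doubleLayerKernel
  obtain ⟨B, hB⟩ := (isCompact_range_uncurry_of_periodic hl.period_pos hcont hper₁
    hper₂).isBounded.exists_norm_le
  exact eventually_norm_integral_period_sub_smul_sum_le hl.period_pos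
    (doubleLayerKernel_periodic_right hl.periodic) hl.hasDerivAt_doubleLayerKernel
    (fun s t ↦ hB _ ⟨(s, t), rfl⟩)
    (uniformEquicontinuous_of_periodic hl.period_pos hcont hper₁ hper₂) hδ hx hε

end IsRegularJordanCurve

theorem sum_erase_abs_smul_add_smul_one_lt {n : Type*} [Fintype n] [DecidableEq n]
    {A : Matrix n n ℝ} {r c : ℝ} {j : n} (hA : ∀ i, 0 ≤ A i j) (hr : 0 ≤ r) (hc : 0 ≤ c)
    (hsum : r * ∑ i, A i j < c + 2 * (r * A j j)) :
    ∑ i ∈ Finset.univ.erase j, |(r • A + c • (1 : Matrix n n ℝ)) i j|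
      < |(r • A + c • (1 : Matrix n n ℝ)) j j| := by
  have hoff : ∀ i ∈ Finset.univ.erase j, |(r • A + c • (1 : Matrix n n ℝ)) i j| = r * A i j := by
    intro i hi
    simp [Matrix.one_apply_ne (Finset.ne_of_mem_erase hi), abs_of_nonneg hr, abs_of_nonneg (hA i)]
  have hdiag : |(r • A + c • (1 : Matrix n n ℝ)) j j| = r * A j j + c := by
    simpa using abs_of_nonneg (add_nonneg (mul_nonneg hr (hA j)) hc)
  have hsplit := Finset.add_sum_erase Finset.univ (fun i ↦ A i j) (Finset.mem_univ j)
  rw [Finset.sum_congr rfl hoff, hdiag, ← Finset.mul_sum]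
  rw [← hsplit] at hsum
  linarith

theorem tendsto_natCast_mul_div_pow_atTop (M : ℝ) {κ : ℕ} (hκ : 2 ≤ κ) :
    Tendsto (fun N : ℕ ↦ (N : ℝ) * (M / N ^ κ)) atTop (𝓝 0) := by
  obtain ⟨m, rfl⟩ := Nat.exists_eq_add_of_le hκ
  refine (tendsto_const_div_pow M (m + 1) m.succ_ne_zero).congr fun N ↦ ?_
  rcases eq_or_ne (N : ℝ) 0 with hN | hN
  · simp [hN]
  · field_simp
    ring

theorem fluid_charge_diagonally_dominant_general
    {L : ℝ} (hL : 0 < L) {l : ℝ → ℂ} (hsm : ContDiff ℝ 3 l) (hper : ∀ s, l (s + L) = l s)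
    (harc : ∀ s, ‖deriv l s‖ = 1) (hinj : InjOn l (Ico 0 L))
    (hconv : ∀ s t : ℝ, l s ≠ l t → 0 < dotR (l s - l t) (normalv l s))
    (hcurv : ∀ s : ℝ, dotR (deriv (deriv l) s) (normalv l s) < 0)
    {δ : ℕ → ℝ} (hδ : Tendsto (fun N : ℕ ↦ N * δ N) atTop (𝓝 0)) {a : (N : ℕ) → Fin N → ℝ}
    (ha : ∀ᶠ N in atTop, ∀ i : Fin N, |a N i - (i : ℕ) * L / N| ≤ δ N) :
    ∀ᶠ N : ℕ in atTop, ∀ (b : Fin N → ℝ) (j : Fin N),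
      ∑ i ∈ Finset.univ.erase j,
          |((L / (N : ℝ)) • AmatE l (a N) b + π • (1 : Matrix (Fin N) (Fin N) ℝ)) i j|
        < |((L / (N : ℝ)) • AmatE l (a N) b + π • (1 : Matrix (Fin N) (Fin N) ℝ)) j j| := by
  have hl : IsRegularJordanCurve l L :=
    ⟨hL, hsm, hper, hinj, fun s ↦ norm_ne_zero_iff.1 (by simp [harc s])⟩
  have hpos := doubleLayerKernel_pos hconv hcurv
  obtain ⟨c, hc, hcK⟩ := hl.exists_pos_forall_le_doubleLayerKernel hpos
  filter_upwards [hl.eventually_abs_integral_sub_sum_doubleLayerKernel_le hδ ha hc,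
    eventually_gt_atTop 0] with N hquad hN b j
  have hh : 0 < L / N := by positivity
  refine sum_erase_abs_smul_add_smul_one_lt
    (fun i ↦ AmatE_apply_eq_doubleLayerKernel harc (a N) b i j ▸ (hpos _ _).le) hh.le pi_nonneg ?_
  simp only [AmatE_apply_eq_doubleLayerKernel harc]
  have hgauss := hquad (b j)
  rw [hl.integral_doubleLayerKernel hconv (b j)] at hgauss
  have hdiag := mul_le_mul_of_nonneg_left (hcK (b j) (a N j)) hh.le
  linarith [(abs_le.1 hgauss).1, mul_pos hh hc]

end DiagonalDominance

/-- For a strictly convex obstacle, the fluid charge matrix `(L/N)A_N + πI` is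
strictly diagonally dominant with respect to columns for all large `N`. -/
theorem fluid_charge_diagonally_dominant
    (L : ℝ) (hL : 0 < L) (l : ℝ → ℂ)
    (hsm : ContDiff ℝ (⊤ : ℕ∞) l) (hper : ∀ s, l (s + L) = l s)
    (harc : ∀ s, ‖deriv l s‖ = 1) (hinj : Set.InjOn l (Set.Ico 0 L))
    (horient : ∃ z₀ : ℂ, (∀ s, l s ≠ z₀) ∧
      (∫ t in (0:ℝ)..L, deriv l t / (l t - z₀)) = 2 * (π : ℂ) * Complex.I)
    (hconv : ∀ s t : ℝ, l s ≠ l t → 0 < dotR (l s - l t) (normalv l s))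
    (hcurv : ∀ s : ℝ, dotR (deriv (deriv l) s) (normalv l s) < 0)
    (κ : ℕ) (hκ : 2 ≤ κ) (M : ℝ) (hM : 0 < M)
    (ms mst : (N : ℕ) → Fin N → ℝ)
    (hms : ∀ N, 2 ≤ N → ∀ i : Fin N,
      |ms N i - ((i : ℕ) : ℝ) * L / (N : ℝ)| ≤ M / (N : ℝ) ^ κ)
    (hmst : ∀ N, 2 ≤ N → ∀ i : Fin N,
      |mst N i - ((i : ℕ) : ℝ) * L / (N : ℝ)| ≤ M / (N : ℝ) ^ κ) :
    ∃ N₀ : ℕ, ∀ N : ℕ, N₀ ≤ N → ∀ j : Fin N,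
      ∑ i ∈ Finset.univ.erase j,
          |((L / (N : ℝ)) • AmatE l (mst N) (ms N)
            + π • (1 : Matrix (Fin N) (Fin N) ℝ)) i j|
        < |((L / (N : ℝ)) • AmatE l (mst N) (ms N)
            + π • (1 : Matrix (Fin N) (Fin N) ℝ)) j j| := by
  obtain ⟨N₀, hN₀⟩ := eventually_atTop.1 <| fluid_charge_diagonally_dominant_general hL
    (hsm.of_le (WithTop.coe_le_coe.2 le_top)) hper harc hinj hconv hcurv
    (tendsto_natCast_mul_div_pow_atTop M hκ) (eventually_atTop.2 ⟨2, hmst⟩)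
  exact ⟨N₀, fun N hN ↦ hN₀ N hN (ms N)⟩
end
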